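/- arXiv:2602.15636 — 2 statements merged into one kernel-verified Lean document; each statement's English description precedes it below -/
import Mathlib

section
/- Let Γ be a finite connected simple graph, v a vertex of Γ of degree d ≥ 2, and m ≥ 1, and let Γ' be the graph obtained from Γ by attaching a path of length m at v (adjoining m new vertices w₁, …, w_m and edges {v,w₁}, {w₁,w₂}, …, {w_{m−1},w_m}). Let n ∈ {1, 2, 3}. If every connected component of the graph obtained from Γ by deleting v and all edges incident to v contains no cycle subgraph, then there exists N ≥ 0 such that the graph n-braid group B_n(Γ') is isomorphic to B_n(Γ) ∗ F_N. -/
/-!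
The realization of `Γ'` is `|Γ|` with an arm `[0, 1]` attached at `v` (`model`).  Inside the
configuration space of `n` points on it lies the open set `A1` of those configurations that remain
configurations when the arm is collapsed onto `v`; retracting the arm shows that `A1` is homotopy
equivalent to `UC_n(|Γ|)` (`A1equiv`).  The rest of the configuration space is obtained from `A1`
by gluing on open pieces.

* For `n = 1` nothing is missing.
* For `n = 2` (`step2`) one piece is glued: one point is on the arm, the other one is below it on
  the arm or near `v`.  The piece is contractible, and its intersection with `A1` has one
  contractible component for each edge at `v`.
* For `n = 3` the first piece (`step3a`) consists of the configurations with one point `q` of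
  `|Γ| ∖ v` together with two points as before, both closer to `v` than `q`.  It is homotopy
  equivalent to `|Γ| ∖ v`, which is homotopy equivalent to a finite discrete space because `Γ ∖ v`
  is a forest (`minus_equiv`); its intersection with `A1` is one copy of the same for each edge at
  `v`.  This reaches the set `A2` of configurations not entirely on the arm; the second piece
  (`step3b`), with two points on the arm and the third one below them or near `v`, is like the piece
  for `n = 2`.

In every case the path components of the piece, and those of its intersection with the preceding
open set, are simply connected and finite in number (`piece_ok`), and by van Kampen's theorem
(`vanKampen`) the gluing adds to the fundamental group a free factor of finite rank.

Van Kampen's theorem is proved by verifying the universal property of the free product.  A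
homomorphism from a fundamental group to `G` is the same as a `G`-valued cocycle on paths, and
cocycles defined on the paths that are small with respect to an open cover extend uniquely to all
paths (`LocCoc.glue`, `LocCoc.eq_of_small`).  A homomorphism on `π₁(A)`, together with arbitrary
values on the generating loops, defines a cocycle on the paths inside `A` or inside the piece.

Its hypothesis that the space glued to is path-connected rests on the path-connectedness of
`UC_n(|Γ|)` (`graph_pc`), proved by sliding the points towards a vertex `w` that does not disconnect
the graph, then parking one of them there.
-/

open scoped Classical

noncomputable section

namespace GraphBraid

/-- The standard basis vector `e_v` in `ℝ^V`. -/
def basisVec {V : Type} [DecidableEq V] (v : V) : V → ℝ := fun w => if w = v then 1 else 0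

/-- The geometric realization of a simple graph, as the subspace of `ℝ^V` given by the
union over the edges of the straight segments joining the corresponding basis vectors. -/
def realization {V : Type} [DecidableEq V] (G : SimpleGraph V) : Set (V → ℝ) :=
  ⋃ (u : V) (v : V) (_ : G.Adj u v), segment ℝ (basisVec u) (basisVec v)

/-- The realization of a subgraph, as a subspace of `ℝ^V`. -/
def subRealization {V : Type} [DecidableEq V] {G : SimpleGraph V} (H : G.Subgraph) :
    Set (V → ℝ) :=
  ⋃ (u : V) (v : V) (_ : H.Adj u v), segment ℝ (basisVec u) (basisVec v)

/-- The ordered `n`-point configuration space of a topological space. -/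
abbrev Conf (n : ℕ) (X : Type) [TopologicalSpace X] : Type :=
  {f : Fin n → X // Function.Injective f}

/-- Two ordered configurations are related when they differ by a permutation of coordinates. -/
def permRel (n : ℕ) (X : Type) [TopologicalSpace X] (f g : Conf n X) : Prop :=
  ∃ σ : Equiv.Perm (Fin n), (f : Fin n → X) = (g : Fin n → X) ∘ σ

/-- The unordered `n`-point configuration space: the quotient of the ordered configuration
space by the symmetric group permuting coordinates. -/
abbrev UConf (n : ℕ) (X : Type) [TopologicalSpace X] : Type :=
  Quot (permRel n X)

/-- A group is free when it is isomorphic to `FreeGroup S` for some set `S`. -/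
def IsFreeGroupType (G : Type*) [Group G] : Prop :=
  ∃ S : Type, Nonempty (G ≃* FreeGroup S)

/-- A cycle subgraph: a subgraph with at least one edge which is connected and all of whose
vertices have degree exactly two (inside the subgraph). -/
def IsCycleSubgraph {W : Type*} {G : SimpleGraph W} (H : G.Subgraph) : Prop :=
  H.edgeSet.Nonempty ∧ H.Connected ∧ ∀ v ∈ H.verts, (H.neighborSet v).ncard = 2

/-- The graph obtained from `Γ` by attaching a path of length `m` at the vertex `v`. -/
def attachPath {V : Type} (Γ : SimpleGraph V) (v : V) (m : ℕ) :
    SimpleGraph (V ⊕ Fin m) :=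
  SimpleGraph.fromEdgeSet
    ({e | ∃ a b : V, Γ.Adj a b ∧ e = s(Sum.inl a, Sum.inl b)} ∪
     {e | ∃ h : 0 < m, e = s(Sum.inl v, Sum.inr ⟨0, h⟩)} ∪
     {e | ∃ i j : Fin m, (i : ℕ) + 1 = (j : ℕ) ∧ e = s(Sum.inr i, Sum.inr j)})

open Set unitInterval Topology

/-! ### Cocycles on paths and their gluing -/

/-- A set is small with respect to a cover `𝒰` if it lies in one of its members. -/
def Small {X : Type} (𝒰 : Set (Set X)) (s : Set X) : Prop := ∃ U ∈ 𝒰, s ⊆ U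

/-- A `G`-valued cocycle on `𝒰`-small paths: a function on paths which is multiplicative on
`𝒰`-small concatenations and invariant under `𝒰`-small homotopies (values on other paths are
irrelevant).  The order of multiplication matches the one of `FundamentalGroup`, where the
product `p * q` is the class of `q` followed by `p`.  With `𝒰 = {univ}` this is the same as a
functor from the fundamental groupoid of `X` to `G`. -/
structure LocCoc (X : Type) [TopologicalSpace X] (𝒰 : Set (Set X)) (G : Type) [Group G] where
  toFun : C(I, X) → G
  trans' : ∀ {x y z : X} (p : Path x y) (q : Path y z), Small 𝒰 (range p ∪ range q) →
    toFun (p.trans q).toContinuousMap = toFun q.toContinuousMap * toFun p.toContinuousMap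
  homot' : ∀ {x y : X} (p q : Path x y) (H : p.Homotopy q), Small 𝒰 (range H) →
    toFun p.toContinuousMap = toFun q.toContinuousMap

section LocCoc

variable {X : Type} [TopologicalSpace X] {𝒰 : Set (Set X)} {G : Type} [Group G]
variable {E : Type} [NormedAddCommGroup E] [NormedSpace ℝ E]

lemma Small.mono {X : Type} {𝒰 : Set (Set X)} {s t : Set X} (h : Small 𝒰 t) (hst : s ⊆ t) : Small 𝒰 s := by
  obtain ⟨U, hU, h⟩ := h
  exact ⟨U, hU, hst.trans h⟩

lemma small_univ {X : Type} (s : Set X) : Small {univ} s := ⟨univ, rfl, subset_univ _⟩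

/-- The image under `f` of the straight segment from `a` to `b`. -/
def seg (f : C(E, X)) (a b : E) : Path (f a) (f b) where
  toFun t := f (AffineMap.lineMap a b (t : ℝ))
  continuous_toFun := by
    have : Continuous fun t : I => AffineMap.lineMap (k := ℝ) a b (t : ℝ) := by
      simp only [AffineMap.lineMap_apply_module']
      fun_prop
    exact f.continuous.comp this
  source' := by simp
  target' := by simp

lemma seg_apply (f : C(E, X)) (a b : E) (t : I) :
    seg f a b t = f (AffineMap.lineMap a b (t : ℝ)) := rfl

lemma seg_mem (f : C(E, X)) {a b : E} {s : Set E} (hs : Convex ℝ s) (ha : a ∈ s) (hb : b ∈ s) :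
    range (seg f a b) ⊆ f '' s := by
  rintro _ ⟨t, rfl⟩
  exact ⟨_, hs.segment_subset ha hb (by
    rw [segment_eq_image_lineMap]; exact ⟨t, t.2, rfl⟩), rfl⟩

/-- Holonomies along the three sides of a triangle with small image are compatible. -/
lemma LocCoc.triangle (c : LocCoc X 𝒰 G) (f : C(E, X)) {s : Set E} (hs : Convex ℝ s)
    (hsm : Small 𝒰 (f '' s)) {a b d : E} (ha : a ∈ s) (hb : b ∈ s) (hd : d ∈ s) :
    c.toFun (seg f a d).toContinuousMap =
      c.toFun (seg f b d).toContinuousMap * c.toFun (seg f a b).toContinuousMap := by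
  rw [← c.trans' _ _ (hsm.mono (union_subset (seg_mem f hs ha hb) (seg_mem f hs hb hd)))]
  set i : C(E, E) := ContinuousMap.id E
  let P : Path a d := (seg i a b).trans (seg i b d)
  let Q : Path a d := seg i a d
  have hP : ∀ t, P t ∈ s := by
    intro t
    have : P t ∈ range ((seg i a b).trans (seg i b d)) := ⟨t, rfl⟩
    rw [Path.trans_range] at this
    rcases this with h | h
    · obtain ⟨z, hz, hz'⟩ := seg_mem i hs ha hb h
      exact hz' ▸ hz
    · obtain ⟨z, hz, hz'⟩ := seg_mem i hs hb hd h
      exact hz' ▸ hz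
  have hQ : ∀ t, Q t ∈ s := fun t => by
    obtain ⟨z, hz, hz'⟩ := seg_mem i hs ha hd ⟨t, rfl⟩
    exact hz' ▸ hz
  have hPf : (seg f a b).trans (seg f b d) = P.map f.continuous := by
    exact (Path.map_trans (seg i a b) (seg i b d) f.continuous).symm
  have hQf : seg f a d = Q.map f.continuous := rfl
  have hcont : Continuous fun x : I × I =>
      f (AffineMap.lineMap (k := ℝ) (Q x.2) (P x.2) (x.1 : ℝ)) := by
    apply f.continuous.comp
    simp only [AffineMap.lineMap_apply_module']
    fun_prop
  let H : (Q.map f.continuous).Homotopy (P.map f.continuous) :=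
    { toFun := fun x => f (AffineMap.lineMap (k := ℝ) (Q x.2) (P x.2) (x.1 : ℝ))
      continuous_toFun := hcont
      map_zero_left := by intro x; simp
      map_one_left := by intro x; simp
      prop' := by
        intro t x hx
        rcases hx with rfl | hx
        · simp
        · rw [mem_singleton_iff] at hx; subst hx; simp }
  rw [hPf, hQf]
  refine c.homot' _ _ H (hsm.mono ?_)
  rintro _ ⟨x, rfl⟩
  exact ⟨_, hs.segment_subset (hQ x.2) (hP x.2) (by
    rw [segment_eq_image_lineMap]; exact ⟨x.1, x.1.2, rfl⟩), rfl⟩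

/-- A trivialization `u` of the pullback of `c` along `f` on `K`: the holonomy of `c` along the
image of a short segment `[a, b]` is `u b * (u a)⁻¹`. -/
def IsTriv (c : LocCoc X 𝒰 G) (f : C(E, X)) (K : Set E) (u : E → G) : Prop :=
  ∃ ε > 0, ∀ a ∈ K, ∀ b ∈ K, dist a b < ε → u b = c.toFun (seg f a b).toContinuousMap * u a

lemma LocCoc.seg_self (c : LocCoc X 𝒰 G) (f : C(E, X)) {a : E} (h : Small 𝒰 {f a}) :
    c.toFun (seg f a a).toContinuousMap = 1 := by
  have := c.triangle f (convex_singleton a) (by simpa using h) (mem_singleton a)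
    (mem_singleton a) (mem_singleton a)
  simpa using this

/-- Holonomy along radial segments, cut into `n` short pieces, trivializes a cocycle on a compact
convex set. -/
lemma exists_triv (c : LocCoc X 𝒰 G) (ho : ∀ U ∈ 𝒰, IsOpen U) (hcov : ⋃₀ 𝒰 = univ)
    (f : C(E, X)) {K : Set E} (hK : IsCompact K) (hconv : Convex ℝ K) (h0 : (0 : E) ∈ K) :
    ∃ u, IsTriv c f K u := by
  obtain ⟨δ, hδ, hδK⟩ := lebesgue_number_lemma_of_metric_sUnion (c := {s | ∃ U ∈ 𝒰, s = f ⁻¹' U}) hK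
    (by rintro _ ⟨U, hU, rfl⟩; exact (ho U hU).preimage f.continuous)
    (by
      intro x _
      have : f x ∈ ⋃₀ 𝒰 := by rw [hcov]; trivial
      obtain ⟨U, hU, hx⟩ := this
      exact ⟨_, ⟨U, hU, rfl⟩, hx⟩)
  have hsm : ∀ x ∈ K, Small 𝒰 (f '' Metric.ball x δ) := by
    intro x hx
    obtain ⟨_, ⟨U, hU, rfl⟩, h⟩ := hδK x hx
    exact ⟨U, hU, by rintro _ ⟨y, hy, rfl⟩; exact h hy⟩
  obtain ⟨R, hR⟩ := hK.isBounded.exists_norm_le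
  obtain ⟨n, hn⟩ := exists_nat_gt (max 0 (R / (δ / 2)))
  have hn0 : (0 : ℝ) < n := (le_max_left _ _).trans_lt hn
  have hRn : R / n < δ / 2 := by
    have := (le_max_right _ _).trans_lt hn
    rw [div_lt_iff₀ (by positivity)] at this
    rw [div_lt_iff₀ hn0]; linarith
  let pt : ℕ → E → E := fun i a => ((i : ℝ) / n) • a
  let P : ℕ → E → G := fun i a => Nat.rec 1
    (fun i g => c.toFun (seg f (pt i a) (pt (i + 1) a)).toContinuousMap * g) i
  have P0 : ∀ a, P 0 a = 1 := fun a => rfl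
  have PS : ∀ i a, P (i + 1) a =
      c.toFun (seg f (pt i a) (pt (i + 1) a)).toContinuousMap * P i a := fun i a => rfl
  have hpK : ∀ i ≤ n, ∀ a ∈ K, pt i a ∈ K := by
    intro i hi a ha
    refine hconv.smul_mem_of_zero_mem h0 ha ⟨by positivity, ?_⟩
    rw [div_le_one hn0]; exact_mod_cast hi
  have hstep : ∀ i a, a ∈ K → dist (pt (i + 1) a) (pt i a) < δ / 2 := by
    intro i a ha
    have : pt (i + 1) a - pt i a = (1 / (n : ℝ)) • a := by
      simp only [pt, ← sub_smul]; congr 1; push_cast; ring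
    rw [dist_eq_norm, this, norm_smul]
    have h1 := hR a ha
    have : ‖(1 / (n : ℝ))‖ = 1 / n := by rw [Real.norm_of_nonneg (by positivity)]
    rw [this]
    calc 1 / (n : ℝ) * ‖a‖ ≤ 1 / n * R := by gcongr
      _ = R / n := by ring
      _ < _ := hRn
  have hlad : ∀ a ∈ K, ∀ b ∈ K, dist a b < δ / 2 → ∀ i ≤ n,
      P i b = c.toFun (seg f (pt i a) (pt i b)).toContinuousMap * P i a := by
    intro a ha b hb hab i
    induction i with
    | zero =>
      intro _
      have e : ∀ a, pt 0 a = 0 := fun a => by simp [pt]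
      rw [P0, P0, e, e, c.seg_self]; · simp
      exact (hsm 0 h0).mono (by simpa using ⟨0, by simpa using hδ, rfl⟩)
    | succ i ih =>
      intro hi
      have hi' : i ≤ n := by omega
      have hd : dist (pt i b) (pt i a) < δ / 2 := by
        have : pt i b - pt i a = ((i : ℝ) / n) • (b - a) := by simp [pt, smul_sub]
        rw [dist_eq_norm, this, norm_smul, Real.norm_of_nonneg (by positivity)]
        have h1 : (i : ℝ) / n ≤ 1 := by rw [div_le_one hn0]; exact_mod_cast hi'
        calc (i : ℝ) / n * ‖b - a‖ ≤ 1 * ‖b - a‖ := by gcongr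
          _ = dist a b := by rw [one_mul, ← dist_eq_norm, dist_comm]
          _ < _ := hab
      have hA := hsm _ (hpK i hi' a ha)
      have m1 : pt i a ∈ Metric.ball (pt i a) δ := Metric.mem_ball_self hδ
      have m2 : pt i b ∈ Metric.ball (pt i a) δ := by rw [Metric.mem_ball]; linarith
      have m3 : pt (i + 1) a ∈ Metric.ball (pt i a) δ := by
        rw [Metric.mem_ball]; linarith [hstep i a ha]
      have m4 : pt (i + 1) b ∈ Metric.ball (pt i a) δ := by
        rw [Metric.mem_ball]; linarith [hstep i b hb, dist_triangle (pt (i + 1) b) (pt i b) (pt i a)]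
      rw [PS, PS, ih hi', ← mul_assoc, ← mul_assoc,
        ← c.triangle f (convex_ball _ _) hA m1 m2 m4, ← c.triangle f (convex_ball _ _) hA m1 m3 m4]
  refine ⟨P n, δ / 2, by positivity, fun a ha b hb hab => ?_⟩
  have e : ∀ a, pt n a = a := fun a => by simp [pt, div_self hn0.ne']
  have := hlad a ha b hb hab n le_rfl
  rwa [e, e] at this

/-- Two functions on `[0, 1]` satisfying the same short-range transport equation have the same
total transport. -/
lemma transport_unique {g : ℝ → ℝ → G} {u w : ℝ → G} {ε : ℝ} (hε : 0 < ε)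
    (hu : ∀ a ∈ Icc (0 : ℝ) 1, ∀ b ∈ Icc (0 : ℝ) 1, dist a b < ε → u b = g a b * u a)
    (hw : ∀ a ∈ Icc (0 : ℝ) 1, ∀ b ∈ Icc (0 : ℝ) 1, dist a b < ε → w b = g a b * w a) :
    u 1 * (u 0)⁻¹ = w 1 * (w 0)⁻¹ := by
  obtain ⟨n, hn⟩ := exists_nat_gt (1 / ε)
  have hn0 : (0 : ℝ) < n := lt_trans (by positivity) hn
  have key : ∀ i : ℕ, i ≤ n → (w (i / n))⁻¹ * u (i / n) = (w 0)⁻¹ * u 0 := by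
    intro i
    induction i with
    | zero => intro _; simp
    | succ i ih =>
      intro hi
      have hi' : ((i : ℝ) + 1) ≤ n := by exact_mod_cast hi
      have m1 : (i : ℝ) / n ∈ Icc (0 : ℝ) 1 :=
        ⟨by positivity, by rw [div_le_one hn0]; linarith⟩
      have m2 : ((i + 1 : ℕ) : ℝ) / n ∈ Icc (0 : ℝ) 1 :=
        ⟨by positivity, by rw [div_le_one hn0]; push_cast; linarith⟩
      have hd : dist ((i : ℝ) / n) (((i + 1 : ℕ) : ℝ) / n) < ε := by
        rw [dist_comm, Real.dist_eq]
        have : ((i + 1 : ℕ) : ℝ) / n - (i : ℝ) / n = 1 / n := by push_cast; ring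
        rw [this, abs_of_pos (by positivity), div_lt_iff₀ hn0]
        rw [div_lt_iff₀ hε] at hn; linarith
      rw [hu _ m1 _ m2 hd, hw _ m1 _ m2 hd, ← ih (by omega)]
      group
  have := key n le_rfl
  rw [div_self hn0.ne'] at this
  have h2 : u 1 = w 1 * ((w 0)⁻¹ * u 0) := by rw [← this]; group
  rw [h2]; group

lemma IsTriv.unique {c : LocCoc X 𝒰 G} {f : C(ℝ, X)} {u w : ℝ → G}
    (hu : IsTriv c f (Icc 0 1) u) (hw : IsTriv c f (Icc 0 1) w) :
    u 1 * (u 0)⁻¹ = w 1 * (w 0)⁻¹ := by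
  obtain ⟨ε, hε, hu⟩ := hu
  obtain ⟨ε', hε', hw⟩ := hw
  exact transport_unique (g := fun a b => c.toFun (seg f a b).toContinuousMap) (lt_min hε hε')
    (fun a ha b hb h => hu a ha b hb (h.trans_le (min_le_left _ _)))
    (fun a ha b hb h => hw a ha b hb (h.trans_le (min_le_right _ _)))

/-- The constant extension of a path to the real line. -/
def ext (γ : C(I, X)) : C(ℝ, X) := γ.comp ⟨projIcc 0 1 zero_le_one, continuous_projIcc⟩

lemma ext_apply (γ : C(I, X)) {t : ℝ} (ht : t ∈ Icc (0 : ℝ) 1) : ext γ t = γ ⟨t, ht⟩ := by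
  simp [ext, projIcc_of_mem _ ht]

lemma ext_mem (γ : C(I, X)) (t : ℝ) : ext γ t ∈ range γ := ⟨_, rfl⟩

lemma seg_ext (γ : C(I, X)) : (seg (ext γ) 0 1).toContinuousMap = γ := by
  ext t
  change ext γ (AffineMap.lineMap (0 : ℝ) 1 (t : ℝ)) = γ t
  rw [show AffineMap.lineMap (0 : ℝ) 1 (t : ℝ) = (t : ℝ) by simp [AffineMap.lineMap_apply]]
  exact ext_apply γ t.2

lemma lineMap_mem_Icc {a b : ℝ} (ha : a ∈ Icc (0 : ℝ) 1) (hb : b ∈ Icc (0 : ℝ) 1) (t : I) :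
    AffineMap.lineMap a b (t : ℝ) ∈ Icc (0 : ℝ) 1 :=
  (convex_Icc (𝕜 := ℝ) (0 : ℝ) 1).segment_subset ha hb (by
    rw [segment_eq_image_lineMap]; exact ⟨t, t.2, rfl⟩)

/-- If `f` agrees with `γ` along the affine map `L`, trivializations pull back. -/
lemma IsTriv.pull {c : LocCoc X 𝒰 G} {f : C(E, X)} {K : Set E} {u : E → G} (hu : IsTriv c f K u)
    (γ : C(I, X)) (a b : E) (hK : ∀ t ∈ Icc (0 : ℝ) 1, AffineMap.lineMap a b t ∈ K)
    (hf : ∀ t ∈ Icc (0 : ℝ) 1, f (AffineMap.lineMap a b t) = ext γ t) :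
    IsTriv c (ext γ) (Icc 0 1) (fun t => u (AffineMap.lineMap a b t)) := by
  obtain ⟨ε, hε, hu⟩ := hu
  refine ⟨ε / (dist a b + 1), by positivity, fun s hs t ht hst => ?_⟩
  beta_reduce
  rw [hu _ (hK s hs) _ (hK t ht)]
  · congr 2
    ext r
    change f (AffineMap.lineMap (AffineMap.lineMap a b s) (AffineMap.lineMap a b t) (r : ℝ)) =
      ext γ (AffineMap.lineMap s t (r : ℝ))
    rw [← hf _ (lineMap_mem_Icc hs ht r)]
    congr 1
    simp only [AffineMap.lineMap_apply_module']
    module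
  · rw [dist_lineMap_lineMap]
    rw [lt_div_iff₀ (by positivity)] at hst
    nlinarith [dist_nonneg (x := s) (y := t)]

/-- The value on an arbitrary path of the cocycle glued from `c`. -/
def LocCoc.glueVal (c : LocCoc X 𝒰 G) (ho : ∀ U ∈ 𝒰, IsOpen U) (hcov : ⋃₀ 𝒰 = univ)
    (γ : C(I, X)) : G :=
  let u := (exists_triv c ho hcov (ext γ) isCompact_Icc (convex_Icc 0 1) (by simp)).choose
  u 1 * (u 0)⁻¹

lemma LocCoc.glueVal_eq (c : LocCoc X 𝒰 G) (ho : ∀ U ∈ 𝒰, IsOpen U) (hcov : ⋃₀ 𝒰 = univ)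
    (γ : C(I, X)) {u : ℝ → G} (hu : IsTriv c (ext γ) (Icc 0 1) u) :
    c.glueVal ho hcov γ = u 1 * (u 0)⁻¹ :=
  (exists_triv c ho hcov (ext γ) isCompact_Icc (convex_Icc 0 1) (by simp)).choose_spec.unique hu

lemma LocCoc.glueVal_small (c : LocCoc X 𝒰 G) (ho : ∀ U ∈ 𝒰, IsOpen U) (hcov : ⋃₀ 𝒰 = univ)
    (γ : C(I, X)) (hγ : Small 𝒰 (range γ)) : c.glueVal ho hcov γ = c.toFun γ := by
  have hsm : Small 𝒰 (ext γ '' univ) := hγ.mono (by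
    rintro _ ⟨t, _, rfl⟩; exact ext_mem γ t)
  rw [c.glueVal_eq ho hcov γ (u := fun t => c.toFun (seg (ext γ) 0 t).toContinuousMap)]
  · rw [seg_ext, c.seg_self]
    · simp
    · exact hγ.mono (by simpa using ext_mem γ 0)
  · exact ⟨1, one_pos, fun a _ b _ _ =>
      c.triangle (ext γ) convex_univ hsm (mem_univ _) (mem_univ _) (mem_univ _)⟩

/-- The cocycle on all paths glued from a cocycle on the small paths of an open cover. -/
def LocCoc.glue (c : LocCoc X 𝒰 G) (ho : ∀ U ∈ 𝒰, IsOpen U) (hcov : ⋃₀ 𝒰 = univ) :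
    LocCoc X {univ} G where
  toFun := c.glueVal ho hcov
  trans' := by
    intro x y z p q _
    obtain ⟨u, hu⟩ := exists_triv c ho hcov (ext (p.trans q).toContinuousMap) isCompact_Icc
      (convex_Icc 0 1) (by simp)
    have h1 := hu.pull p.toContinuousMap 0 (1 / 2)
      (by intro t ht; simp only [AffineMap.lineMap_apply_module', smul_eq_mul]
          constructor <;> linarith [ht.1, ht.2])
      (by
        intro t ht
        have e : AffineMap.lineMap (0 : ℝ) (1 / 2 : ℝ) t = t / 2 := by
          simp only [AffineMap.lineMap_apply_module', smul_eq_mul]; ring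
        rw [e, ext_apply _ ht, ext_apply _ (t := t / 2) ⟨by linarith [ht.1], by linarith [ht.2]⟩]
        change (p.trans q) _ = p _
        rw [Path.trans_apply, dif_pos (by change t / 2 ≤ 1 / 2; linarith [ht.2])]
        congr 2; change 2 * (t / 2) = t; ring)
    have h2 := hu.pull q.toContinuousMap (1 / 2) 1
      (by intro t ht; simp only [AffineMap.lineMap_apply_module', smul_eq_mul]
          constructor <;> linarith [ht.1, ht.2])
      (by
        intro t ht
        have e : AffineMap.lineMap (1 / 2 : ℝ) (1 : ℝ) t = (t + 1) / 2 := by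
          simp only [AffineMap.lineMap_apply_module', smul_eq_mul]; ring
        rw [e, ext_apply _ ht,
          ext_apply _ (t := (t + 1) / 2) ⟨by linarith [ht.1], by linarith [ht.2]⟩]
        change (p.trans q) _ = q _
        rw [Path.trans_apply]
        split_ifs with h
        · change (t + 1) / 2 ≤ 1 / 2 at h
          have ht0 : t = 0 := by linarith [ht.1]
          subst ht0
          have e1 : (⟨0, ht⟩ : I) = 0 := rfl
          rw [e1, q.source]
          convert p.target using 2
          ext; norm_num
        · congr 2; change 2 * ((t + 1) / 2) - 1 = t; ring)
    rw [c.glueVal_eq ho hcov _ hu, c.glueVal_eq ho hcov _ h1, c.glueVal_eq ho hcov _ h2]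
    simp
  homot' := by
    intro x y p q H _
    let f : C(ℝ × ℝ, X) := H.toContinuousMap.comp
      ⟨fun z => (projIcc 0 1 zero_le_one z.1, projIcc 0 1 zero_le_one z.2), by fun_prop⟩
    obtain ⟨u, hu⟩ := exists_triv c ho hcov f
      (K := Icc (0 : ℝ) 1 ×ˢ Icc (0 : ℝ) 1) (isCompact_Icc.prod isCompact_Icc)
      ((convex_Icc 0 1).prod (convex_Icc 0 1)) (by
        constructor <;> simp)
    have edge : ∀ (γ : C(I, X)) (a b : ℝ × ℝ) (ha : a ∈ Icc (0 : ℝ) 1 ×ˢ Icc (0 : ℝ) 1)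
        (hb : b ∈ Icc (0 : ℝ) 1 ×ˢ Icc (0 : ℝ) 1)
        (_ : ∀ t : I, f (AffineMap.lineMap a b (t : ℝ)) = γ t),
        c.glueVal ho hcov γ = u b * (u a)⁻¹ := by
      intro γ a b ha hb h
      have := hu.pull γ a b
        (fun t ht => ((convex_Icc (𝕜 := ℝ) (0 : ℝ) 1).prod (convex_Icc (𝕜 := ℝ) (0 : ℝ) 1)).segment_subset ha hb (by
          rw [segment_eq_image_lineMap]; exact ⟨t, ht, rfl⟩))
        (fun t ht => by rw [ext_apply _ ht]; exact h ⟨t, ht⟩)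
      rw [c.glueVal_eq ho hcov _ this]; simp
    have pj : ∀ t : I, projIcc (0 : ℝ) 1 zero_le_one (t : ℝ) = t := fun t => projIcc_val _ t
    have l1 : ∀ t : I, AffineMap.lineMap ((0 : ℝ), (0 : ℝ)) (0, 1) (t : ℝ) = (0, (t : ℝ)) := by
      intro t; ext <;> simp [AffineMap.lineMap_apply_module']
    have l2 : ∀ t : I, AffineMap.lineMap ((1 : ℝ), (0 : ℝ)) (1, 1) (t : ℝ) = (1, (t : ℝ)) := by
      intro t; ext <;> simp [AffineMap.lineMap_apply_module']
    have l3 : ∀ t : I, AffineMap.lineMap ((0 : ℝ), (0 : ℝ)) (1, 0) (t : ℝ) = ((t : ℝ), 0) := by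
      intro t; ext <;> simp [AffineMap.lineMap_apply_module']
    have l4 : ∀ t : I, AffineMap.lineMap ((0 : ℝ), (1 : ℝ)) (1, 1) (t : ℝ) = ((t : ℝ), 1) := by
      intro t; ext <;> simp [AffineMap.lineMap_apply_module']
    have hconst : ∀ x, c.glueVal ho hcov (ContinuousMap.const I x) = 1 := by
      intro x
      have hx : Small 𝒰 {x} := by
        have : x ∈ ⋃₀ 𝒰 := by rw [hcov]; trivial
        obtain ⟨U, hU, hx⟩ := this
        exact ⟨U, hU, by simpa using hx⟩
      rw [c.glueVal_small ho hcov _ (hx.mono (by rintro _ ⟨t, rfl⟩; rfl))]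
      exact c.seg_self (ContinuousMap.const ℝ x) (a := 0) (by simpa using hx)
    have e1 := edge p.toContinuousMap (0, 0) (0, 1) (by simp) (by simp) (by
      intro t; rw [l1]; simp [f, pj])
    have e2 := edge q.toContinuousMap (1, 0) (1, 1) (by simp) (by simp) (by
      intro t; rw [l2]; simp [f, pj])
    have e3 := edge (ContinuousMap.const I x) (0, 0) (1, 0) (by simp) (by simp) (by
      intro t; rw [l3]; simp [f, pj])
    have e4 := edge (ContinuousMap.const I y) (0, 1) (1, 1) (by simp) (by simp) (by
      intro t; rw [l4]; simp [f, pj])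
    rw [hconst, eq_comm, mul_inv_eq_one] at e3 e4
    rw [e1, e2, e3, e4]

/-- A cocycle on all paths is determined by its values on the small paths of an open cover. -/
lemma LocCoc.eq_of_small (c c' : LocCoc X {univ} G) (ho : ∀ U ∈ 𝒰, IsOpen U)
    (hcov : ⋃₀ 𝒰 = univ) (h : ∀ γ : C(I, X), Small 𝒰 (range γ) → c.toFun γ = c'.toFun γ)
    (γ : C(I, X)) : c.toFun γ = c'.toFun γ := by
  have tr : ∀ d : LocCoc X {univ} G, ∃ u : ℝ → G, (∀ a b, u b =
      d.toFun (seg (ext γ) a b).toContinuousMap * u a) ∧ d.toFun γ = u 1 * (u 0)⁻¹ := by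
    intro d
    refine ⟨fun t => d.toFun (seg (ext γ) 0 t).toContinuousMap, fun a b =>
      d.triangle (ext γ) convex_univ (small_univ _) (mem_univ _) (mem_univ _) (mem_univ _), ?_⟩
    beta_reduce
    rw [seg_ext, d.seg_self _ (small_univ _)]; simp
  obtain ⟨u, hu, hu'⟩ := tr c
  obtain ⟨w, hw, hw'⟩ := tr c'
  obtain ⟨δ, hδ, hδK⟩ := lebesgue_number_lemma_of_metric_sUnion
    (c := {s | ∃ U ∈ 𝒰, s = ext γ ⁻¹' U}) (isCompact_Icc (a := (0 : ℝ)) (b := 1))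
    (by rintro _ ⟨U, hU, rfl⟩; exact (ho U hU).preimage (ext γ).continuous)
    (by
      intro x _
      have : ext γ x ∈ ⋃₀ 𝒰 := by rw [hcov]; trivial
      obtain ⟨U, hU, hx⟩ := this
      exact ⟨_, ⟨U, hU, rfl⟩, hx⟩)
  rw [hu', hw']
  refine transport_unique (g := fun a b => c.toFun (seg (ext γ) a b).toContinuousMap) hδ
    (fun a _ b _ _ => hu a b) (fun a ha b hb hab => ?_)
  rw [hw a b, h]
  obtain ⟨_, ⟨U, hU, rfl⟩, hs⟩ := hδK a ha
  refine ⟨U, hU, (seg_mem (ext γ) (convex_ball a δ) (Metric.mem_ball_self hδ)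
    (Metric.mem_ball'.2 hab)).trans ?_⟩
  rintro _ ⟨y, hy, rfl⟩
  exact hs hy

end LocCoc

/-! ### Cocycles and homomorphisms from the fundamental group -/

section Hom

variable {X Y : Type} [TopologicalSpace X] [TopologicalSpace Y] {G : Type} [Group G]

/-- The class of a loop in the fundamental group. -/
def br {x : X} (p : Path x x) : FundamentalGroup X x := Path.Homotopic.Quotient.mk p

lemma br_eq {x : X} {p q : Path x x} (h : p.Homotopic q) : br p = br q :=
  Path.Homotopic.Quotient.eq.2 h

lemma br_trans {x : X} (p q : Path x x) : br (p.trans q) = br q * br p := rfl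

lemma br_refl (x : X) : br (Path.refl x) = 1 := rfl

lemma br_ind {x : X} {P : FundamentalGroup X x → Prop} (h : ∀ p, P (br p)) (g) : P g :=
  Path.Homotopic.Quotient.ind (motive := P) h g

lemma map_br (f : C(X, Y)) {x : X} (p : Path x x) :
    FundamentalGroup.map f x (br p) = br (p.map f.continuous) := rfl

/-- The value of a cocycle on a path. -/
def LocCoc.val (c : LocCoc X {univ} G) {x y : X} (p : Path x y) : G := c.toFun p.toContinuousMap

lemma LocCoc.val_trans (c : LocCoc X {univ} G) {x y z : X} (p : Path x y) (q : Path y z) :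
    c.val (p.trans q) = c.val q * c.val p := c.trans' p q (small_univ _)

lemma LocCoc.val_homotopic (c : LocCoc X {univ} G) {x y : X} {p q : Path x y}
    (h : p.Homotopic q) : c.val p = c.val q := c.homot' p q h.some (small_univ _)

lemma LocCoc.val_cast (c : LocCoc X {univ} G) {x y x' y' : X} (p : Path x y) (hx : x' = x)
    (hy : y' = y) : c.val (p.cast hx hy) = c.val p := rfl

lemma LocCoc.val_refl (c : LocCoc X {univ} G) (x : X) : c.val (Path.refl x) = 1 := by
  have h := c.val_trans (Path.refl x) (Path.refl x)
  rw [c.val_homotopic ⟨Path.Homotopy.transRefl _⟩] at h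
  simpa using h

lemma LocCoc.val_symm (c : LocCoc X {univ} G) {x y : X} (p : Path x y) :
    c.val p.symm = (c.val p)⁻¹ := by
  have h := c.val_trans p p.symm
  rw [← c.val_homotopic ⟨Path.Homotopy.reflTransSymm _⟩, c.val_refl] at h
  exact eq_inv_of_mul_eq_one_left h.symm

/-- The homomorphism on the fundamental group given by a cocycle. -/
def LocCoc.toHom (c : LocCoc X {univ} G) (x : X) : FundamentalGroup X x →* G where
  toFun g := Quotient.lift (s := Path.Homotopic.setoid x x) (fun p => c.val p)
    (fun _ _ h => c.val_homotopic h) g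
  map_one' := c.val_refl x
  map_mul' := by
    intro a b
    induction a using br_ind with | h a
    induction b using br_ind with | h b
    exact c.val_trans b a

lemma LocCoc.toHom_br (c : LocCoc X {univ} G) {x : X} (p : Path x x) :
    c.toHom x (br p) = c.val p := rfl

/-- A continuous map on the unit interval as a path between its end points. -/
def asPath (γ : C(I, X)) : Path (γ 0) (γ 1) := ⟨γ, rfl, rfl⟩

lemma conj_trans {x₀ x y z : X} (a : Path x₀ x) (b : Path x₀ y) (d : Path x₀ z) (p : Path x y)
    (q : Path y z) : br (a.trans ((p.trans q).trans d.symm)) =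
      br (b.trans (q.trans d.symm)) * br (a.trans (p.trans b.symm)) := by
  rw [← br_trans]
  unfold br
  simp only [Path.Homotopic.Quotient.mk_trans, Path.Homotopic.Quotient.mk_symm,
    Path.Homotopic.Quotient.trans_assoc]
  congr 2
  rw [← Path.Homotopic.Quotient.trans_assoc (Path.Homotopic.Quotient.mk b).symm,
    Path.Homotopic.Quotient.symm_trans, Path.Homotopic.Quotient.refl_trans]

/-- The cocycle attached to a homomorphism on the fundamental group and a choice of paths from
the base point to all points. -/
def ofHom {x₀ : X} (φ : FundamentalGroup X x₀ →* G) (δ : ∀ x, Path x₀ x) : LocCoc X {univ} G :=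
  let F : C(I, X) → G := fun γ => φ (br ((δ (γ 0)).trans ((asPath γ).trans (δ (γ 1)).symm)))
  have hF : ∀ {x y} (p : Path x y), F p.toContinuousMap =
      φ (br ((δ x).trans (p.trans (δ y).symm))) := by
    rintro _ _ ⟨γ, rfl, rfl⟩
    rfl
  { toFun := F
    trans' := by
      intro x y z p q _
      rw [hF, hF, hF, ← map_mul, conj_trans (δ x) (δ y)]
    homot' := by
      intro x y p q H _
      rw [hF, hF]
      congr 1
      exact br_eq (.hcomp (.refl _) (.hcomp ⟨H⟩ (.refl _))) }

lemma ofHom_val {x₀ : X} (φ : FundamentalGroup X x₀ →* G) (δ : ∀ x, Path x₀ x) {x y : X}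
    (p : Path x y) : (ofHom φ δ).val p = φ (br ((δ x).trans (p.trans (δ y).symm))) := by
  obtain ⟨γ, rfl, rfl⟩ := p
  rfl

lemma ofHom_loop {x₀ : X} (φ : FundamentalGroup X x₀ →* G) (δ : ∀ x, Path x₀ x)
    (h : δ x₀ = Path.refl x₀) (p : Path x₀ x₀) : (ofHom φ δ).val p = φ (br p) := by
  rw [ofHom_val, h]
  congr 1
  exact br_eq ((Path.Homotopic.refl_trans _).trans (Path.Homotopic.trans_refl _))

lemma ofHom_base {x₀ : X} (φ : FundamentalGroup X x₀ →* G) (δ : ∀ x, Path x₀ x)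
    (h : δ x₀ = Path.refl x₀) (x : X) : (ofHom φ δ).val (δ x) = 1 := by
  rw [ofHom_val, h, ← map_one φ, ← br_refl]
  congr 1
  exact br_eq ((Path.Homotopic.refl_trans _).trans (Path.Homotopic.trans_symm _))

lemma lift_path {i : Y → X} (hi : Topology.IsEmbedding i) {x y : X} (p : Path x y)
    (h : range p ⊆ range i) : ∃ (a b : Y) (ha : i a = x) (hb : i b = y) (p' : Path a b),
      (p'.map hi.continuous).cast ha.symm hb.symm = p := by
  have h' : ∀ t, ∃ y, i y = p t := fun t => h ⟨t, rfl⟩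
  choose g hg using h'
  have hc : Continuous g := by
    rw [hi.continuous_iff]
    have : i ∘ g = p := funext hg
    rw [this]; exact p.continuous
  refine ⟨g 0, g 1, by rw [hg, p.source], by rw [hg, p.target], ⟨⟨g, hc⟩, rfl, rfl⟩, ?_⟩
  ext t
  exact hg t

lemma lift_path' {i : Y → X} (hi : Topology.IsEmbedding i) {a b : Y} (p : Path (i a) (i b))
    (h : range p ⊆ range i) : ∃ (p' : Path a b), p'.map hi.continuous = p := by
  obtain ⟨a', b', ha, hb, p', hp⟩ := lift_path hi p h
  obtain rfl := hi.injective ha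
  obtain rfl := hi.injective hb
  exact ⟨p', hp⟩

lemma lift_homotopy {i : Y → X} (hi : Topology.IsEmbedding i) {a b : Y} (p q : Path a b)
    (H : (p.map hi.continuous).Homotopy (q.map hi.continuous)) (h : range H ⊆ range i) :
    p.Homotopic q := by
  have h' : ∀ t, ∃ y, i y = H t := fun t => h ⟨t, rfl⟩
  choose g hg using h'
  have hc : Continuous g := by
    rw [hi.continuous_iff]
    have : i ∘ g = H := funext hg
    rw [this]; exact H.continuous
  refine ⟨⟨⟨⟨g, hc⟩, ?_, ?_⟩, ?_⟩⟩
  · intro t; apply hi.injective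
    exact (hg _).trans (by simp)
  · intro t; apply hi.injective
    exact (hg _).trans (by simp)
  · intro t x hx; apply hi.injective
    refine (hg _).trans ?_
    rw [H.eq_fst t hx]; rfl

end Hom

/-! ### A van Kampen theorem for gluing along simply connected pieces -/

/-- The data for computing the fundamental group of `X = A ∪ i(E)`, where the path components of
`E` and of `C = i⁻¹(A)` are simply connected: a base point of `A` with paths `δ` to all points of
`A`, a base point `w k` in every component `k` of `C` with paths `sg` to the points of that
component, and for every point `e` of `E` a component `root e` of `C`, depending only on the
component of `e`, together with a path `θ e` in `E` from the base point of `root e` to `e`. -/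
structure VK (X E : Type) [TopologicalSpace X] [TopologicalSpace E] where
  A : Set X
  hA : IsOpen A
  i : E → X
  hi : Topology.IsOpenEmbedding i
  cov : A ∪ range i = univ
  a₀ : A
  δ : ∀ a : A, Path a₀ a
  δ_base : δ a₀ = Path.refl a₀
  K : Type
  comp : {e // i e ∈ A} → K
  w : K → {e // i e ∈ A}
  comp_w : ∀ k, comp (w k) = k
  sg : ∀ c, Path (w (comp c)) c
  comp_eq : ∀ {c c'}, Path c c' → comp c = comp c'
  root : E → K
  θ : ∀ e, Path (w (root e)).1 e
  root_eq : ∀ {e e'}, Path e e' → root e = root e'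
  hE : ∀ {e e' : E} (p q : Path e e'), p.Homotopic q
  hC : ∀ {c c' : {e // i e ∈ A}} (p q : Path c c'), p.Homotopic q

namespace VK

variable {X E : Type} [TopologicalSpace X] [TopologicalSpace E] (D : VK X E)
  {G : Type} [Group G]

/-- The inclusion of `A`. -/
abbrev inA : C(D.A, X) := ⟨Subtype.val, continuous_subtype_val⟩

/-- The map `i` restricted to the intersection. -/
abbrev inCA : C({e // D.i e ∈ D.A}, D.A) :=
  ⟨fun c => ⟨D.i c.1, c.2⟩, (D.hi.continuous.comp continuous_subtype_val).subtype_mk _⟩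

/-- The index set of the free generators: all components of the intersection but the chosen
one in every component of `E`. -/
def Gen : Type := {k : D.K // D.root (D.w k).1 ≠ k}

lemma root_w_root (e : E) : D.root (D.w (D.root e)).1 = D.root e := D.root_eq (D.θ e)

/-- The path in `X` from the base point to a point of `A`. -/
def δX (a : D.A) : Path (D.inA D.a₀) (D.inA a) := (D.δ a).map D.inA.continuous

/-- The path `θ e` seen in `X`. -/
def θX (e : E) : Path (D.inA (D.inCA (D.w (D.root e)))) (D.i e) := (D.θ e).map D.hi.continuous

/-- The loop of a generator. -/
def genLoop (k : D.K) : Path (D.inA D.a₀) (D.inA D.a₀) :=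
  (D.δX (D.inCA (D.w (D.root (D.w k).1)))).trans
    ((D.θX (D.w k).1).trans (D.δX (D.inCA (D.w k))).symm)

lemma val_C (c : LocCoc D.A {univ} G) {x y : {e // D.i e ∈ D.A}} (p : Path x y) :
    c.val (p.map D.inCA.continuous) = c.val ((D.sg y).map D.inCA.continuous) *
      (c.val ((D.sg x).map D.inCA.continuous))⁻¹ := by
  rw [eq_mul_inv_iff_mul_eq, ← c.val_trans, ← Path.map_trans]
  have h : D.comp x = D.comp y := D.comp_eq p
  have h2 : Path.Homotopic ((D.sg x).trans p) ((D.sg y).cast (by rw [h]) rfl) := D.hC _ _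
  rw [c.val_homotopic (h2.map D.inCA)]
  rfl

lemma val_sg_w (c : LocCoc D.A {univ} G) (k : D.K) :
    c.val ((D.sg (D.w k)).map D.inCA.continuous) = 1 := by
  have h2 : Path.Homotopic ((D.sg (D.w k)).cast (by rw [D.comp_w]) rfl) (Path.refl (D.w k)) :=
    D.hC _ _
  have := c.val_homotopic (h2.map D.inCA)
  exact this.trans (c.val_refl _)

section Extend

variable (c : LocCoc D.A {univ} G) (l : D.K → G)

/-- The gauge function on `X`, defined on the image of `i`. -/
def gauge (x : X) : G :=
  if h : ∃ c' : {e // D.i e ∈ D.A}, D.i c'.1 = x then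
    c.val ((D.sg h.choose).map D.inCA.continuous) * l (D.comp h.choose)
  else 1

lemma gauge_C (x : {e // D.i e ∈ D.A}) : D.gauge c l (D.i x.1) =
    c.val ((D.sg x).map D.inCA.continuous) * l (D.comp x) := by
  have h : ∃ c' : {e // D.i e ∈ D.A}, D.i c'.1 = D.i x.1 := ⟨x, rfl⟩
  have h2 : h.choose = x := Subtype.ext (D.hi.injective h.choose_spec)
  unfold gauge
  rw [dif_pos h, h2]

/-- The underlying function of the extended cocycle. -/
def extFun (γ : C(I, X)) : G :=
  if h : ∃ γ' : C(I, D.A), D.inA.comp γ' = γ then c.toFun h.choose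
  else D.gauge c l (γ 1) * (D.gauge c l (γ 0))⁻¹

lemma inA_emb : Topology.IsEmbedding D.inA := Topology.IsEmbedding.subtypeVal

lemma range_inA : range D.inA = D.A := Subtype.range_val

lemma extFun_A (γ : C(I, D.A)) : D.extFun c l (D.inA.comp γ) = c.toFun γ := by
  have h : ∃ γ' : C(I, D.A), D.inA.comp γ' = D.inA.comp γ := ⟨γ, rfl⟩
  have h2 : h.choose = γ := by
    ext t
    exact congrArg (fun f : C(I, X) => f t) h.choose_spec
  unfold extFun
  rw [dif_pos h, h2]

lemma extFun_E {e e' : E} (p : Path e e') :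
    D.extFun c l (p.map D.hi.continuous).toContinuousMap =
      D.gauge c l (D.i e') * (D.gauge c l (D.i e))⁻¹ := by
  by_cases h : ∃ γ' : C(I, D.A), D.inA.comp γ' = (p.map D.hi.continuous).toContinuousMap
  · obtain ⟨γ', hγ⟩ := h
    have hm : ∀ t, D.i (p t) ∈ D.A := fun t => by
      have := congrArg (fun f : C(I, X) => f t) hγ
      have h3 : D.i (p t) = (γ' t : X) := this.symm
      rw [h3]; exact (γ' t).2
    let p' : Path (⟨e, by simpa using hm 0⟩ : {e // D.i e ∈ D.A}) ⟨e', by simpa using hm 1⟩ :=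
      ⟨⟨fun t => ⟨p t, hm t⟩, p.continuous.subtype_mk _⟩, by ext; simp, by ext; simp⟩
    have h4 : (p.map D.hi.continuous).toContinuousMap =
      D.inA.comp (p'.map D.inCA.continuous).toContinuousMap := rfl
    rw [h4, extFun_A]
    have h5 := D.val_C c p'
    have g1 := D.gauge_C c l ⟨e, by simpa using hm 0⟩
    have g2 := D.gauge_C c l ⟨e', by simpa using hm 1⟩
    have h6 := congrArg l (D.comp_eq p')
    rw [g1, g2, ← h6]
    refine h5.trans ?_
    group
  · unfold extFun
    rw [dif_neg h]
    simp

/-- The cocycle on the cover `{A, i(E)}` of `X` extending a cocycle on `A`; the values of `l`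
give the freedom on the components of the intersection. -/
def extCoc : LocCoc X {D.A, range D.i} G where
  toFun := D.extFun c l
  trans' := by
    intro x y z p q h
    obtain ⟨U, rfl | rfl, hU⟩ := h
    · obtain ⟨a, b, rfl, rfl, p', rfl⟩ := lift_path D.inA_emb p
        (by rw [range_inA]; exact subset_union_left.trans hU)
      obtain ⟨b', d, hb, rfl, q', rfl⟩ := lift_path D.inA_emb q
        (by rw [range_inA]; exact subset_union_right.trans hU)
      obtain rfl := D.inA_emb.injective hb
      rw [Path.cast_rfl_rfl, Path.cast_rfl_rfl, ← Path.map_trans]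
      exact (D.extFun_A c l _).trans ((c.val_trans p' q').trans
        (congrArg₂ _ (D.extFun_A c l _) (D.extFun_A c l _)).symm)
    · obtain ⟨a, b, rfl, rfl, p', rfl⟩ := lift_path D.hi.isEmbedding p
        (subset_union_left.trans hU)
      obtain ⟨b', d, hb, rfl, q', rfl⟩ := lift_path D.hi.isEmbedding q
        (subset_union_right.trans hU)
      obtain rfl := D.hi.injective hb
      rw [Path.cast_rfl_rfl, Path.cast_rfl_rfl, ← Path.map_trans, extFun_E, extFun_E, extFun_E]
      group
  homot' := by
    intro x y p q H h
    obtain ⟨U, hU', hU⟩ := h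
    have hp : range p ⊆ U := by
      rintro _ ⟨t, rfl⟩; exact hU ⟨(0, t), by simp⟩
    have hq : range q ⊆ U := by
      rintro _ ⟨t, rfl⟩; exact hU ⟨(1, t), by simp⟩
    obtain rfl | rfl := hU'
    · obtain ⟨a, b, rfl, rfl, p', rfl⟩ := lift_path D.inA_emb p (by rwa [range_inA])
      obtain ⟨q', rfl⟩ := lift_path' D.inA_emb q (by rwa [range_inA])
      have := lift_homotopy D.inA_emb p' q' H (by rwa [range_inA])
      exact (D.extFun_A c l _).trans ((c.val_homotopic this).trans (D.extFun_A c l _).symm)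
    · obtain ⟨a, b, rfl, rfl, p', rfl⟩ := lift_path D.hi.isEmbedding p hp
      obtain ⟨q', rfl⟩ := lift_path' D.hi.isEmbedding q hq
      rw [Path.cast_rfl_rfl, extFun_E, extFun_E]

end Extend

lemma ho : ∀ U ∈ ({D.A, range D.i} : Set (Set X)), IsOpen U := by
  rintro U (rfl | rfl)
  · exact D.hA
  · exact D.hi.isOpen_range

lemma hcov : ⋃₀ ({D.A, range D.i} : Set (Set X)) = univ := by
  rw [sUnion_pair, D.cov]

/-- Existence half of the universal property of the free product. -/
lemma exists_hom (φ : FundamentalGroup D.A D.a₀ →* G) (g : D.Gen → G) :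
    ∃ f : FundamentalGroup X (D.inA D.a₀) →* G,
      f.comp (FundamentalGroup.map D.inA D.a₀) = φ ∧ ∀ k : D.Gen, f (br (D.genLoop k.1)) = g k := by
  let c := ofHom φ D.δ
  let l : D.K → G := fun k => if h : D.root (D.w k).1 ≠ k then g ⟨k, h⟩ else 1
  let d : LocCoc X {univ} G := (D.extCoc c l).glue D.ho D.hcov
  have dA : ∀ {a b : D.A} (p : Path a b), d.val (p.map D.inA.continuous) = c.val p := by
    intro a b p
    refine ((D.extCoc c l).glueVal_small D.ho D.hcov _ ⟨D.A, by simp, ?_⟩).trans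
      (D.extFun_A c l _)
    rintro _ ⟨t, rfl⟩
    exact (p t).2
  have dE : ∀ {a b : E} (p : Path a b), d.val (p.map D.hi.continuous) =
      D.gauge c l (D.i b) * (D.gauge c l (D.i a))⁻¹ := by
    intro a b p
    refine ((D.extCoc c l).glueVal_small D.ho D.hcov _ ⟨range D.i, by simp, ?_⟩).trans
      (D.extFun_E c l _)
    rintro _ ⟨t, rfl⟩
    exact ⟨p t, rfl⟩
  refine ⟨d.toHom _, ?_, ?_⟩
  · ext p
    induction p using br_ind with | h p
    rw [MonoidHom.comp_apply, map_br]
    refine (dA p).trans ?_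
    exact ofHom_loop φ D.δ D.δ_base p
  · rintro ⟨k, hk⟩
    have e1 : ∀ a, d.val (D.δX a) = 1 := fun a => (dA _).trans (ofHom_base φ D.δ D.δ_base a)
    have e2 : d.val (D.θX (D.w k).1) = l k := by
      refine (dE _).trans ?_
      rw [gauge_C, gauge_C, val_sg_w, val_sg_w, comp_w, comp_w]
      have : l (D.root (D.w k).1) = 1 := by
        simp only [l]; rw [dif_neg]; rw [not_not]; exact D.root_w_root _
      rw [this]; simp
    rw [d.toHom_br, genLoop, d.val_trans, d.val_trans, d.val_symm, e1, e1, e2]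
    simp [l, hk]

/-- Uniqueness half of the universal property of the free product: the image of `π₁(A)` and the
generating loops generate `π₁(X)`. -/
lemma hom_ext (f g : FundamentalGroup X (D.inA D.a₀) →* G)
    (h1 : f.comp (FundamentalGroup.map D.inA D.a₀) = g.comp (FundamentalGroup.map D.inA D.a₀))
    (h2 : ∀ k : D.Gen, f (br (D.genLoop k.1)) = g (br (D.genLoop k.1))) : f = g := by
  have hδ : ∀ x : X, ∃ p : Path (D.inA D.a₀) x,
      (∀ (a : D.A) (h : D.inA a = x), p = (D.δX a).cast rfl h.symm) ∧
      (∀ (e : E) (h : D.i e = x), D.i e ∉ D.A → p =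
        ((D.δX (D.inCA (D.w (D.root e)))).trans (D.θX e)).cast rfl h.symm) := by
    intro x
    by_cases hx : x ∈ D.A
    · refine ⟨D.δX ⟨x, hx⟩, ?_, ?_⟩
      · rintro a rfl; rfl
      · rintro e rfl h; exact absurd hx h
    · have : x ∈ D.A ∪ range D.i := by rw [D.cov]; trivial
      obtain h | ⟨e, rfl⟩ := this
      · exact absurd h hx
      · refine ⟨(D.δX (D.inCA (D.w (D.root e)))).trans (D.θX e), ?_, ?_⟩
        · rintro a h; exact absurd (h ▸ a.2) hx
        · intro e' h _; obtain rfl := D.hi.injective h; rfl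
  choose δ hδA hδE using hδ
  have hδA' : ∀ a : D.A, δ (D.inA a) = D.δX a := fun a => hδA _ a rfl
  have hδ0 : δ (D.inA D.a₀) = Path.refl _ := by
    refine (hδA' D.a₀).trans ?_
    rw [δX, D.δ_base]; rfl
  have eqA : ∀ {a b : D.A} (p : Path a b), (ofHom f δ).val (p.map D.inA.continuous) =
      (ofHom g δ).val (p.map D.inA.continuous) := by
    intro a b p
    rw [ofHom_val, ofHom_val, hδA', hδA']
    have : (D.δX a).trans ((p.map D.inA.continuous).trans (D.δX b).symm) =
      ((D.δ a).trans (p.trans (D.δ b).symm)).map D.inA.continuous := by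
      simp only [δX, Path.map_trans, Path.map_symm]
    rw [this]
    exact DFunLike.congr_fun h1 (br ((D.δ a).trans (p.trans (D.δ b).symm)))
  have eqW : ∀ k, (ofHom f δ).val (D.θX (D.w k).1) = (ofHom g δ).val (D.θX (D.w k).1) := by
    intro k
    by_cases hk : D.root (D.w k).1 ≠ k
    · rw [ofHom_val, ofHom_val, hδA']
      have := hδA' (D.inCA (D.w k))
      have h3 : δ (D.i (D.w k).1) = D.δX (D.inCA (D.w k)) := this
      rw [h3]
      exact h2 ⟨k, hk⟩
    · rw [not_not] at hk
      have key : ∀ c : LocCoc X {univ} G, c.val (D.θX (D.w k).1) = 1 := by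
        intro c
        have h2 : Path.Homotopic ((D.θ (D.w k).1).cast (by rw [hk]) rfl) (Path.refl (D.w k).1) :=
          D.hE _ _
        have := c.val_homotopic (h2.map ⟨D.i, D.hi.continuous⟩)
        exact this.trans (c.val_refl _)
      rw [key, key]
  have eqθ : ∀ e, (ofHom f δ).val (D.θX e) = (ofHom g δ).val (D.θX e) := by
    intro e
    by_cases he : D.i e ∈ D.A
    · set x : {e // D.i e ∈ D.A} := ⟨e, he⟩
      have key : ∀ c : LocCoc X {univ} G, c.val (D.θX e) =
          c.val (((D.sg x).map D.inCA.continuous).map D.inA.continuous) *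
            c.val (D.θX (D.w (D.comp x)).1) := by
        intro c
        let p' : Path (D.w (D.comp x)).1 e := (D.sg x).map continuous_subtype_val
        have h : D.root (D.w (D.comp x)).1 = D.root e := D.root_eq p'
        have h2 : Path.Homotopic (D.θ e)
          (((D.θ (D.w (D.comp x)).1).trans p').cast (by rw [h]) rfl) := D.hE _ _
        have := c.val_homotopic (h2.map ⟨D.i, D.hi.continuous⟩)
        refine this.trans ?_
        change c.val (((D.θ (D.w (D.comp x)).1).trans p').map D.hi.continuous) = _
        rw [Path.map_trans, c.val_trans]
        rfl
      rw [key, key, eqA, eqW]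
    · have key : ∀ f : FundamentalGroup X (D.inA D.a₀) →* G, (ofHom f δ).val (D.θX e) = 1 := by
        intro f
        have e1 : (ofHom f δ).val (δ (D.i e)) = 1 := ofHom_base f δ hδ0 _
        rw [hδE (D.i e) e rfl he, Path.cast_rfl_rfl, LocCoc.val_trans, ← hδA',
          ofHom_base f δ hδ0, mul_one] at e1
        exact e1
      rw [key, key]
  have eqE : ∀ {a b : E} (p : Path a b), (ofHom f δ).val (p.map D.hi.continuous) =
      (ofHom g δ).val (p.map D.hi.continuous) := by
    intro a b p
    have key : ∀ c : LocCoc X {univ} G, c.val (p.map D.hi.continuous) =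
        c.val (D.θX b) * (c.val (D.θX a))⁻¹ := by
      intro c
      rw [eq_mul_inv_iff_mul_eq]
      have h : D.root a = D.root b := D.root_eq p
      have h2 : Path.Homotopic ((D.θ a).trans p) ((D.θ b).cast (by rw [h]) rfl) := D.hE _ _
      have := c.val_homotopic (h2.map ⟨D.i, D.hi.continuous⟩)
      refine Eq.trans ?_ this
      change _ = c.val (((D.θ a).trans p).map D.hi.continuous)
      rw [Path.map_trans, c.val_trans]
      rfl
    rw [key, key, eqθ, eqθ]
  have all := LocCoc.eq_of_small (ofHom f δ) (ofHom g δ) D.ho D.hcov (by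
    rintro γ ⟨U, rfl | rfl, hU⟩
    · obtain ⟨a, b, ha, hb, p', hp⟩ := lift_path D.inA_emb (asPath γ) (by rwa [range_inA])
      have e := congrArg Path.toContinuousMap hp
      have e' : γ = (p'.map D.inA.continuous).toContinuousMap := e.symm
      rw [e']; exact eqA p'
    · obtain ⟨a, b, ha, hb, p', hp⟩ := lift_path D.hi.isEmbedding (asPath γ) hU
      have e := congrArg Path.toContinuousMap hp
      have e' : γ = (p'.map D.hi.continuous).toContinuousMap := e.symm
      rw [e']; exact eqE p')
  ext p
  induction p using br_ind with | h p
  rw [← ofHom_loop f δ hδ0, ← ofHom_loop g δ hδ0]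
  exact all _

/-- The fundamental group of `X` is the free product of that of `A` with a free group: both
sides have the same homomorphisms to any group. -/
theorem mulEquiv : Nonempty (FundamentalGroup X (D.inA D.a₀) ≃*
    Monoid.Coprod (FundamentalGroup D.A D.a₀) (FreeGroup D.Gen)) := by
  let Φ : Monoid.Coprod (FundamentalGroup D.A D.a₀) (FreeGroup D.Gen) →*
      FundamentalGroup X (D.inA D.a₀) :=
    Monoid.Coprod.lift (FundamentalGroup.map D.inA D.a₀)
      (FreeGroup.lift fun k : D.Gen => br (D.genLoop k.1))
  obtain ⟨f, hf1, hf2⟩ := D.exists_hom (Monoid.Coprod.inl (N := FreeGroup D.Gen))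
    (fun k => Monoid.Coprod.inr (FreeGroup.of k))
  have h1 : f.comp Φ = MonoidHom.id _ := by
    apply Monoid.Coprod.hom_ext
    · rw [MonoidHom.comp_assoc, Monoid.Coprod.lift_comp_inl, hf1]; rfl
    · ext k
      simp [Φ, hf2]
  have h2 : Φ.comp f = MonoidHom.id _ := by
    apply D.hom_ext
    · rw [MonoidHom.comp_assoc, hf1, Monoid.Coprod.lift_comp_inl]; rfl
    · intro k
      simp [Φ, hf2]
  exact ⟨MonoidHom.toMulEquiv f Φ h2 h1⟩

end VK

/-- The path components of the space are simply connected and finite in number. -/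
structure HDisc (E : Type) [TopologicalSpace E] : Prop where
  homot : ∀ {x y : E} (p q : Path x y), p.Homotopic q
  fin : Finite (ZerothHomotopy E)

lemma path_discrete {F : Type} [TopologicalSpace F] [DiscreteTopology F] {x y : F}
    (p q : Path x y) : p = q := by
  have : ∀ p : Path x y, ∀ t, p t = x := by
    intro p t
    have := (isPreconnected_range p.continuous).subsingleton (mem_range_self t)
      (mem_range_self 0)
    rw [this, p.source]
  ext t
  rw [this p, this q]

lemma HDisc.of_equiv {E F : Type} [TopologicalSpace E] [TopologicalSpace F] [DiscreteTopology F]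
    [Finite F] (e : ContinuousMap.HomotopyEquiv E F) : HDisc E := by
  obtain ⟨H⟩ := e.left_inv
  refine ⟨?_, ?_⟩
  · intro x y p q
    have h := (FundamentalGroupoidFunctor.equivOfHomotopyEquiv (X := TopCat.of E)
      (Y := TopCat.of F) e).functor.map_injective (X := ⟨x⟩) (Y := ⟨y⟩)
      (a₁ := Path.Homotopic.Quotient.mk p) (a₂ := Path.Homotopic.Quotient.mk q) (by
        change Path.Homotopic.Quotient.mk (p.map e.toFun.continuous) =
          Path.Homotopic.Quotient.mk (q.map e.toFun.continuous)
        congr 1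
        exact path_discrete _ _)
    exact Path.Homotopic.Quotient.exact h
  · refine Finite.of_surjective (fun b : F => ZerothHomotopy.mk (e.invFun b)) ?_
    intro k
    induction k using ZerothHomotopy.rec with | mk x
    exact ⟨e.toFun x, Quotient.sound ⟨H.evalAt x⟩⟩

/-- If `X` is the union of a path-connected open set `A` and an open copy of `E`, where the path
components of `E` and of the intersection are simply connected and finite in number and every
component of `E` meets `A`, then `π₁(X)` is `π₁(A)` up to a free factor of finite rank. -/
theorem vanKampen {X E : Type} [TopologicalSpace X] [TopologicalSpace E] (A : Set X)
    (hA : IsOpen A) (i : E → X) (hi : Topology.IsOpenEmbedding i) (hcov : A ∪ range i = univ)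
    (hpc : PathConnectedSpace A) (hE : HDisc E) (hC : HDisc {e // i e ∈ A})
    (hj : ∀ e : E, ∃ e', i e' ∈ A ∧ Joined e e') :
    PathConnectedSpace X ∧ ∃ N : ℕ, ∀ a : A, Nonempty (FundamentalGroup X (a : X) ≃*
      Monoid.Coprod (FundamentalGroup A a) (FreeGroup (Fin N))) := by
  have outC : ∀ c : {e // i e ∈ A}, Joined (Quotient.out (ZerothHomotopy.mk c)) c :=
    fun c => Quotient.exact (s := pathSetoid _) (Quotient.out_eq (ZerothHomotopy.mk c))
  have outE : ∀ e : E, Joined (Quotient.out (ZerothHomotopy.mk e)) e :=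
    fun c => Quotient.exact (s := pathSetoid _) (Quotient.out_eq (ZerothHomotopy.mk c))
  have hr : ∀ b : ZerothHomotopy E, ∃ k : ZerothHomotopy {e // i e ∈ A},
      Joined (Quotient.out k).1 (Quotient.out b) := by
    intro b
    obtain ⟨e', he', hJ⟩ := hj (Quotient.out b)
    refine ⟨ZerothHomotopy.mk ⟨e', he'⟩, Joined.trans ?_ hJ.symm⟩
    obtain ⟨p⟩ := outC ⟨e', he'⟩
    exact ⟨p.map continuous_subtype_val⟩
  choose r hr using hr
  have hδ : ∀ a₀ : A, ∃ δ : ∀ a : A, Path a₀ a, δ a₀ = Path.refl a₀ := by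
    intro a₀
    refine ⟨fun a => if h : a = a₀ then (Path.refl a₀).cast rfl h else
      PathConnectedSpace.somePath a₀ a, ?_⟩
    simp
  choose δ hδ using hδ
  let D : A → VK X E := fun a₀ =>
    { A := A
      hA := hA
      i := i
      hi := hi
      cov := hcov
      a₀ := a₀
      δ := δ a₀
      δ_base := hδ a₀
      K := ZerothHomotopy {e // i e ∈ A}
      comp := ZerothHomotopy.mk
      w := Quotient.out
      comp_w := fun k => Quotient.out_eq k
      sg := fun c => (outC c).somePath
      comp_eq := fun p => Quotient.sound ⟨p⟩
      root := fun e => r (ZerothHomotopy.mk e)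
      θ := fun e => ((hr (ZerothHomotopy.mk e)).trans (outE e)).somePath
      root_eq := fun p => congrArg r (Quotient.sound ⟨p⟩)
      hE := hE.homot
      hC := hC.homot }
  have := hC.fin
  let S : Type := {k : ZerothHomotopy {e // i e ∈ A} //
      r (ZerothHomotopy.mk (Quotient.out k).1) ≠ k}
  obtain ⟨N, ⟨eN⟩⟩ := Finite.exists_equiv_fin S
  refine ⟨?_, N, fun a => ?_⟩
  · obtain ⟨a₀⟩ := hpc.nonempty
    have key : ∀ x, Joined (a₀ : X) x := by
      intro x
      have hAj : ∀ a : A, Joined (a₀ : X) a := fun a => ⟨(δ a₀ a).map continuous_subtype_val⟩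
      have : x ∈ A ∪ range i := by rw [hcov]; trivial
      obtain h | ⟨e, rfl⟩ := this
      · exact hAj ⟨x, h⟩
      · obtain ⟨e', he', ⟨p⟩⟩ := hj e
        exact (hAj ⟨i e', he'⟩).trans ⟨p.symm.map hi.continuous⟩
    exact ⟨⟨a₀⟩, fun x y => (key x).symm.trans (key y)⟩
  · obtain ⟨f⟩ := (D a).mulEquiv
    have g : FreeGroup (D a).Gen ≃* FreeGroup (Fin N) := FreeGroup.freeGroupCongr eN
    exact ⟨f.trans (MulEquiv.coprodCongr (MulEquiv.refl _) g)⟩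

/-- Homotopy equivalent spaces have isomorphic fundamental groups. -/
lemma fgEquiv {X Y : Type} [TopologicalSpace X] [TopologicalSpace Y]
    (e : ContinuousMap.HomotopyEquiv X Y) (x : X) :
    Nonempty (FundamentalGroup X x ≃* FundamentalGroup Y (e.toFun x)) := by
  let F := (FundamentalGroupoidFunctor.equivOfHomotopyEquiv (X := X) (Y := Y) e).functor
  exact ⟨(CategoryTheory.Functor.FullyFaithful.ofFullyFaithful F).mulEquivEnd ⟨x⟩⟩

lemma pathConnected_of_equiv {X Y : Type} [TopologicalSpace X] [TopologicalSpace Y]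
    (e : ContinuousMap.HomotopyEquiv X Y) (h : PathConnectedSpace Y) : PathConnectedSpace X := by
  obtain ⟨H⟩ := e.left_inv
  refine ⟨⟨e.invFun h.nonempty.some⟩, fun x y => ?_⟩
  have h1 : ∀ x, Joined (e.invFun (e.toFun x)) x := fun x => ⟨H.evalAt x⟩
  obtain ⟨p⟩ := PathConnectedSpace.joined (e.toFun x) (e.toFun y)
  exact (h1 x).symm.trans (Joined.trans ⟨p.map e.invFun.continuous⟩ (h1 y))

/-- The van Kampen theorem for a set `U` which is the union of `A` and the image of `i`. -/
theorem vanKampenOn {X E : Type} [TopologicalSpace X] [TopologicalSpace E] (A U : Set X)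
    (hA : IsOpen A) (i : E → X) (hi : Topology.IsOpenEmbedding i) (hcov : A ∪ range i = U)
    (hpc : PathConnectedSpace A) (hE : HDisc E) (hC : HDisc {e // i e ∈ A})
    (hj : ∀ e : E, ∃ e', i e' ∈ A ∧ Joined e e') :
    PathConnectedSpace U ∧ ∃ N : ℕ, ∀ (a : A) (a' : U), (a' : X) = a →
      Nonempty (FundamentalGroup U a' ≃*
        Monoid.Coprod (FundamentalGroup A a) (FreeGroup (Fin N))) := by
  have hAU : A ⊆ U := hcov ▸ subset_union_left
  have hiU : ∀ e, i e ∈ U := fun e => hcov ▸ Or.inr ⟨e, rfl⟩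
  let i' : E → U := fun e => ⟨i e, hiU e⟩
  let A' : Set U := Subtype.val ⁻¹' A
  let h : A' ≃ₜ A :=
    { toFun := fun z => ⟨z.1.1, z.2⟩
      invFun := fun z => ⟨⟨z.1, hAU z.2⟩, z.2⟩
      left_inv := fun z => rfl
      right_inv := fun z => rfl
      continuous_toFun := by fun_prop
      continuous_invFun := by fun_prop }
  have hi' : IsOpenEmbedding i' := by
    refine .of_continuous_injective_isOpenMap (by fun_prop) ?_ ?_
    · intro a b hab
      exact hi.injective (congrArg Subtype.val hab)
    · intro s hs
      have : i' '' s = Subtype.val ⁻¹' (i '' s) := by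
        ext z; constructor
        · rintro ⟨e, he, rfl⟩; exact ⟨e, he, rfl⟩
        · rintro ⟨e, he, hz⟩; exact ⟨e, he, Subtype.ext hz⟩
      rw [this]
      exact (hi.isOpenMap s hs).preimage continuous_subtype_val
  obtain ⟨h1, N, h2⟩ := vanKampen A' (hA.preimage continuous_subtype_val) i' hi' (by
      ext z; simp only [mem_union, mem_univ, iff_true]
      have : (z : X) ∈ A ∪ range i := hcov.symm ▸ z.2
      obtain h | ⟨e, he⟩ := this
      · exact Or.inl h
      · exact Or.inr ⟨e, Subtype.ext he⟩)
    (pathConnected_of_equiv h.toHomotopyEquiv hpc) hE hC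
    (fun e => hj e)
  refine ⟨h1, N, ?_⟩
  rintro ⟨a, ha⟩ ⟨a', ha'⟩ rfl
  obtain ⟨f⟩ := h2 ⟨⟨a', ha'⟩, ha⟩
  obtain ⟨g⟩ := fgEquiv h.toHomotopyEquiv ⟨⟨a', ha'⟩, ha⟩
  exact ⟨f.trans (MulEquiv.coprodCongr g (MulEquiv.refl _))⟩

/-! ### Configuration spaces -/

section UConf

variable {n : ℕ} {X Y : Type} [TopologicalSpace X] [TopologicalSpace Y]

lemma permRel_equiv (n : ℕ) (X : Type) [TopologicalSpace X] : Equivalence (permRel n X) := by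
  refine ⟨fun f => ⟨1, rfl⟩, ?_, ?_⟩
  · rintro f g ⟨s, h⟩
    exact ⟨s⁻¹, by rw [h]; ext; simp⟩
  · rintro f g k ⟨s, h⟩ ⟨t, h'⟩
    exact ⟨s.trans t, by rw [h, h']; rfl⟩

lemma conf_cont (k : Fin n) : Continuous fun f : Conf n X => f.1 k :=
  (continuous_apply k).comp continuous_subtype_val

/-- The unordered configuration underlying an ordered one. -/
def umk (f : Conf n X) : UConf n X := Quot.mk _ f

lemma umk_eq {f g : Conf n X} : umk f = umk g ↔ permRel n X f g :=
  (permRel_equiv n X).quot_mk_eq_iff f g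

lemma umk_perm (f : Conf n X) (s : Equiv.Perm (Fin n)) :
    umk ⟨f.1 ∘ s, f.2.comp s.injective⟩ = umk f := umk_eq.2 ⟨s, rfl⟩

lemma umk_surj : Function.Surjective (umk : Conf n X → UConf n X) := Quot.mk_surjective

lemma umk_open : IsOpenQuotientMap (umk : Conf n X → UConf n X) := by
  refine ⟨umk_surj, continuous_quot_mk, ?_⟩
  intro U hU
  have hq : IsQuotientMap (umk : Conf n X → UConf n X) := isQuotientMap_quot_mk
  rw [← hq.isOpen_preimage]
  have : umk ⁻¹' (umk '' U) = ⋃ s : Equiv.Perm (Fin n),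
      (fun f : Conf n X => (⟨f.1 ∘ s, f.2.comp s.injective⟩ : Conf n X)) ⁻¹' U := by
    ext f
    simp only [mem_preimage, mem_image, mem_iUnion]
    constructor
    · rintro ⟨g, hg, hgf⟩
      obtain ⟨s, hs⟩ := umk_eq.1 hgf
      refine ⟨s, ?_⟩
      convert hg
      exact hs.symm
    · rintro ⟨s, hs⟩
      exact ⟨_, hs, umk_perm f s⟩
  rw [this]
  refine isOpen_iUnion fun s => hU.preimage ?_
  exact Continuous.subtype_mk (continuous_pi fun k => conf_cont (s k)) _

/-- The map of unordered configuration spaces induced by an injective map. -/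
def umap (f : X → Y) (hf : Function.Injective f) : UConf n X → UConf n Y :=
  Quot.map (fun g => ⟨f ∘ g.1, hf.comp g.2⟩) (by
    rintro a b ⟨s, h⟩
    exact ⟨s, by dsimp; rw [h]; rfl⟩)

lemma umap_umk (f : X → Y) (hf : Function.Injective f) (g : Conf n X) :
    umap f hf (umk g) = umk ⟨f ∘ g.1, hf.comp g.2⟩ := rfl

lemma umap_continuous (f : X → Y) (hf : Function.Injective f) (hc : Continuous f) :
    Continuous (umap f hf : UConf n X → UConf n Y) := by
  rw [← umk_open.continuous_comp_iff]
  refine (umk_open (n := n) (X := Y)).continuous.comp (Continuous.subtype_mk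
    (continuous_pi fun k => hc.comp (conf_cont k)) _)

/-- Homeomorphic spaces have homeomorphic configuration spaces. -/
def uhomeo (n : ℕ) (h : X ≃ₜ Y) : UConf n X ≃ₜ UConf n Y where
  toFun := umap h h.injective
  invFun := umap h.symm h.symm.injective
  left_inv z := by
    obtain ⟨f, rfl⟩ := umk_surj z
    rw [umap_umk, umap_umk]
    congr 1; ext; simp
  right_inv z := by
    obtain ⟨f, rfl⟩ := umk_surj z
    rw [umap_umk, umap_umk]
    congr 1; ext; simp
  continuous_toFun := umap_continuous _ _ h.continuous
  continuous_invFun := umap_continuous _ _ h.symm.continuous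

/-- A family of ordered configurations indexed by `E` with open image, such that no two
members (equal or not) differ by a nontrivial permutation, embeds in the unordered
configuration space. -/
lemma umk_openEmbedding {E : Type} [TopologicalSpace E] (j : E → Conf n X)
    (hj : IsOpenEmbedding j)
    (hperm : ∀ e e' (s : Equiv.Perm (Fin n)), (j e).1 = (j e').1 ∘ s → s = 1) :
    IsOpenEmbedding (fun e => umk (j e)) := by
  refine .of_continuous_injective_isOpenMap (umk_open.continuous.comp hj.continuous) ?_
    (umk_open.isOpenMap.comp hj.isOpenMap)
  intro a b hab
  obtain ⟨s, hs⟩ := umk_eq.1 hab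
  obtain rfl := hperm a b s hs
  exact hj.injective (Subtype.ext hs)

end UConf

/-! ### A space with an arm attached -/

section Arm

variable {n : ℕ} {X : Type} [TopologicalSpace X] {o : X}

/-- The space `X` with an arm, a segment of length one, attached at the point `o`. -/
abbrev Arm (X : Type) (o : X) : Type := {p : X × ℝ // (0 ≤ p.2 ∧ p.2 ≤ 1) ∧ (p.2 = 0 ∨ p.1 = o)}

/-- The points of `X` in the space with an arm. -/
def toArm (o : X) (x : X) : Arm X o := ⟨(x, 0), by simp⟩

/-- The points of the arm. -/
def onArm (o : X) (t : ℝ) (h0 : 0 ≤ t) (h1 : t ≤ 1) : Arm X o := ⟨(o, t), by simp [h0, h1]⟩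

/-- The configurations that remain configurations when the arm is collapsed. -/
def A1 (n : ℕ) (o : X) : Set (UConf n (Arm X o)) :=
  {z | ∃ f : Conf n (Arm X o), umk f = z ∧ Function.Injective fun k => (f.1 k).1.1}

lemma mem_A1 {f : Conf n (Arm X o)} :
    umk f ∈ A1 n o ↔ Function.Injective fun k => (f.1 k).1.1 := by
  constructor
  · rintro ⟨g, hg, hi⟩
    obtain ⟨s, hs⟩ := umk_eq.1 hg.symm
    rw [hs]
    exact hi.comp s.injective
  · intro h; exact ⟨f, rfl, h⟩

lemma A1_open [T2Space X] : IsOpen (A1 n o) := by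
  have hq : IsQuotientMap (umk : Conf n (Arm X o) → _) := umk_open.isQuotientMap
  rw [← hq.isOpen_preimage]
  have : umk ⁻¹' (A1 n o) = ⋂ (a : Fin n) (b : Fin n) (_ : a ≠ b),
      {f : Conf n (Arm X o) | (f.1 a).1.1 ≠ (f.1 b).1.1} := by
    ext f
    simp only [mem_preimage, mem_A1, mem_iInter, mem_ofPred_eq]
    exact ⟨fun h a b hab e => hab (h e), fun h a b e => by_contra fun hab => h a b hab e⟩
  rw [this]
  refine isOpen_iInter_of_finite fun a => isOpen_iInter_of_finite fun b =>
    isOpen_iInter_of_finite fun _ => ?_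
  exact isOpen_ne_fun (continuous_fst.comp (continuous_subtype_val.comp (conf_cont a)))
    (continuous_fst.comp (continuous_subtype_val.comp (conf_cont b)))

/-- Pushing a point towards the bottom of the arm. -/
def shrink (s : I) (p : Arm X o) : Arm X o :=
  ⟨(p.1.1, (1 - s) * p.1.2), by
    have h1 := s.2.1
    have h2 := s.2.2
    refine ⟨⟨mul_nonneg (by linarith) p.2.1.1, mul_le_one₀ (by linarith) p.2.1.1 p.2.1.2⟩, ?_⟩
    rcases p.2.2 with h | h
    · left; simp [h]
    · right; exact h⟩

/-- Collapsing the arm identifies `A1` with the configuration space of `X` up to homotopy. -/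
def A1equiv [T2Space X] (n : ℕ) (o : X) :
    ContinuousMap.HomotopyEquiv (A1 n o) (UConf n X) := by
  let S := umk ⁻¹' (A1 n o)
  let π' : S → A1 n o := fun f => ⟨umk f.1, f.2⟩
  have hπ : IsOpenQuotientMap π' := by
    refine ⟨?_, ?_, ?_⟩
    · rintro ⟨_, f, rfl, h⟩
      exact ⟨⟨f, mem_A1.2 h⟩, rfl⟩
    · exact (umk_open.continuous.comp continuous_subtype_val).subtype_mk _
    · exact umk_open.isOpenMap.restrictPreimage (A1 n o)
  let lift : A1 n o → S := fun z => ⟨z.2.choose, by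
    have := z.2.choose_spec; exact mem_A1.2 this.2⟩
  have hlift : ∀ z, π' (lift z) = z := fun z => Subtype.ext z.2.choose_spec.1
  have hperm : ∀ f : S, ∃ s : Equiv.Perm (Fin n), (lift (π' f)).1.1 = f.1.1 ∘ s := by
    intro f
    exact umk_eq.1 (congrArg Subtype.val (hlift (π' f)))
  let F0 : S → UConf n X := fun f => umk ⟨fun k => (f.1.1 k).1.1, mem_A1.1 f.2⟩
  have hF : ∀ f, F0 (lift (π' f)) = F0 f := by
    intro f
    obtain ⟨s, hs⟩ := hperm f
    refine umk_eq.2 ⟨s, ?_⟩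
    dsimp; rw [hs]; rfl
  have hF0 : Continuous F0 := by
    refine umk_open.continuous.comp (Continuous.subtype_mk (continuous_pi fun k => ?_) _)
    exact continuous_fst.comp (continuous_subtype_val.comp
      ((conf_cont k).comp continuous_subtype_val))
  have hFc : Continuous fun z => F0 (lift z) := by
    rw [← hπ.continuous_comp_iff]
    have : (fun z => F0 (lift z)) ∘ π' = F0 := funext hF
    rw [this]; exact hF0
  have hinj : Function.Injective (toArm o) := fun x y h =>
    congrArg (fun p : Arm X o => p.1.1) h
  have hGA : ∀ z : UConf n X, umap (toArm o) hinj z ∈ A1 n o := by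
    intro z
    obtain ⟨f, rfl⟩ := umk_surj z
    rw [umap_umk]
    exact mem_A1.2 f.2
  let Gm : C(UConf n X, A1 n o) := ⟨fun z => ⟨umap (toArm o) hinj z, hGA z⟩,
    (umap_continuous _ _ (by unfold toArm; fun_prop)).subtype_mk _⟩
  let K0 : I × S → A1 n o := fun p => ⟨umk ⟨fun k => shrink p.1 (p.2.1.1 k), fun a b h =>
    mem_A1.1 p.2.2 (congrArg (fun p : Arm X o => p.1.1) h :
      (shrink p.1 (p.2.1.1 a)).1.1 = (shrink p.1 (p.2.1.1 b)).1.1)⟩, mem_A1.2 (mem_A1.1 p.2.2 :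
      Function.Injective fun k => (p.2.1.1 k).1.1)⟩
  have hK0 : Continuous K0 := by
    refine Continuous.subtype_mk (umk_open.continuous.comp (Continuous.subtype_mk ?_ _)) _
    unfold shrink
    refine continuous_pi fun k => Continuous.subtype_mk ?_ _
    have h : Continuous fun p : I × S => (p.2.1.1 k).1 :=
      continuous_subtype_val.comp ((conf_cont k).comp (continuous_subtype_val.comp continuous_snd))
    exact (continuous_fst.comp h).prodMk ((continuous_const.sub
      (continuous_subtype_val.comp continuous_fst)).mul (continuous_snd.comp h))
  have hK : ∀ s f, K0 (s, lift (π' f)) = K0 (s, f) := by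
    intro s f
    obtain ⟨t, ht⟩ := hperm f
    refine Subtype.ext (umk_eq.2 ⟨t, ?_⟩)
    dsimp; rw [ht]; rfl
  have hKc : Continuous fun p : I × A1 n o => K0 (p.1, lift p.2) := by
    have hq : IsOpenQuotientMap (Prod.map id π' : I × S → I × A1 n o) :=
      IsOpenQuotientMap.id.prodMap hπ
    rw [← hq.continuous_comp_iff]
    have : (fun p : I × A1 n o => K0 (p.1, lift p.2)) ∘ Prod.map id π' = K0 :=
      funext fun p => hK p.1 p.2
    rw [this]; exact hK0
  refine ⟨⟨fun z => F0 (lift z), hFc⟩, Gm, ?_, ?_⟩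
  · refine ContinuousMap.Homotopic.symm ⟨⟨⟨_, hKc⟩, ?_, ?_⟩⟩
    · intro z
      obtain ⟨f, rfl⟩ := hπ.surjective z
      refine (hK 0 f).trans (Subtype.ext ?_)
      refine congrArg umk (Subtype.ext (funext fun k => Subtype.ext ?_))
      simp [shrink]
    · intro z
      obtain ⟨f, rfl⟩ := hπ.surjective z
      refine (hK 1 f).trans (Subtype.ext ?_)
      refine Eq.trans ?_ (congrArg (umap (toArm o) hinj) (hF f).symm)
      refine congrArg umk (Subtype.ext (funext fun k => Subtype.ext ?_))
      simp [shrink, toArm]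
  · have : (⟨fun z => F0 (lift z), hFc⟩ : C(A1 n o, UConf n X)).comp Gm = ContinuousMap.id _ := by
      ext z
      obtain ⟨f, rfl⟩ := umk_surj z
      exact hF ⟨⟨fun k => toArm o (f.1 k), hinj.comp f.2⟩, mem_A1.2 f.2⟩
    rw [this]

end Arm

/-! ### Coordinates on the realization of a graph -/

section Real

variable {V : Type} [DecidableEq V] {Γ : SimpleGraph V}

lemma mem_real_iff {x : V → ℝ} : x ∈ realization Γ ↔
    (∀ u, 0 ≤ x u) ∧ ∃ a b, Γ.Adj a b ∧ x a + x b = 1 ∧ ∀ u, u ≠ a → u ≠ b → x u = 0 := by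
  simp only [realization, mem_iUnion]
  constructor
  · rintro ⟨a, b, hab, s, t, hs, ht, hst, rfl⟩
    refine ⟨fun u => ?_, a, b, hab, ?_, ?_⟩
    · simp only [basisVec, Pi.add_apply, Pi.smul_apply, smul_eq_mul]
      split_ifs <;> simp <;> positivity
    · simp [basisVec, hab.ne, hab.ne.symm, hst]
    · intro u h1 h2; simp [basisVec, h1, h2]
  · rintro ⟨h0, a, b, hab, h1, h2⟩
    refine ⟨a, b, hab, x a, x b, h0 a, h0 b, h1, ?_⟩
    ext u
    simp only [basisVec, Pi.add_apply, Pi.smul_apply, smul_eq_mul]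
    by_cases ha : u = a
    · subst ha; simp [hab.ne]
    · by_cases hb : u = b
      · subst hb; simp [hab.ne.symm]
      · simp [ha, hb, h2 u ha hb]

lemma real_nonneg {x : V → ℝ} (h : x ∈ realization Γ) (u : V) : 0 ≤ x u := (mem_real_iff.1 h).1 u

lemma real_star {x : V → ℝ} (h : x ∈ realization Γ) {v : V} (hv : 0 < x v) :
    ∃ u, Γ.Adj v u ∧ x v + x u = 1 ∧ ∀ w, w ≠ v → w ≠ u → x w = 0 := by
  obtain ⟨h0, a, b, hab, h1, h2⟩ := mem_real_iff.1 h
  by_cases ha : v = a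
  · subst ha; exact ⟨b, hab, h1, h2⟩
  · by_cases hb : v = b
    · subst hb; exact ⟨a, hab.symm, by linarith, fun w h h' => h2 w h' h⟩
    · rw [h2 v ha hb] at hv; exact absurd hv (lt_irrefl _)

lemma real_le_one {x : V → ℝ} (h : x ∈ realization Γ) (u : V) : x u ≤ 1 := by
  rcases (real_nonneg h u).eq_or_lt with h' | h'
  · rw [← h']; exact zero_le_one
  · obtain ⟨w, _, h1, _⟩ := real_star h h'
    linarith [real_nonneg h w]

lemma real_eq_basis {x : V → ℝ} (h : x ∈ realization Γ) {v : V} (hv : x v = 1) :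
    x = basisVec v := by
  obtain ⟨w, hw, h1, h2⟩ := real_star h (v := v) (by rw [hv]; exact one_pos)
  ext u
  by_cases hu : u = v
  · subst hu; simp [basisVec, hv]
  · simp only [basisVec, if_neg hu]
    by_cases hw : u = w
    · subst hw; linarith
    · exact h2 u hu hw

lemma basis_self (v : V) : basisVec v v = 1 := by simp [basisVec]

lemma basis_ne {v w : V} (h : w ≠ v) : basisVec v w = 0 := by simp [basisVec, h]

/-- Two points on the edge `{a, b}` span a segment in the realization. -/
lemma real_line {x y : V → ℝ} {a b : V} (hab : Γ.Adj a b) (hx : ∀ u, 0 ≤ x u) (hy : ∀ u, 0 ≤ y u)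
    (hx1 : x a + x b = 1) (hy1 : y a + y b = 1) (hx2 : ∀ u, u ≠ a → u ≠ b → x u = 0)
    (hy2 : ∀ u, u ≠ a → u ≠ b → y u = 0) {s : ℝ} (hs : s ∈ Icc (0 : ℝ) 1) :
    (1 - s) • x + s • y ∈ realization Γ := by
  have h1 : 0 ≤ 1 - s := by linarith [hs.2]
  have h2 : 0 ≤ s := hs.1
  refine mem_real_iff.2 ⟨fun u => ?_, a, b, hab, ?_, ?_⟩
  · exact add_nonneg (mul_nonneg h1 (hx u)) (mul_nonneg h2 (hy u))
  · simp only [Pi.add_apply, Pi.smul_apply, smul_eq_mul]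
    linear_combination (1 - s) * hx1 + s * hy1
  · intro u ha hb
    simp [hx2 u ha hb, hy2 u ha hb]

lemma basis_nonneg (v w : V) : 0 ≤ basisVec v w := by
  unfold basisVec; split_ifs <;> norm_num

/-- The point of the edge `{v, u}` with `v`-coordinate `s`. -/
def edgePt (v u : V) (s : ℝ) : V → ℝ := s • basisVec v + (1 - s) • basisVec u

lemma edgePt_v {v u : V} (h : v ≠ u) (s : ℝ) : edgePt v u s v = s := by
  simp [edgePt, basisVec, h]

lemma edgePt_u {v u : V} (h : v ≠ u) (s : ℝ) : edgePt v u s u = 1 - s := by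
  simp [edgePt, basisVec, h.symm]

lemma edgePt_w {v u w : V} (h : w ≠ v) (h' : w ≠ u) (s : ℝ) : edgePt v u s w = 0 := by
  simp [edgePt, basisVec, h, h']

lemma edgePt_nonneg {v u : V} {s : ℝ} (hs : s ∈ Icc (0 : ℝ) 1) (w : V) : 0 ≤ edgePt v u s w :=
  add_nonneg (mul_nonneg hs.1 (basis_nonneg _ _))
    (mul_nonneg (by linarith [hs.2]) (basis_nonneg _ _))

lemma edgePt_mem {v u : V} (h : Γ.Adj v u) {s : ℝ} (hs : s ∈ Icc (0 : ℝ) 1) :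
    edgePt v u s ∈ realization Γ := by
  refine mem_real_iff.2 ⟨edgePt_nonneg hs, v, u, h, ?_, fun w h1 h2 => edgePt_w h1 h2 s⟩
  rw [edgePt_v h.ne, edgePt_u h.ne]; ring

lemma basis_mem {v u : V} (h : Γ.Adj v u) : basisVec v ∈ realization Γ := by
  have := edgePt_mem (s := 1) h (by simp)
  simpa [edgePt] using this

/-- The neighbour towards which a point near `v` lies. -/
lemma nb_unique {x : V → ℝ} (hx : x ∈ realization Γ) {v u u' : V} (hv : 0 < x v)
    (hu : u ≠ v) (hu' : u' ≠ v) (h : 0 < x u) (h' : 0 < x u') : u = u' := by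
  obtain ⟨w, hw, h1, h2⟩ := real_star hx hv
  have : ∀ u, u ≠ v → 0 < x u → u = w := fun u hu h => by
    by_contra hne
    rw [h2 u hu hne] at h; exact lt_irrefl _ h
  rw [this u hu h, this u' hu' h']

end Real

/-! ### The pieces glued on and their homotopy types -/

/-- A space of parameters contracting to a point `top` with a positive function `lo` which does
not decrease too fast along the contraction. -/
structure Param where
  T : Type
  [tT : TopologicalSpace T]
  lo : T → ℝ
  lo_cont : Continuous lo
  top : T
  c : C(I × T, T)
  c0 : ∀ τ, c (0, τ) = τ
  c1 : ∀ τ, c (1, τ) = top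
  lo_pos : ∀ τ, 0 < lo τ
  lo_c : ∀ (s : I) (τ : T), (1 - (s : ℝ)) * lo τ ≤ lo (c (s, τ))

attribute [instance] Param.tT

section Piece

variable {V : Type} [DecidableEq V] {Γ : SimpleGraph V} {v : V}
  (hv : basisVec v ∈ realization Γ)

/-- The vertex `v` as a point of the realization. -/
def vpt : realization Γ := ⟨basisVec v, hv⟩

/-- The piece: `p` is a point near `v` or on the arm, below the height `lo τ` and closer to `v`
than the auxiliary point `q`. -/
abbrev Piece (P : Param) (M : Type) [TopologicalSpace M] (κ : M → ℝ) : Type :=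
  {e : P.T × Arm (realization Γ) (vpt hv) × M //
    e.2.1.1.2 < P.lo e.1 ∧ κ e.2.2 < e.2.1.1.1.1 v}

variable (P : Param) {M : Type} [TopologicalSpace M] {κ : M → ℝ}
  (hκ0 : ∀ q, 0 ≤ κ q) (hκ1 : ∀ q, κ q < 1)

lemma push_mem {x : V → ℝ} (hx : x ∈ realization Γ) (hxv : 0 < x v) (s : I) :
    (1 - (s : ℝ)) • x + (s : ℝ) • basisVec v ∈ realization Γ := by
  obtain ⟨u, hu, h1, h2⟩ := real_star hx hxv
  refine real_line hu (real_nonneg hx) (basis_nonneg v) h1 ?_ h2 ?_ s.2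
  · rw [basis_self, basis_ne hu.ne.symm, add_zero]
  · intro w h _; exact basis_ne h

/-- The piece is homotopy equivalent to the space of the auxiliary point. -/
def pieceEquiv : ContinuousMap.HomotopyEquiv (Piece hv P M κ) M := by
  let inv : C(M, Piece hv P M κ) :=
    ⟨fun q => ⟨(P.top, toArm (vpt hv) (vpt hv), q), P.lo_pos _, by
      change κ q < basisVec v v; rw [basis_self]; exact hκ1 q⟩, by fun_prop⟩
  have hpos : ∀ e : Piece hv P M κ, 0 < e.1.2.1.1.1.1 v := fun e => (hκ0 _).trans_lt e.2.2
  let H : I × Piece hv P M κ → Piece hv P M κ := fun z =>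
    ⟨(P.c (z.1, z.2.1.1), ⟨(⟨(1 - (z.1 : ℝ)) • z.2.1.2.1.1.1.1 + (z.1 : ℝ) • basisVec v,
      push_mem z.2.1.2.1.1.1.2 (hpos z.2) z.1⟩, (1 - (z.1 : ℝ)) * z.2.1.2.1.1.2), by
        have hs := z.1.2
        have hp := z.2.1.2.1.2
        refine ⟨⟨mul_nonneg (by linarith [hs.2]) hp.1.1,
          mul_le_one₀ (by linarith [hs.1]) hp.1.1 hp.1.2⟩, ?_⟩
        rcases hp.2 with h | h
        · left; simp [h]
        · right
          simp only [h, vpt]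
          ext w
          simp only [Pi.add_apply, Pi.smul_apply, smul_eq_mul]
          ring⟩, z.2.1.2.2), by
      have hs := z.1.2
      constructor
      · change (1 - (z.1 : ℝ)) * z.2.1.2.1.1.2 < P.lo (P.c (z.1, z.2.1.1))
        rcases hs.2.eq_or_lt with h | h
        · rw [h]; simpa using P.lo_pos _
        · exact (mul_lt_mul_of_pos_left z.2.2.1 (by linarith)).trans_le (P.lo_c _ _)
      · change κ z.2.1.2.2 < ((1 - (z.1 : ℝ)) • z.2.1.2.1.1.1.1 + (z.1 : ℝ) • basisVec v) v
        simp only [Pi.add_apply, Pi.smul_apply, smul_eq_mul, basis_self]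
        have h1 := z.2.2.2
        have h2 := real_le_one z.2.1.2.1.1.1.2 v
        nlinarith [mul_nonneg hs.1 (sub_nonneg.2 h2)]⟩
  have hH : Continuous H := by
    refine Continuous.subtype_mk ?_ _
    refine (P.c.continuous.comp ?_).prodMk ((Continuous.subtype_mk
      ((Continuous.subtype_mk ?_ _).prodMk ?_) _).prodMk ?_) <;> fun_prop
  refine ⟨⟨fun e => e.1.2.2, by fun_prop⟩, inv, ?_, ?_⟩
  · refine ContinuousMap.Homotopic.symm ⟨⟨⟨H, hH⟩, ?_, ?_⟩⟩
    · intro e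
      refine Subtype.ext (Prod.ext ?_ (Prod.ext (Subtype.ext (Prod.ext (Subtype.ext ?_) ?_)) rfl))
      · exact P.c0 _
      · simp [H]
      · simp [H]
    · intro e
      refine Subtype.ext (Prod.ext ?_ (Prod.ext (Subtype.ext (Prod.ext (Subtype.ext ?_) ?_)) rfl))
      · exact P.c1 _
      · simp only [H, inv, toArm, vpt, Icc.coe_one, sub_self, zero_smul, one_smul, zero_add]
        rfl
      · simp [H, inv, toArm]
  · exact .refl _

/-- The part of the piece where `p` is not at `v`. -/
abbrev PieceC (P : Param) (M : Type) [TopologicalSpace M] (κ : M → ℝ) : Type :=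
  {e : Piece hv P M κ // e.1.2.1.1.1.1 v < 1}

/-- The part of the piece where `p` is not at `v` splits according to the edge containing `p`. -/
def pieceCEquiv (hκ : Continuous κ) [TopologicalSpace (Γ.neighborSet v)]
    [DiscreteTopology (Γ.neighborSet v)] :
    ContinuousMap.HomotopyEquiv (PieceC hv P M κ)
      (Γ.neighborSet v × M) := by
  have hpos : ∀ e : PieceC hv P M κ, 0 < e.1.1.2.1.1.1.1 v := fun e => (hκ0 _).trans_lt e.1.2.2
  have hst : ∀ e : PieceC hv P M κ, ∃ u, Γ.Adj v u ∧ e.1.1.2.1.1.1.1 v + e.1.1.2.1.1.1.1 u = 1 ∧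
      ∀ w, w ≠ v → w ≠ u → e.1.1.2.1.1.1.1 w = 0 := fun e => real_star e.1.1.2.1.1.1.2 (hpos e)
  choose nb nb1 nb2 nb3 using hst
  have hnbpos : ∀ e : PieceC hv P M κ, 0 < e.1.1.2.1.1.1.1 (nb e) := fun e => by linarith [nb2 e, e.2]
  have hnb : ∀ (e : PieceC hv P M κ) u, u ≠ v → 0 < e.1.1.2.1.1.1.1 u → nb e = u := fun e u hu h =>
    nb_unique e.1.1.2.1.1.1.2 (hpos e) (nb1 e).ne.symm hu (hnbpos e) h
  let nb' : PieceC hv P M κ → Γ.neighborSet v := fun e => ⟨nb e, nb1 e⟩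
  have hxc : ∀ u, Continuous fun e : PieceC hv P M κ => e.1.1.2.1.1.1.1 u := fun u =>
    (continuous_apply u).comp (f := fun e : PieceC hv P M κ => e.1.1.2.1.1.1.1) (by fun_prop)
  have hnb' : Continuous nb' := by
    refine continuous_discrete_rng.2 fun u => ?_
    have : nb' ⁻¹' {u} = {e : PieceC hv P M κ | 0 < e.1.1.2.1.1.1.1 u} := by
      ext e
      simp only [mem_preimage, mem_singleton_iff, mem_ofPred_eq]
      constructor
      · rintro rfl; exact hnbpos e
      · intro h; exact Subtype.ext (hnb e u (Γ.ne_of_adj u.2).symm h)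
    rw [this]
    exact isOpen_lt continuous_const (hxc u)
  have hmid : ∀ q, (1 + κ q) / 2 ∈ Icc (0 : ℝ) 1 := fun q =>
    ⟨by linarith [hκ0 q], by linarith [hκ1 q]⟩
  have hh : ∀ e : PieceC hv P M κ, e.1.1.2.1.1.2 = 0 := by
    intro e
    rcases e.1.1.2.1.2.2 with h | h
    · exact h
    · have := e.2
      rw [h] at this
      change basisVec v v < 1 at this
      rw [basis_self] at this
      exact absurd this (lt_irrefl _)
  have hed : Continuous fun z : Γ.neighborSet v × M => edgePt v z.1.1 ((1 + κ z.2) / 2) := by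
    unfold edgePt
    have : Continuous fun z : Γ.neighborSet v × M => basisVec (z.1 : V) :=
      (continuous_of_discreteTopology (f := fun u : Γ.neighborSet v => basisVec (u : V))).comp
        continuous_fst
    fun_prop
  let inv : C(Γ.neighborSet v × M, PieceC hv P M κ) :=
    ⟨fun z => ⟨⟨(P.top, toArm (vpt hv) ⟨edgePt v z.1.1 ((1 + κ z.2) / 2),
        edgePt_mem z.1.2 (hmid _)⟩, z.2), P.lo_pos _, by
      change κ z.2 < edgePt v z.1.1 ((1 + κ z.2) / 2) v
      rw [edgePt_v (Γ.ne_of_adj z.1.2)]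
      linarith [hκ1 z.2]⟩, by
      change edgePt v z.1.1 ((1 + κ z.2) / 2) v < 1
      rw [edgePt_v (Γ.ne_of_adj z.1.2)]
      linarith [hκ1 z.2]⟩, by
      unfold toArm
      fun_prop⟩
  have hmemH : ∀ z : I × PieceC hv P M κ, (1 - (z.1 : ℝ)) • z.2.1.1.2.1.1.1.1 +
      (z.1 : ℝ) • edgePt v (nb z.2) ((1 + κ z.2.1.1.2.2) / 2) ∈ realization Γ := by
    intro z
    refine real_line (nb1 z.2) (real_nonneg z.2.1.1.2.1.1.1.2) (edgePt_nonneg (hmid _)) (nb2 _) ?_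
      (nb3 _) (fun w h h' => edgePt_w h h' _) z.1.2
    rw [edgePt_v (nb1 z.2).ne, edgePt_u (nb1 z.2).ne]; ring
  have hHv : ∀ z : I × PieceC hv P M κ, ((1 - (z.1 : ℝ)) • z.2.1.1.2.1.1.1.1 +
      (z.1 : ℝ) • edgePt v (nb z.2) ((1 + κ z.2.1.1.2.2) / 2)) v =
      (1 - (z.1 : ℝ)) * z.2.1.1.2.1.1.1.1 v + (z.1 : ℝ) * ((1 + κ z.2.1.1.2.2) / 2) := by
    intro z
    simp only [Pi.add_apply, Pi.smul_apply, smul_eq_mul, edgePt_v (nb1 z.2).ne]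
  let H : I × PieceC hv P M κ → PieceC hv P M κ := fun z =>
    ⟨⟨(P.c (z.1, z.2.1.1.1), toArm (vpt hv) ⟨_, hmemH z⟩, z.2.1.1.2.2), P.lo_pos _, by
      change κ z.2.1.1.2.2 < ((1 - (z.1 : ℝ)) • z.2.1.1.2.1.1.1.1 +
        (z.1 : ℝ) • edgePt v (nb z.2) ((1 + κ z.2.1.1.2.2) / 2)) v
      rw [hHv]
      have h1 := z.2.1.2.2
      have h2 := hκ1 z.2.1.1.2.2
      rcases z.1.2.1.eq_or_lt with h | h
      · rw [← h]; linarith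
      · nlinarith [z.1.2.2, mul_nonneg (sub_nonneg.2 z.1.2.2) (sub_nonneg.2 h1.le)]⟩, by
      change ((1 - (z.1 : ℝ)) • z.2.1.1.2.1.1.1.1 +
        (z.1 : ℝ) • edgePt v (nb z.2) ((1 + κ z.2.1.1.2.2) / 2)) v < 1
      rw [hHv]
      have h1 := z.2.2
      have h2 := hκ1 z.2.1.1.2.2
      rcases z.1.2.1.eq_or_lt with h | h
      · rw [← h]; linarith
      · nlinarith [z.1.2.2, mul_nonneg (sub_nonneg.2 z.1.2.2) (sub_nonneg.2 h1.le)]⟩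
  have hH : Continuous H := by
    refine Continuous.subtype_mk (Continuous.subtype_mk ?_ _) _
    have h1 : Continuous fun z : I × PieceC hv P M κ => edgePt v (nb z.2) ((1 + κ z.2.1.1.2.2) / 2) :=
      hed.comp (f := fun z : I × PieceC hv P M κ => (nb' z.2, z.2.1.1.2.2)) (by fun_prop)
    unfold toArm
    refine (P.c.continuous.comp ?_).prodMk ((Continuous.subtype_mk
      ((Continuous.subtype_mk ?_ _).prodMk ?_) _).prodMk ?_) <;> fun_prop
  refine ⟨⟨fun e => (nb' e, e.1.1.2.2), by fun_prop⟩, inv, ?_, ?_⟩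
  · refine ContinuousMap.Homotopic.symm ⟨⟨⟨H, hH⟩, ?_, ?_⟩⟩
    · intro e
      refine Subtype.ext (Subtype.ext
        (Prod.ext ?_ (Prod.ext (Subtype.ext (Prod.ext (Subtype.ext ?_) ?_)) rfl)))
      · exact P.c0 _
      · simp [H, toArm]
      · exact (hh e).symm
    · intro e
      refine Subtype.ext (Subtype.ext
        (Prod.ext ?_ (Prod.ext (Subtype.ext (Prod.ext (Subtype.ext ?_) ?_)) rfl)))
      · exact P.c1 _
      · simp only [H, toArm, Icc.coe_one, sub_self, zero_smul, one_smul, zero_add]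
        rfl
      · rfl
  · suffices h : (⟨fun e => (nb' e, e.1.1.2.2), by fun_prop⟩ :
        C(PieceC hv P M κ, Γ.neighborSet v × M)).comp inv = ContinuousMap.id _ by
      rw [h]
    ext1 z
    refine Prod.ext (Subtype.ext (hnb _ _ (Γ.ne_of_adj z.1.2).symm ?_)) rfl
    change 0 < edgePt v z.1.1 ((1 + κ z.2) / 2) z.1.1
    rw [edgePt_u (Γ.ne_of_adj z.1.2)]
    linarith [hκ1 z.2]

/-- The hypotheses of van Kampen's theorem on the piece glued on. -/
lemma piece_ok [Finite V] (hκ0 : ∀ q, 0 ≤ κ q) (hκ1 : ∀ q, κ q < 1) (hκ : Continuous κ)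
    {F : Type} [TopologicalSpace F] [DiscreteTopology F] [Finite F]
    (eM : ContinuousMap.HomotopyEquiv M F) (hnb : (Γ.neighborSet v).Nonempty) (Q : Piece hv P M κ → Prop) (hQ : ∀ e, Q e ↔ e.1.2.1.1.1.1 v < 1) :
    HDisc (Piece hv P M κ) ∧ HDisc {e // Q e} ∧ ∀ e, ∃ e', Q e' ∧ Joined e e' := by
  obtain rfl : Q = fun e => e.1.2.1.1.1.1 v < 1 := funext fun e => propext (hQ e)
  let _ : TopologicalSpace (Γ.neighborSet v) := ⊥
  have : DiscreteTopology (Γ.neighborSet v) := ⟨rfl⟩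
  refine ⟨.of_equiv ((pieceEquiv hv P hκ0 hκ1).trans eM),
    .of_equiv ((pieceCEquiv hv P hκ0 hκ1 hκ).trans
      ((ContinuousMap.HomotopyEquiv.refl _).prodCongr eM)), fun e => ?_⟩
  obtain ⟨u, hu⟩ := hnb
  let e' := (pieceCEquiv hv P hκ0 hκ1 hκ).invFun (⟨u, hu⟩, e.1.2.2)
  refine ⟨e'.1, e'.2, ?_⟩
  obtain ⟨H⟩ := (pieceEquiv (M := M) (κ := κ) hv P hκ0 hκ1).left_inv
  have h1 : ∀ e, Joined ((pieceEquiv (M := M) (κ := κ) hv P hκ0 hκ1).invFun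
    ((pieceEquiv (M := M) (κ := κ) hv P hκ0 hκ1).toFun e)) e := fun e => ⟨H.evalAt e⟩
  exact (h1 e).symm.trans (h1 e'.1)

end Piece

/-! ### Covering the configuration space of the graph with an arm -/

section Cover

variable {V : Type} [DecidableEq V] {Γ : SimpleGraph V} {v : V}
  (hv : basisVec v ∈ realization Γ)

/-- The realization of `Γ` with an arm attached at `v`. -/
abbrev AG : Type := Arm (realization Γ) (vpt hv)

/-- A function on the graph with an arm which increases towards the end of the arm near `v`,
used to order the points of a configuration. -/
def rk (p : AG hv) : ℝ := p.1.2 + p.1.1.1 v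

variable {hv}

lemma xv_le (p : AG hv) : p.1.1.1 v ≤ 1 := real_le_one p.1.1.2 v

lemma xv_lt {x : realization Γ} : x.1 v < 1 ↔ x ≠ vpt hv := by
  constructor
  · rintro h rfl
    change basisVec v v < 1 at h
    rw [basis_self] at h; exact lt_irrefl _ h
  · intro h
    refine lt_of_le_of_ne (real_le_one x.2 v) fun h1 => h (Subtype.ext (real_eq_basis x.2 h1))

lemma xv_vpt : (vpt hv).1 v = 1 := basis_self v

lemma arm_h {p : AG hv} (h : p.1.1 ≠ vpt hv) : p.1.2 = 0 := p.2.2.resolve_right h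

lemma arm_o {p : AG hv} (h : 0 < p.1.2) : p.1.1 = vpt hv := p.2.2.resolve_left h.ne'

lemma rk_lt {p : AG hv} (h : p.1.1 ≠ vpt hv) : rk hv p < 1 := by
  unfold rk; rw [arm_h h, zero_add]; exact xv_lt.2 h

lemma rk_o {p : AG hv} (h : p.1.1 = vpt hv) : rk hv p = p.1.2 + 1 := by
  unfold rk; rw [h, xv_vpt]

lemma arm_coll {p q : AG hv} (h : p.1.1 = q.1.1) (hne : p ≠ q) :
    p.1.1 = vpt hv ∧ q.1.1 = vpt hv := by
  by_cases ho : p.1.1 = vpt hv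
  · exact ⟨ho, h ▸ ho⟩
  · exact absurd (Subtype.ext (Prod.ext h (by rw [arm_h ho, arm_h (h ▸ ho)]))) hne

lemma rk_inj {p q : AG hv} (h : p.1.1 = vpt hv) (h' : q.1.1 = vpt hv)
    (hr : rk hv p = rk hv q) : p = q := by
  rw [rk_o h, rk_o h'] at hr
  exact Subtype.ext (Prod.ext (h.trans h'.symm) (by linarith))

/-- The points of a configuration can be ordered by decreasing `rk`. -/
lemma exists_sorted {n : ℕ} (f : Conf n (AG hv)) :
    ∃ g : Conf n (AG hv), umk g = umk f ∧ Antitone fun k => rk hv (g.1 k) := by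
  let s := Tuple.sort fun k => - rk hv (f.1 k)
  refine ⟨⟨f.1 ∘ s, f.2.comp s.injective⟩, umk_perm f s, fun a b hab => ?_⟩
  have := Tuple.monotone_sort (fun k => - rk hv (f.1 k)) hab
  simpa using this

/-- The order by decreasing `rk` is unique, so pieces of strictly ordered configurations embed into
the unordered configuration space. -/
lemma perm_eq_one {n : ℕ} {f g : Fin n → AG hv} (hf : StrictAnti (rk hv ∘ f))
    (hg : StrictAnti (rk hv ∘ g)) {s : Equiv.Perm (Fin n)} (h : f = g ∘ s) : s = 1 := by
  have hs : StrictMono s := by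
    intro a b hab
    have := hf hab
    rw [h] at this
    exact hg.lt_iff_gt.1 this
  have := Subsingleton.elim (hs.orderIsoOfSurjective s s.surjective) (OrderIso.refl _)
  ext k
  have := congrArg (fun t : Fin n ≃o Fin n => ((t k : Fin n) : ℕ)) this
  simpa using this

lemma arm_h_cont : Continuous fun p : AG hv => p.1.2 := by fun_prop

lemma arm_x_cont : Continuous fun p : AG hv => p.1.1 := by fun_prop

lemma arm_xv_cont : Continuous fun p : AG hv => p.1.1.1 v :=
  (continuous_apply v).comp (continuous_subtype_val.comp arm_x_cont)

/-- The height of one point on the arm, as a space of parameters. -/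
def P1 : Param where
  T := {a : ℝ // 0 < a ∧ a ≤ 1}
  lo a := a.1
  lo_cont := by fun_prop
  top := ⟨1, by norm_num⟩
  c := ⟨fun z => ⟨(1 - (z.1 : ℝ)) * z.2.1 + z.1, by
    have h1 := z.1.2.1
    have h2 := z.1.2.2
    have h3 := z.2.2
    constructor
    · rcases h1.eq_or_lt with h | h
      · rw [← h]; linarith
      · nlinarith [mul_nonneg (sub_nonneg.2 h2) h3.1.le]
    · nlinarith [mul_nonneg (sub_nonneg.2 h2) (sub_nonneg.2 h3.2)]⟩, by fun_prop⟩
  c0 τ := Subtype.ext (by simp)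
  c1 τ := Subtype.ext (by simp)
  lo_pos τ := τ.2.1
  lo_c s τ := by
    have := s.2.1
    change (1 - (s : ℝ)) * τ.1 ≤ (1 - (s : ℝ)) * τ.1 + s
    linarith

/-- The heights of two points on the arm, the higher one first, as a space of parameters; a third
point has to stay below the lower one. -/
def P2 : Param where
  T := {a : ℝ × ℝ // 0 < a.2 ∧ a.2 < a.1 ∧ a.1 ≤ 1}
  lo a := a.1.2
  lo_cont := by fun_prop
  top := ⟨(1, 1 / 2), by norm_num⟩
  c := ⟨fun z => ⟨((1 - (z.1 : ℝ)) * z.2.1.1 + z.1, (1 - (z.1 : ℝ)) * z.2.1.2 + z.1 * (1 / 2)), by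
    have h1 := z.1.2.1
    have h2 := sub_nonneg.2 z.1.2.2
    obtain ⟨h3, h4, h5⟩ := z.2.2
    dsimp only
    have h6 : 0 < z.2.1.1 := h3.trans h4
    refine ⟨?_, ?_, ?_⟩
    · rcases h1.eq_or_lt with h | h
      · rw [← h]; linarith
      · nlinarith [mul_nonneg h2 h3.le]
    · rcases h1.eq_or_lt with h | h
      · rw [← h]; linarith
      · nlinarith [mul_nonneg h2 (sub_nonneg.2 h4.le)]
    · nlinarith [mul_nonneg h2 (sub_nonneg.2 h5)]⟩, by fun_prop⟩
  c0 τ := Subtype.ext (by simp)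
  c1 τ := Subtype.ext (by simp)
  lo_pos τ := τ.2.1
  lo_c s τ := by
    have := s.2.1
    change (1 - (s : ℝ)) * τ.1.2 ≤ (1 - (s : ℝ)) * τ.1.2 + s * (1 / 2)
    linarith

/-- The conclusion of van Kampen's theorem when passing from `A` to `U`. -/
def Step {X : Type} [TopologicalSpace X] (A U : Set X) : Prop :=
  PathConnectedSpace U ∧ ∃ N : ℕ, ∀ (a : A) (a' : U), (a' : X) = a →
      Nonempty (FundamentalGroup U a' ≃*
        Monoid.Coprod (FundamentalGroup A a) (FreeGroup (Fin N)))

/-- Gluing a piece to an open set of configurations. -/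
lemma step_piece [Finite V] (hnb : (Γ.neighborSet v).Nonempty) {n : ℕ} (P : Param)
    {M : Type} [TopologicalSpace M] {κ : M → ℝ} (hκ0 : ∀ q, 0 ≤ κ q) (hκ1 : ∀ q, κ q < 1)
    (hκ : Continuous κ) {F : Type} [TopologicalSpace F] [DiscreteTopology F] [Finite F]
    (eM : ContinuousMap.HomotopyEquiv M F) (A U : Set (UConf n (AG hv))) (hA : IsOpen A)
    (hpc : PathConnectedSpace A) (j : Piece hv P M κ → Fin n → AG hv)
    (hanti : ∀ e, StrictAnti (rk hv ∘ j e)) (hjc : ∀ k, Continuous fun e => j e k)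
    {Z : Type} [TopologicalSpace Z] (g : (Fin n → AG hv) → Z) (hg : Continuous g)
    (hgj : IsEmbedding fun e => g (j e)) (W : Set (Fin n → AG hv)) (hW : IsOpen W)
    (hr : range j = W)
    (hQ : ∀ e, umk ⟨j e, (hanti e).injective.of_comp⟩ ∈ A ↔ e.1.2.1.1.1.1 v < 1)
    (hU : ∀ f : Conf n (AG hv), umk f ∈ U ↔ umk f ∈ A ∨ ∃ h, umk h = umk f ∧ h.1 ∈ W) :
    Step A U := by
  let j' : Piece hv P M κ → Conf n (AG hv) := fun e => ⟨j e, (hanti e).injective.of_comp⟩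
  have hj'c : Continuous j' := Continuous.subtype_mk (continuous_pi hjc) _
  have hj' : IsOpenEmbedding j' := by
    refine ⟨IsEmbedding.of_comp hj'c (hg.comp continuous_subtype_val) hgj, ?_⟩
    have : range j' = Subtype.val ⁻¹' W := by
      rw [← hr]; ext f; constructor
      · rintro ⟨e, rfl⟩; exact ⟨e, rfl⟩
      · rintro ⟨e, he⟩; exact ⟨e, Subtype.ext he⟩
    rw [this]
    exact hW.preimage continuous_subtype_val
  obtain ⟨h1, h2, h3⟩ := piece_ok hv P hκ0 hκ1 hκ eM hnb (fun e => umk (j' e) ∈ A) hQ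
  refine vanKampenOn A U hA (fun e => umk (j' e)) (umk_openEmbedding j' hj'
    fun e e' s h => perm_eq_one (hanti e) (hanti e') h) ?_ hpc h1 h2 h3
  ext z
  obtain ⟨f, rfl⟩ := umk_surj z
  rw [hU]
  refine or_congr_right ⟨?_, ?_⟩
  · rintro ⟨e, he⟩
    exact ⟨j' e, he, hr ▸ ⟨e, rfl⟩⟩
  · rintro ⟨h, he, hW⟩
    rw [← hr] at hW
    obtain ⟨e, he'⟩ := hW
    exact ⟨e, (congrArg umk (Subtype.ext he') : umk (j' e) = umk h).trans he⟩

lemma eq_onArm {p : AG hv} (h : 0 < p.1.2) : onArm (vpt hv) p.1.2 p.2.1.1 p.2.1.2 = p :=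
  Subtype.ext (Prod.ext (arm_o h).symm rfl)

lemma onArm_cont {E : Type} [TopologicalSpace E] {f : E → ℝ} (hf : Continuous f)
    (h0 : ∀ e, 0 ≤ f e) (h1 : ∀ e, f e ≤ 1) :
    Continuous fun e => onArm (vpt hv) (f e) (h0 e) (h1 e) := by
  unfold onArm; fun_prop

lemma rk_onArm (t : ℝ) (h0 h1) : rk hv (onArm (vpt hv) t h0 h1) = t + 1 := rk_o rfl

/-- For configurations of two points a single piece is glued: the upper point on the arm and the
lower one below it on the arm or near `v`. -/
lemma step2 [Finite V] (hnb : (Γ.neighborSet v).Nonempty)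
    (hpc : PathConnectedSpace (A1 2 (vpt hv))) : Step (A1 2 (vpt hv)) univ := by
  refine step_piece hnb P1 (M := Unit) (κ := fun _ => 0) (fun _ => le_rfl) (fun _ => one_pos)
    continuous_const (ContinuousMap.HomotopyEquiv.refl Unit) _ _ A1_open hpc
    (fun e => ![onArm (vpt hv) e.1.1.1 e.1.1.2.1.le e.1.1.2.2, e.1.2.1]) ?_ ?_
    (Z := ℝ × AG hv × Unit) (fun f => ((f 0).1.2, f 1, ())) ?_ ?_
    {f | (f 1).1.2 < (f 0).1.2 ∧ 0 < (f 1).1.1.1 v} ?_ ?_ ?_ ?_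
  · intro e
    rw [Fin.strictAnti_iff_succ_lt]
    intro i; fin_cases i
    change rk hv e.1.2.1 < rk hv (onArm _ e.1.1.1 e.1.1.2.1.le e.1.1.2.2)
    rw [rk_onArm]
    exact add_lt_add_of_lt_of_le e.2.1 (xv_le _)
  · rw [Fin.forall_fin_two]
    refine ⟨onArm_cont (by fun_prop) (fun e => e.1.1.2.1.le) (fun e => e.1.1.2.2), ?_⟩
    change Continuous fun e : Piece hv P1 Unit (fun _ => 0) => e.1.2.1
    fun_prop
  · fun_prop
  · exact (IsEmbedding.subtypeVal.prodMap IsEmbedding.id).comp IsEmbedding.subtypeVal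
  · exact (isOpen_lt (arm_h_cont.comp (continuous_apply 1))
      (arm_h_cont.comp (continuous_apply 0))).inter
      (isOpen_lt continuous_const (arm_xv_cont.comp (continuous_apply 1)))
  · ext f; constructor
    · rintro ⟨e, rfl⟩
      exact e.2
    · rintro ⟨h1, h2⟩
      have h0 : 0 < (f 0).1.2 := (f 1).2.1.1.trans_lt h1
      refine ⟨⟨(⟨(f 0).1.2, h0, (f 0).2.1.2⟩, f 1, ()), h1, h2⟩, ?_⟩
      ext1 k; fin_cases k
      · exact eq_onArm h0
      · rfl
  · intro e
    rw [mem_A1, xv_lt (hv := hv)]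
    constructor
    · intro h h'
      exact absurd (@h 0 1 h'.symm) (by decide)
    · intro h a b hab
      fin_cases a <;> fin_cases b
      · rfl
      · exact absurd hab.symm h
      · exact absurd hab h
      · rfl
  · intro f
    simp only [mem_univ, true_iff]
    obtain ⟨g, hg, ha⟩ := exists_sorted f
    rw [← hg]
    by_cases hA : umk g ∈ A1 2 (vpt hv)
    · exact Or.inl hA
    · right
      refine ⟨g, rfl, ?_⟩
      have hx : (g.1 0).1.1 = (g.1 1).1.1 := by
        by_contra hne
        refine hA (mem_A1.2 fun a b hab => ?_)
        fin_cases a <;> fin_cases b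
        · rfl
        · exact absurd hab hne
        · exact absurd hab.symm hne
        · rfl
      have hne : g.1 0 ≠ g.1 1 := fun h => absurd (g.2 h) (by decide)
      obtain ⟨h0, h1⟩ := arm_coll hx hne
      have h01 := lt_of_le_of_ne (ha (Fin.zero_le 1)) fun h => hne (rk_inj h1 h0 h).symm
      dsimp only at h01
      rw [rk_o h0, rk_o h1] at h01
      refine ⟨by linarith, ?_⟩
      rw [h1, xv_vpt]; exact one_pos

variable (hv) in
/-- The configurations of three points which are not all on the arm. -/
def A2 : Set (UConf 3 (AG hv)) :=
  {z | ∃ f : Conf 3 (AG hv), umk f = z ∧ ∃ k, (f.1 k).1.1 ≠ vpt hv}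

lemma mem_A2 {f : Conf 3 (AG hv)} : umk f ∈ A2 hv ↔ ∃ k, (f.1 k).1.1 ≠ vpt hv := by
  constructor
  · rintro ⟨g, hg, k, hk⟩
    obtain ⟨s, hs⟩ := umk_eq.1 hg
    exact ⟨s k, by rw [hs] at hk; exact hk⟩
  · intro h; exact ⟨f, rfl, h⟩

lemma A2_open : IsOpen (A2 hv) := by
  have hq : IsQuotientMap (umk : Conf 3 (AG hv) → _) := umk_open.isQuotientMap
  rw [← hq.isOpen_preimage]
  have : umk ⁻¹' (A2 hv) = ⋃ k, {f : Conf 3 (AG hv) | (f.1 k).1.1 ≠ vpt hv} := by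
    ext f
    simp only [mem_preimage, mem_A2, mem_iUnion, mem_ofPred_eq]
  rw [this]
  exact isOpen_iUnion fun k => isOpen_ne_fun (arm_x_cont.comp (conf_cont k)) continuous_const

/-- The first piece for three points: two points share the arm with `v`, or the lower one of them is
near `v`, and the third point stays in the rest of the graph, farther away from `v`. -/
lemma step3a [Finite V] (hnb : (Γ.neighborSet v).Nonempty)
    (hpc : PathConnectedSpace (A1 3 (vpt hv))) {F : Type} [TopologicalSpace F] [DiscreteTopology F]
    [Finite F] (eM : ContinuousMap.HomotopyEquiv {x : realization Γ // x.1 v < 1} F) :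
    Step (A1 3 (vpt hv)) (A2 hv) := by
  have hκ : Continuous fun x : {x : realization Γ // x.1 v < 1} => x.1.1 v :=
    (continuous_apply v).comp (continuous_subtype_val.comp continuous_subtype_val)
  refine step_piece hnb P1 (κ := fun x : {x : realization Γ // x.1 v < 1} => x.1.1 v)
    (fun x => real_nonneg x.1.2 v) (fun x => x.2)
    hκ eM _ _ A1_open hpc
    (fun e => ![onArm (vpt hv) e.1.1.1 e.1.1.2.1.le e.1.1.2.2, e.1.2.1, toArm _ e.1.2.2.1]) ?_ ?_
    (Z := ℝ × AG hv × realization Γ) (fun f => ((f 0).1.2, f 1, (f 2).1.1)) ?_ ?_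
    {f | (f 1).1.2 < (f 0).1.2 ∧ (f 2).1.1.1 v < (f 1).1.1.1 v} ?_ ?_ ?_ ?_
  · intro e
    rw [Fin.strictAnti_iff_succ_lt]
    intro i; fin_cases i
    · change rk hv e.1.2.1 < rk hv (onArm _ e.1.1.1 e.1.1.2.1.le e.1.1.2.2)
      rw [rk_onArm]
      exact add_lt_add_of_lt_of_le e.2.1 (xv_le _)
    · exact add_lt_add_of_le_of_lt e.1.2.1.2.1.1 e.2.2
  · rw [Fin.forall_fin_succ, Fin.forall_fin_two]
    refine ⟨onArm_cont (by fun_prop) (fun e => e.1.1.2.1.le) (fun e => e.1.1.2.2), ?_, ?_⟩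
    · change Continuous fun e : Piece hv P1 {x : realization Γ // x.1 v < 1}
        (fun x => x.1.1 v) => e.1.2.1
      fun_prop
    · change Continuous fun e : Piece hv P1 {x : realization Γ // x.1 v < 1}
        (fun x => x.1.1 v) => toArm (vpt hv) e.1.2.2.1
      unfold toArm; fun_prop
  · fun_prop
  · exact (IsEmbedding.subtypeVal.prodMap (IsEmbedding.id.prodMap IsEmbedding.subtypeVal)).comp
      IsEmbedding.subtypeVal
  · exact (isOpen_lt (arm_h_cont.comp (continuous_apply 1))
      (arm_h_cont.comp (continuous_apply 0))).inter
      (isOpen_lt (arm_xv_cont.comp (continuous_apply 2)) (arm_xv_cont.comp (continuous_apply 1)))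
  · ext f; constructor
    · rintro ⟨e, rfl⟩
      exact e.2
    · rintro ⟨h1, h2⟩
      have h0 : 0 < (f 0).1.2 := (f 1).2.1.1.trans_lt h1
      have h3 : (f 2).1.1.1 v < 1 := h2.trans_le (xv_le _)
      refine ⟨⟨(⟨(f 0).1.2, h0, (f 0).2.1.2⟩, f 1, ⟨(f 2).1.1, h3⟩), h1, h2⟩, ?_⟩
      ext1 k; fin_cases k
      · exact eq_onArm h0
      · rfl
      · exact Subtype.ext (Prod.ext rfl (arm_h (xv_lt.1 h3)).symm)
  · intro e
    rw [mem_A1, xv_lt (hv := hv)]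
    constructor
    · intro h h'
      exact absurd (@h 0 1 h'.symm) (by decide)
    · intro h a b hab
      have h1 : vpt hv ≠ e.1.2.2.1 := (xv_lt.1 e.1.2.2.2).symm
      have h2 : e.1.2.1.1.1 ≠ e.1.2.2.1 := fun h => absurd e.2.2 (by rw [h]; exact lt_irrefl _)
      fin_cases a <;> fin_cases b
      · rfl
      · exact absurd hab.symm h
      · exact absurd hab h1
      · exact absurd hab h
      · rfl
      · exact absurd hab h2
      · exact absurd hab.symm h1
      · exact absurd hab.symm h2
      · rfl
  · intro f
    constructor
    · intro hf
      obtain ⟨g, hg, ha⟩ := exists_sorted f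
      rw [← hg] at hf ⊢
      by_cases hA : umk g ∈ A1 3 (vpt hv)
      · exact Or.inl hA
      · right
        refine ⟨g, rfl, ?_⟩
        obtain ⟨k, hk⟩ := mem_A2.1 hf
        have hA' := mt mem_A1.2 hA
        simp only [Function.Injective, not_forall] at hA'
        obtain ⟨a, b, hab, hne⟩ := hA'
        obtain ⟨ha0, hb0⟩ := arm_coll hab fun h => hne (g.2 h)
        -- the set of points on the arm is an initial segment of the sorted configuration
        have key : ∀ i j, i ≤ j → (g.1 j).1.1 = vpt hv → (g.1 i).1.1 = vpt hv := by
          intro i j hij hj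
          by_contra hi
          have h1 := rk_lt hi
          have h2 := ha hij
          dsimp only at h2
          rw [rk_o hj] at h2
          linarith [(g.1 j).2.1.1]
        have h2 : (g.1 2).1.1 ≠ vpt hv := fun h => hk (key k 2 (Fin.le_last k) h)
        have h1 : (g.1 1).1.1 = vpt hv := by
          by_contra h1
          have : ∀ c, (g.1 c).1.1 = vpt hv → c = 0 := by
            intro c hc
            fin_cases c
            · rfl
            · exact absurd hc h1
            · exact absurd hc h2
          exact hne ((this a ha0).trans (this b hb0).symm)
        have h0 := key 0 1 (Fin.zero_le _) h1
        have hne' : g.1 0 ≠ g.1 1 := fun h => absurd (g.2 h) (by decide)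
        have h01 := lt_of_le_of_ne (ha (Fin.zero_le 1)) fun h => hne' (rk_inj h1 h0 h).symm
        dsimp only at h01
        rw [rk_o h0, rk_o h1] at h01
        refine ⟨by linarith, ?_⟩
        rw [h1, xv_vpt]; exact xv_lt.2 h2
    · rintro (h | ⟨g, hg, h1, h2⟩)
      · rw [mem_A1] at h
        rw [mem_A2]
        by_contra hno
        push Not at hno
        exact absurd (h ((hno 0).trans (hno 1).symm)) (by decide)
      · rw [← hg, mem_A2]
        exact ⟨2, xv_lt.1 (h2.trans_le (xv_le _))⟩

/-- The second piece for three points: two points on the arm, the third one below them on the arm or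
near `v`. -/
lemma step3b [Finite V] (hnb : (Γ.neighborSet v).Nonempty)
    (hpc : PathConnectedSpace (A2 hv)) : Step (A2 hv) univ := by
  refine step_piece hnb P2 (M := Unit) (κ := fun _ => 0) (fun _ => le_rfl) (fun _ => one_pos)
    continuous_const (ContinuousMap.HomotopyEquiv.refl Unit) _ _ A2_open hpc
    (fun e => ![onArm (vpt hv) e.1.1.1.1 (e.1.1.2.1.trans e.1.1.2.2.1).le e.1.1.2.2.2,
      onArm (vpt hv) e.1.1.1.2 e.1.1.2.1.le (e.1.1.2.2.1.le.trans e.1.1.2.2.2), e.1.2.1]) ?_ ?_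
    (Z := (ℝ × ℝ) × AG hv × Unit) (fun f => (((f 0).1.2, (f 1).1.2), f 2, ())) ?_ ?_
    {f | (f 1).1.2 < (f 0).1.2 ∧ (f 2).1.2 < (f 1).1.2 ∧ 0 < (f 2).1.1.1 v} ?_ ?_ ?_ ?_
  · intro e
    rw [Fin.strictAnti_iff_succ_lt]
    intro i; fin_cases i
    · change rk hv (onArm _ e.1.1.1.2 e.1.1.2.1.le (e.1.1.2.2.1.le.trans e.1.1.2.2.2)) <
        rk hv (onArm _ e.1.1.1.1 (e.1.1.2.1.trans e.1.1.2.2.1).le e.1.1.2.2.2)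
      rw [rk_onArm, rk_onArm]
      exact add_lt_add_of_lt_of_le e.1.1.2.2.1 le_rfl
    · change rk hv e.1.2.1 <
        rk hv (onArm _ e.1.1.1.2 e.1.1.2.1.le (e.1.1.2.2.1.le.trans e.1.1.2.2.2))
      rw [rk_onArm]
      exact add_lt_add_of_lt_of_le e.2.1 (xv_le _)
  · rw [Fin.forall_fin_succ, Fin.forall_fin_two]
    refine ⟨onArm_cont (by fun_prop) (fun e => (e.1.1.2.1.trans e.1.1.2.2.1).le)
      (fun e => e.1.1.2.2.2), onArm_cont (by fun_prop) (fun e => e.1.1.2.1.le)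
      (fun e => e.1.1.2.2.1.le.trans e.1.1.2.2.2), ?_⟩
    change Continuous fun e : Piece hv P2 Unit (fun _ => 0) => e.1.2.1
    fun_prop
  · fun_prop
  · exact (IsEmbedding.subtypeVal.prodMap IsEmbedding.id).comp IsEmbedding.subtypeVal
  · exact (isOpen_lt (arm_h_cont.comp (continuous_apply 1))
      (arm_h_cont.comp (continuous_apply 0))).inter
      ((isOpen_lt (arm_h_cont.comp (continuous_apply 2))
        (arm_h_cont.comp (continuous_apply 1))).inter
      (isOpen_lt continuous_const (arm_xv_cont.comp (continuous_apply 2))))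
  · ext f; constructor
    · rintro ⟨e, rfl⟩
      exact ⟨e.1.1.2.2.1, e.2⟩
    · rintro ⟨h1, h2, h3⟩
      have h4 : 0 < (f 1).1.2 := (f 2).2.1.1.trans_lt h2
      have h0 : 0 < (f 0).1.2 := h4.trans h1
      refine ⟨⟨(⟨((f 0).1.2, (f 1).1.2), h4, h1, (f 0).2.1.2⟩, f 2, ()), h2, h3⟩, ?_⟩
      ext1 k; fin_cases k
      · exact eq_onArm h0
      · exact eq_onArm h4
      · rfl
  · intro e
    rw [mem_A2, xv_lt (hv := hv)]
    constructor
    · rintro ⟨k, hk⟩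
      fin_cases k
      · exact absurd rfl hk
      · exact absurd rfl hk
      · exact hk
    · intro h; exact ⟨2, h⟩
  · intro f
    simp only [mem_univ, true_iff]
    obtain ⟨g, hg, ha⟩ := exists_sorted f
    rw [← hg]
    by_cases hA : umk g ∈ A2 hv
    · exact Or.inl hA
    · right
      refine ⟨g, rfl, ?_⟩
      rw [mem_A2] at hA
      push Not at hA
      have hlt : ∀ a b, a < b → (g.1 b).1.2 < (g.1 a).1.2 := by
        intro a b hab
        have := lt_of_le_of_ne (ha hab.le) fun h => hab.ne (g.2 (rk_inj (hA b) (hA a) h)).symm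
        dsimp only at this
        rw [rk_o (hA a), rk_o (hA b)] at this
        linarith
      refine ⟨hlt 0 1 (by decide), hlt 1 2 (by decide), ?_⟩
      rw [hA 2, xv_vpt]; exact one_pos

end Cover

/-! ### The graph without `v` is homotopy equivalent to a finite discrete space -/

section Forest

variable {W : Type} [Fintype W] [DecidableEq W] (par : W → W) (depth : W → ℕ)

/-- The part of depth at most `D` of the forest in which `par` gives the parent of a vertex; the
roots are their own parents. -/
def forestSet (D : ℕ) : Set (W → ℝ) :=
  {x | ∃ b, depth b ≤ D ∧ ∃ s ∈ Icc (0 : ℝ) 1, x = (1 - s) • basisVec b + s • basisVec (par b)}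

/-- The linear map sending a basis vector `e_u` to `e_{f u}`. -/
def pushMap (f : W → W) (x : W → ℝ) : W → ℝ := ∑ u, x u • basisVec (f u)

lemma pushMap_cont (f : W → W) : Continuous (pushMap f) := by unfold pushMap; fun_prop

lemma pushMap_edge (f : W → W) (s t : ℝ) (a b : W) :
    pushMap f (s • basisVec a + t • basisVec b) = s • basisVec (f a) + t • basisVec (f b) := by
  have h : ∀ c, ∑ u, (basisVec c u) • (basisVec (f u) : W → ℝ) = basisVec (f c) := by
    intro c
    rw [Finset.sum_eq_single c]
    · rw [basis_self, one_smul]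
    · intro u _ hu; rw [basis_ne hu, zero_smul]
    · simp
  simp only [pushMap, Pi.add_apply, Pi.smul_apply, add_smul, Finset.sum_add_distrib, smul_assoc,
    ← Finset.smul_sum, h]

variable {par depth}

/-- Collapsing the deepest layer of the forest. -/
lemma forest_step (h0 : ∀ b, depth b = 0 → par b = b)
    (h1 : ∀ b, 0 < depth b → depth (par b) < depth b) (D : ℕ) :
    Nonempty (ContinuousMap.HomotopyEquiv
    (forestSet par depth (D + 1)) (forestSet par depth D)) := by
  let f : W → W := fun u => if depth u = D + 1 then par u else u
  have hle : ∀ b, depth (par b) ≤ depth b := fun b => by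
    rcases Nat.eq_zero_or_pos (depth b) with h | h
    · rw [h0 b h]
    · exact (h1 b h).le
  have hlow : ∀ x ∈ forestSet par depth D, pushMap f x = x := by
    rintro _ ⟨b, hb, s, hs, rfl⟩
    rw [pushMap_edge]
    have e1 : f b = b := if_neg (by omega)
    have e2 : f (par b) = par b := if_neg (by have := hle b; omega)
    rw [e1, e2]
  have hpar : ∀ b, depth b = D + 1 → f (par b) = par b ∧ depth (par b) ≤ D := fun b hb => by
    have := h1 b (by omega)
    exact ⟨if_neg (by omega), by omega⟩
  have hcol : ∀ b, depth b = D + 1 → ∀ s : ℝ,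
      pushMap f ((1 - s) • basisVec b + s • basisVec (par b)) = basisVec (par b) := by
    intro b hb s
    rw [pushMap_edge, (hpar b hb).1, show f b = par b from if_pos hb, ← add_smul]
    simp
  have hmem : ∀ x ∈ forestSet par depth (D + 1), pushMap f x ∈ forestSet par depth D := by
    rintro x ⟨b, hb, s, hs, rfl⟩
    rcases hb.lt_or_eq with hb | hb
    · have hx : (1 - s) • basisVec b + s • basisVec (par b) ∈ forestSet par depth D :=
        ⟨b, by omega, s, hs, rfl⟩
      rw [hlow _ hx]; exact hx
    · rw [hcol b hb]
      exact ⟨par b, (hpar b hb).2, 0, by simp, by simp⟩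
  have hH : ∀ (r : I), ∀ x ∈ forestSet par depth (D + 1),
      (1 - (r : ℝ)) • x + (r : ℝ) • pushMap f x ∈ forestSet par depth (D + 1) := by
    rintro r x ⟨b, hb, s, hs, rfl⟩
    have hr := r.2
    rcases hb.lt_or_eq with hb | hb
    · rw [hlow _ ⟨b, by omega, s, hs, rfl⟩, ← add_smul, sub_add_cancel, one_smul]
      exact ⟨b, hb.le, s, hs, rfl⟩
    · rw [hcol b hb]
      refine ⟨b, hb.le, 1 - (1 - r) * (1 - s), ⟨?_, ?_⟩, ?_⟩
      · nlinarith [hr.1, hr.2, hs.1, hs.2, mul_nonneg hr.1 (sub_nonneg.2 hs.2)]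
      · nlinarith [mul_nonneg (sub_nonneg.2 hr.2) (sub_nonneg.2 hs.2)]
      · ext w
        simp only [Pi.add_apply, Pi.smul_apply, smul_eq_mul]
        ring
  have hsub : forestSet par depth D ⊆ forestSet par depth (D + 1) := fun x ⟨b, hb, h⟩ =>
    ⟨b, by omega, h⟩
  refine ⟨⟨⟨fun x => ⟨pushMap f x.1, hmem x.1 x.2⟩, ?_⟩, ⟨fun x => ⟨x.1, hsub x.2⟩, by fun_prop⟩,
    ?_, ?_⟩⟩
  · exact ((pushMap_cont f).comp continuous_subtype_val).subtype_mk _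
  · refine ContinuousMap.Homotopic.symm
      ⟨⟨⟨fun z => ⟨(1 - (z.1 : ℝ)) • z.2.1 + (z.1 : ℝ) • pushMap f z.2.1, hH z.1 _ z.2.2⟩, ?_⟩,
        ?_, ?_⟩⟩
    · have := pushMap_cont f
      fun_prop
    · intro x; exact Subtype.ext (by simp)
    · intro x; exact Subtype.ext (by simp)
  · refine (?_ : (ContinuousMap.id (forestSet par depth D)) = _) ▸ ContinuousMap.Homotopic.refl _
    ext1 x
    exact Subtype.ext (hlow x.1 x.2).symm

lemma forest_equiv (h0 : ∀ b, depth b = 0 → par b = b)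
    (h1 : ∀ b, 0 < depth b → depth (par b) < depth b) (D : ℕ) :
    Nonempty (ContinuousMap.HomotopyEquiv
    (forestSet par depth D) (forestSet par depth 0)) := by
  induction D with
  | zero => exact ⟨.refl _⟩
  | succ D ih =>
    obtain ⟨e⟩ := ih
    obtain ⟨e'⟩ := forest_step h0 h1 D
    exact ⟨e'.trans e⟩

lemma forest_zero (h0 : ∀ b, depth b = 0 → par b = b) : Finite (forestSet par depth 0) := by
  refine Set.Finite.subset (Set.finite_range (basisVec : W → W → ℝ)) ?_
  rintro _ ⟨b, hb, s, hs, rfl⟩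
  refine ⟨b, ?_⟩
  rw [h0 b (by omega), ← add_smul]
  simp

end Forest

/-- A finite forest has a parent function. -/
lemma exists_parent {W : Type} {T : SimpleGraph W} (hT : T.IsAcyclic) :
    ∃ (par : W → W) (depth : W → ℕ), (∀ b, depth b = 0 → par b = b) ∧
      (∀ b, 0 < depth b → depth (par b) < depth b ∧ T.Adj b (par b)) ∧
      ∀ a b, T.Adj a b → par a = b ∨ par b = a := by
  let root : W → W := fun w => (T.connectedComponentMk w).out
  have hroot : ∀ w, T.Reachable w (root w) := fun w =>
    SimpleGraph.ConnectedComponent.exact (Quot.out_eq (T.connectedComponentMk w)).symm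
  have hadj : ∀ a b, T.Adj a b → root a = root b := fun a b h => by
    simp only [root, SimpleGraph.ConnectedComponent.sound h.reachable]
  choose path hpath using fun w => (hroot w).exists_isPath
  have huniq : ∀ a r (q : T.Walk a r), q.IsPath → r = root a →
      q.length = (path a).length ∧ q.snd = (path a).snd := by
    rintro a r q hq rfl
    have := congrArg Subtype.val ((hT.subsingleton_path _ _).elim ⟨q, hq⟩ ⟨path a, hpath a⟩)
    dsimp only at this
    rw [this]; exact ⟨rfl, rfl⟩
  refine ⟨fun w => (path w).snd, fun w => (path w).length, ?_, ?_, ?_⟩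
  · intro b hb
    have h1 : (path b).snd = root b := (path b).getVert_of_length_le (by dsimp only at hb; omega)
    exact h1.trans (SimpleGraph.Walk.eq_of_length_eq_zero hb).symm
  · intro b hb
    have hn : ¬ (path b).Nil := fun h => by
      exact hb.ne' (SimpleGraph.Walk.length_eq_zero_iff.2 h)
    have ha := (path b).adj_snd hn
    refine ⟨?_, ha⟩
    have := (huniq _ _ (path b).tail (hpath b).tail (hadj _ _ ha)).1
    have h2 := (path b).length_tail_add_one hn
    dsimp only
    omega
  · intro a b hab
    by_cases h : a ∈ (path b).support
    · right
      dsimp only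
      rw [← SimpleGraph.Walk.snd_takeUntil hab.ne (path b) h]
      have := congrArg Subtype.val ((hT.subsingleton_path _ _).elim ⟨(path b).takeUntil a h, (hpath b).takeUntil h⟩
        (SimpleGraph.Path.singleton hab.symm))
      dsimp only at this
      rw [this]; rfl
    · left
      have := (huniq _ _ (.cons hab (path b)) ((hpath b).cons h) (hadj _ _ hab).symm).2
      exact this.symm.trans (by simp)

/-- A graph all of whose subgraphs are not cycles is acyclic. -/
lemma acyclic_of {W : Type} {T : SimpleGraph W} (h : ∀ H : T.Subgraph, ¬ IsCycleSubgraph H) :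
    T.IsAcyclic := by
  intro u c hc
  refine h c.toSubgraph ⟨?_, c.toSubgraph_connected, fun w hw => ?_⟩
  · have hn : ¬ c.Nil := hc.not_nil
    exact ⟨s(u, c.snd), c.toSubgraph_adj_snd hn⟩
  · exact hc.ncard_neighborSet_toSubgraph_eq_two ((c.mem_verts_toSubgraph).1 hw)

/-- Extension of a function on the vertices other than `v` by zero. -/
def extZero {V : Type} (v : V) (y : {w : V | w ≠ v} → ℝ) : V → ℝ :=
  fun u => if h : u ≠ v then y ⟨u, h⟩ else 0

lemma extZero_v {V : Type} {v : V} (y : {w : V | w ≠ v} → ℝ) : extZero v y v = 0 := by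
  simp [extZero]

lemma extZero_w {V : Type} {v : V} (y : {w : V | w ≠ v} → ℝ) (w : {w : V | w ≠ v}) :
    extZero v y w = y w := by
  have : w.1 ≠ v := w.2
  simp [extZero, this]

lemma extZero_cont {V : Type} (v : V) : Continuous (extZero v) := by
  refine continuous_pi fun u => ?_
  by_cases h : u ≠ v
  · simp only [extZero, h, ne_eq, not_false_eq_true, dite_true]; fun_prop
  · simp only [extZero, h, dite_false]; fun_prop

/-- If `Γ` without `v` is a forest, then its realization without the point `v` is homotopy
equivalent to a finite discrete space. -/
lemma minus_equiv {V : Type} [Fintype V] [DecidableEq V] {Γ : SimpleGraph V} {v : V}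
    (hedge : ∀ u, ∃ w, Γ.Adj u w)
    (hT : (Γ.induce {w : V | w ≠ v}).IsAcyclic) :
    ∃ (F : Type) (_ : TopologicalSpace F), DiscreteTopology F ∧ Finite F ∧
      Nonempty (ContinuousMap.HomotopyEquiv {x : realization Γ // x.1 v < 1} F) := by
  obtain ⟨par, depth, h0, h1, h2⟩ := exists_parent hT
  let D := Finset.univ.sup depth
  have hD : ∀ b, depth b ≤ D := fun b => Finset.le_sup (Finset.mem_univ b)
  have hfin := forest_zero (depth := depth) h0
  refine ⟨forestSet par depth 0, inferInstance, inferInstance, hfin, ?_⟩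
  obtain ⟨e⟩ := forest_equiv (depth := depth) h0 (fun b hb => (h1 b hb).1) D
  suffices Nonempty (ContinuousMap.HomotopyEquiv {x : realization Γ // x.1 v < 1}
      (forestSet par depth D)) from ⟨this.some.trans e⟩
  have hbasis : ∀ (x : V → ℝ) (b : {w : V | w ≠ v}), x = basisVec b.1 →
      (fun w : {w : V | w ≠ v} => x w / (1 - x v)) = basisVec b := by
    rintro x b rfl
    ext w
    rw [basis_ne b.2.symm, sub_zero, div_one]
    simp [basisVec, Subtype.ext_iff]
  -- normalising a point of the graph other than `v`
  have hnorm : ∀ x ∈ realization Γ, x v < 1 →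
      (fun w : {w : V | w ≠ v} => x w / (1 - x v)) ∈ forestSet par depth D := by
    intro x hx hxv
    have hb : ∀ b : {w : V | w ≠ v}, basisVec b ∈ forestSet par depth D := fun b =>
      ⟨b, hD b, 0, by simp, by simp⟩
    rcases (real_nonneg hx v).eq_or_lt with hv | hv
    · obtain ⟨hn, a, b, hab, hs, hz⟩ := mem_real_iff.1 hx
      by_cases ha : a = v
      · rw [ha, ← hv] at hs
        have : x = basisVec b := real_eq_basis hx (by linarith)
        have hbv : b ∈ {w : V | w ≠ v} := fun h => hab.ne (ha.trans h.symm)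
        rw [hbasis x ⟨b, hbv⟩ this]; exact hb _
      by_cases hbv : b = v
      · rw [hbv, ← hv] at hs
        have : x = basisVec a := real_eq_basis hx (by linarith)
        rw [hbasis x ⟨a, ha⟩ this]; exact hb _
      have key : ∀ a b (ha : a ≠ v) (hb : b ≠ v), a ≠ b → x a + x b = 1 →
          (∀ u, u ≠ a → u ≠ b → x u = 0) → par ⟨a, ha⟩ = ⟨b, hb⟩ →
          (fun w : {w : V | w ≠ v} => x w / (1 - x v)) ∈ forestSet par depth D := by
        intro a b ha hb hab hs hz hp
        refine ⟨⟨a, ha⟩, hD _, x b, ⟨hn b, real_le_one hx b⟩, ?_⟩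
        rw [hp]
        ext w
        rw [← hv, sub_zero, div_one, show 1 - x b = x a by linarith]
        simp only [Pi.add_apply, Pi.smul_apply, smul_eq_mul, basisVec, Subtype.ext_iff]
        by_cases e1 : w.1 = a
        · simp [e1, hab]
        · by_cases e2 : w.1 = b
          · simp [e2, hab.symm]
          · simp [e1, e2, hz _ e1 e2]
      rcases h2 ⟨a, ha⟩ ⟨b, hbv⟩ hab with h | h
      · exact key a b ha hbv hab.ne hs hz h
      · exact key b a hbv ha hab.ne.symm (by linarith) (fun u h h' => hz u h' h) h
    · obtain ⟨u, hu, hs, hz⟩ := real_star hx hv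
      convert hb ⟨u, hu.ne.symm⟩ using 1
      ext w
      by_cases hw : w.1 = u
      · rw [show w = ⟨u, hu.ne.symm⟩ from Subtype.ext hw, basis_self]
        dsimp only
        rw [show 1 - x v = x u by linarith, div_self (by linarith)]
      · rw [basis_ne (fun h => hw (congrArg Subtype.val h)), hz w w.2 hw, zero_div]
  have hextv : ∀ y, extZero v y v = 0 := extZero_v
  have hextw : ∀ y (w : {w : V | w ≠ v}), extZero v y w = y w := extZero_w
  have hext_cont := extZero_cont v
  have hbe : ∀ b : {w : V | w ≠ v}, extZero v (basisVec b) = basisVec b.1 := by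
    intro b; ext u
    by_cases h : u = v
    · rw [h, hextv, basis_ne (Ne.symm b.2)]
    · rw [hextw _ ⟨u, h⟩]; simp [basisVec, Subtype.ext_iff]
  have hmem : ∀ y ∈ forestSet par depth D, extZero v y ∈ realization Γ := by
    rintro _ ⟨b, hb, s, hs, rfl⟩
    have : extZero v ((1 - s) • basisVec b + s • basisVec (par b)) =
        (1 - s) • basisVec b.1 + s • basisVec (par b).1 := by
      rw [← hbe, ← hbe]
      ext u
      by_cases h : u = v
      · subst h; simp [hextv]
      · simp [hextw _ ⟨u, h⟩]
    rw [this]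
    rcases Nat.eq_zero_or_pos (depth b) with h | h
    · rw [h0 b h, ← add_smul, sub_add_cancel, one_smul]
      obtain ⟨w, hw⟩ := hedge b
      exact basis_mem hw
    · have := edgePt_mem (Γ := Γ) (h1 b h).2 (s := 1 - s) ⟨by linarith [hs.2], by linarith [hs.1]⟩
      simpa [edgePt] using this
  have hcont : Continuous fun x : {x : realization Γ // x.1 v < 1} =>
      (fun w : {w : V | w ≠ v} => x.1.1 w / (1 - x.1.1 v)) := by
    have hc : ∀ u, Continuous fun x : {x : realization Γ // x.1 v < 1} => x.1.1 u := fun u =>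
      (continuous_apply u).comp (continuous_subtype_val.comp continuous_subtype_val)
    refine continuous_pi fun w => (hc w).div (continuous_const.sub (hc v)) fun x => ?_
    have := x.2; linarith
  have hline : ∀ z : I × {x : realization Γ // x.1 v < 1},
      (1 - (z.1 : ℝ)) • z.2.1.1 + (z.1 : ℝ) • extZero v (fun w : {w : V | w ≠ v} => z.2.1.1 w / (1 - z.2.1.1 v)) ∈
        realization Γ := by
    rintro ⟨r, ⟨x, hx⟩, hxv⟩
    dsimp only at hxv ⊢
    have h1' : (1 - x v) ≠ 0 := by linarith
    rcases (real_nonneg hx v).eq_or_lt with hv | hv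
    · have : extZero v (fun w : {w : V | w ≠ v} => x w / (1 - x v)) = x := by
        ext u
        by_cases h : u = v
        · rw [h, hextv, hv]
        · rw [hextw _ ⟨u, h⟩, ← hv, sub_zero, div_one]
      rw [this, ← add_smul, sub_add_cancel, one_smul]; exact hx
    · obtain ⟨u, hu, hs, hz⟩ := real_star hx hv
      have hm := hmem _ (hnorm x hx hxv)
      refine real_line hu (real_nonneg hx) (real_nonneg hm) hs ?_ hz ?_ r.2
      · rw [hextv, hextw _ ⟨u, hu.ne.symm⟩, zero_add]
        dsimp only
        rw [show 1 - x v = x u by linarith, div_self (by linarith)]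
      · intro w h h'
        rw [hextw _ ⟨w, h⟩]
        dsimp only
        rw [hz w h h', zero_div]
  refine ⟨⟨⟨fun x => ⟨_, hnorm x.1.1 x.1.2 x.2⟩, hcont.subtype_mk _⟩,
    ⟨fun y => ⟨⟨extZero v y.1, hmem _ y.2⟩, (hextv y.1).trans_lt one_pos⟩,
      ((hext_cont.comp continuous_subtype_val).subtype_mk _).subtype_mk _⟩, ?_, ?_⟩⟩
  · refine ContinuousMap.Homotopic.symm ⟨⟨⟨fun z => ⟨⟨_, hline z⟩, ?_⟩, ?_⟩, ?_, ?_⟩⟩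
    · have h1 := z.2.2
      have hr := z.1.2
      simp only [Pi.add_apply, Pi.smul_apply, smul_eq_mul, hextv, mul_zero, add_zero]
      nlinarith [real_nonneg z.2.1.2 v, hr.1, mul_nonneg hr.1 (real_nonneg z.2.1.2 v)]
    · have := hext_cont.comp hcont
      refine Continuous.subtype_mk (Continuous.subtype_mk ?_ _) _
      have h3 : Continuous fun z : I × {x : realization Γ // x.1 v < 1} =>
        extZero v (fun w : {w : V | w ≠ v} => z.2.1.1 w / (1 - z.2.1.1 v)) := this.comp continuous_snd
      fun_prop
    · intro x; exact Subtype.ext (Subtype.ext (by simp))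
    · intro x; exact Subtype.ext (Subtype.ext (by simp))
  · refine (?_ : (ContinuousMap.id (forestSet par depth D)) = _) ▸ ContinuousMap.Homotopic.refl _
    ext1 y
    refine Subtype.ext ?_
    ext w
    change y.1 w = extZero v y.1 w / (1 - extZero v y.1 v)
    rw [hextv, hextw, sub_zero, div_one]

/-! ### Path-connectedness of configuration spaces of graphs -/

section Slide

variable {X Y : Type} [TopologicalSpace X] [TopologicalSpace Y] {n : ℕ}

lemma umk_range {f g : Conf n X} (h : range f.1 = range g.1) : umk f = umk g := by
  refine umk_eq.2 ⟨(Equiv.ofInjective f.1 f.2).trans ((Equiv.setCongr h).trans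
    (Equiv.ofInjective g.1 g.2).symm), ?_⟩
  ext k
  simp only [Function.comp_apply, Equiv.trans_apply]
  rw [Equiv.apply_ofInjective_symm g.2]
  rfl

/-- Any point of a path-connected space can be occupied by moving a single point of a given
configuration: among the points of the configuration on a path towards `w`, the last one can
move to `w` freely. -/
lemma slide [T2Space X] [PathConnectedSpace X] (f : Conf (n + 1) X) (w : X) :
    ∃ g : Conf (n + 1) X, Joined (umk f) (umk g) ∧ g.1 0 = w ∧
      ∀ k, k ≠ 0 → g.1 k ∈ range f.1 := by
  obtain ⟨γ⟩ := PathConnectedSpace.joined (f.1 0) w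
  let K : Set I := γ ⁻¹' range f.1
  have hK : IsCompact K := ((finite_range f.1).isClosed.preimage γ.continuous).isCompact
  have hK0 : K.Nonempty := ⟨0, 0, γ.source.symm⟩
  obtain ⟨t, ⟨k, hk⟩, ht⟩ := hK.exists_isGreatest hK0
  have hmem : ∀ s : I, (t : ℝ) + s * (1 - t) ∈ I := fun s => by
    have h1 := t.2.1; have h2 := t.2.2; have h3 := s.2.1; have h4 := s.2.2
    constructor
    · nlinarith [mul_nonneg h3 (sub_nonneg.2 h2)]
    · nlinarith [mul_nonneg (sub_nonneg.2 h4) (sub_nonneg.2 h2)]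
  let p : I → X := fun s => γ ⟨(t : ℝ) + s * (1 - t), hmem s⟩
  have hp : Continuous p := γ.continuous.comp (Continuous.subtype_mk (by fun_prop) _)
  have hp0 : p 0 = f.1 k := by
    rw [hk]; simp [p]
  have hp1 : p 1 = w := by simp [p]
  have hinj : ∀ s, Function.Injective (Function.update f.1 k (p s)) := by
    intro s
    have key : ∀ a, a ≠ k → p s ≠ f.1 a := by
      intro a ha he
      have hle := ht (show (⟨(t : ℝ) + s * (1 - t), hmem s⟩ : I) ∈ K from ⟨a, he.symm⟩)
      have hge : t ≤ (⟨(t : ℝ) + s * (1 - t), hmem s⟩ : I) :=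
        Subtype.coe_le_coe.1 (le_add_of_nonneg_right (mul_nonneg s.2.1 (sub_nonneg.2 t.2.2)))
      have : p s = γ t := congrArg γ (le_antisymm hle hge)
      rw [this, ← hk] at he
      exact ha (f.2 he).symm
    intro a b hab
    by_cases ha : a = k <;> by_cases hb : b = k
    · rw [ha, hb]
    · subst ha; rw [Function.update_self, Function.update_of_ne hb] at hab
      exact absurd hab (key b hb)
    · subst hb; rw [Function.update_self, Function.update_of_ne ha] at hab
      exact absurd hab.symm (key a ha)
    · rw [Function.update_of_ne ha, Function.update_of_ne hb] at hab; exact f.2 hab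
  let q : I → Conf (n + 1) X := fun s => ⟨Function.update f.1 k (p s), hinj s⟩
  have hq : Continuous q := Continuous.subtype_mk (continuous_const.update k hp) _
  let s0 := Equiv.swap 0 k
  refine ⟨⟨(q 1).1 ∘ s0, (q 1).2.comp s0.injective⟩, ?_, ?_, ?_⟩
  · rw [umk_perm]
    refine ⟨⟨⟨fun s => umk (q s), umk_open.continuous.comp hq⟩, ?_, rfl⟩⟩
    change umk (q 0) = umk f
    congr 1
    exact Subtype.ext (by simp [q, hp0])
  · simp [q, s0, hp1]
  · intro a ha
    have : s0 a ≠ k := fun h => ha (s0.injective (h.trans (Equiv.swap_apply_left 0 k).symm))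
    simp only [q, Function.comp_apply, Function.update_of_ne this]
    exact mem_range_self _

/-- Adding a fixed point `w` to a configuration in a subspace missing `w`. -/
def addPt (i : Y → X) (hi : Function.Injective i) (w : X) (hw : w ∉ range i) :
    UConf n Y → UConf (n + 1) X :=
  Quot.lift (fun f => umk ⟨Fin.cons w (i ∘ f.1), Fin.cons_injective_iff.2
    ⟨fun h => hw (range_comp_subset_range _ _ h), hi.comp f.2⟩⟩) (by
    rintro f g ⟨s, h⟩
    refine umk_range ?_
    rw [Fin.range_cons, Fin.range_cons, range_comp i, range_comp i, h, s.surjective.range_comp])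

lemma addPt_umk (i : Y → X) (hi : Function.Injective i) (w : X) (hw : w ∉ range i)
    (f : Conf n Y) (g : Conf (n + 1) X) (h0 : g.1 0 = w) (h : ∀ k, g.1 (Fin.succ k) = i (f.1 k)) :
    addPt i hi w hw (umk f) = umk g := by
  change umk _ = _
  congr 1
  refine Subtype.ext (funext fun k => ?_)
  refine Fin.cases ?_ (fun k => ?_) k
  · exact h0.symm
  · exact (h k).symm

lemma addPt_continuous (i : Y → X) (hi : Function.Injective i) (hc : Continuous i) (w : X)
    (hw : w ∉ range i) : Continuous (addPt (n := n) i hi w hw) := by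
  rw [← umk_open.continuous_comp_iff]
  refine (umk_open (n := n + 1) (X := X)).continuous.comp (Continuous.subtype_mk
    (continuous_pi fun k => ?_) _)
  refine Fin.cases ?_ (fun k => ?_) k
  · exact continuous_const
  · exact hc.comp (conf_cont k)

/-- Every configuration is joined to one containing the point `w` and otherwise consisting of
points of the original one, if these belong to `Y`. -/
lemma slide_add [T2Space X] [PathConnectedSpace X] (i : Y → X) (hi : Function.Injective i) (w : X)
    (hw : w ∉ range i) (f : Conf (n + 1) X) (hf : ∀ k, f.1 k ≠ w → f.1 k ∈ range i) :
    ∃ g : Conf n Y, Joined (umk f) (addPt i hi w hw (umk g)) ∧ ∀ k, i (g.1 k) ∈ range f.1 := by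
  obtain ⟨g, h1, h2, h3⟩ := slide f w
  have h4 : ∀ k : Fin n, ∃ y, i y = g.1 k.succ := by
    intro k
    obtain ⟨a, ha⟩ := h3 _ (Fin.succ_ne_zero k)
    obtain ⟨y, hy⟩ := hf a (by
      rw [ha, ← h2]; exact fun h => Fin.succ_ne_zero k (g.2 h))
    exact ⟨y, hy.trans ha⟩
  choose y hy using h4
  refine ⟨⟨y, fun a b hab => ?_⟩, ?_, ?_⟩
  · exact Fin.succ_injective _ (g.2 (by rw [← hy, ← hy, hab]))
  · rwa [addPt_umk i hi w hw _ g h2 fun k => (hy k).symm]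
  · intro k
    change i (y k) ∈ _
    rw [hy]; exact h3 _ (Fin.succ_ne_zero k)

lemma pc_one [PathConnectedSpace X] : PathConnectedSpace (UConf 1 X) := by
  refine Function.Surjective.pathConnectedSpace
    (f := fun x : X => umk (⟨fun _ => x, Function.injective_of_subsingleton _⟩ : Conf 1 X)) ?_ ?_
  · intro z
    obtain ⟨f, rfl⟩ := umk_surj z
    refine ⟨f.1 0, ?_⟩
    exact congrArg umk (Subtype.ext (funext fun k => by rw [Subsingleton.elim k 0]))
  · exact umk_open.continuous.comp (Continuous.subtype_mk (by fun_prop) _)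

/-- Points other than `w` can be moved while one point is parked at `w`, and every configuration can
be brought into this form by sliding. -/
lemma pc_succ [T2Space X] [PathConnectedSpace X] (w : X)
    (h : PathConnectedSpace (UConf n {x : X // x ≠ w})) : PathConnectedSpace (UConf (n + 1) X) := by
  have hw : w ∉ range (Subtype.val : {x : X // x ≠ w} → X) := by simp
  have key := slide_add (n := n) (Subtype.val : {x : X // x ≠ w} → X) Subtype.val_injective w hw
  have hc := addPt_continuous (n := n) (Subtype.val : {x : X // x ≠ w} → X)
    Subtype.val_injective continuous_subtype_val w hw
  refine ⟨⟨addPt Subtype.val Subtype.val_injective w hw h.nonempty.some⟩, fun z z' => ?_⟩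
  obtain ⟨f, rfl⟩ := umk_surj z
  obtain ⟨f', rfl⟩ := umk_surj z'
  obtain ⟨g, hg, -⟩ := key f fun k hk => ⟨⟨_, hk⟩, rfl⟩
  obtain ⟨g', hg', -⟩ := key f' fun k hk => ⟨⟨_, hk⟩, rfl⟩
  obtain ⟨p⟩ := h.joined (umk g) (umk g')
  exact hg.trans (Joined.trans ⟨p.map hc⟩ hg'.symm)

end Slide

section GraphPC

variable {V : Type} [DecidableEq V] {Γ : SimpleGraph V} {w : V}

/-- The part of the realization where the `w`-coordinate lies in `T`. -/
def coordSet (Γ : SimpleGraph V) (w : V) (T : Set ℝ) : Set (V → ℝ) := {x | x ∈ realization Γ ∧ x w ∈ T}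

/-- If `w` is not a cut vertex, the sublevel sets of the `w`-coordinate are path-connected:
every point can move to a vertex other than `w` while its `w`-coordinate decreases. -/
lemma coordSet_pc (hedge : ∀ u, ∃ w, Γ.Adj u w) (hw : (Γ.induce {w}ᶜ).Connected) {T : Set ℝ}
    (hT : IsLowerSet T) (h0 : (0 : ℝ) ∈ T) : IsPathConnected (coordSet Γ w T) := by
  have hb : ∀ a, a ≠ w → basisVec a ∈ coordSet Γ w T := fun a ha => by
    obtain ⟨u, hu⟩ := hedge a
    exact ⟨basis_mem hu, by rwa [basis_ne ha.symm]⟩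
  have hseg : ∀ x a b, x ∈ coordSet Γ w T → Γ.Adj a b → x a + x b = 1 →
      (∀ u, u ≠ a → u ≠ b → x u = 0) → a ≠ w → JoinedIn (coordSet Γ w T) x (basisVec a) := by
    intro x a b hx hab hs hz ha
    refine JoinedIn.ofLine (f := fun t => (1 - t) • x + t • basisVec a) (by fun_prop)
      (by simp) (by simp) ?_
    rintro _ ⟨t, ht, rfl⟩
    refine ⟨real_line hab (real_nonneg hx.1) (basis_nonneg a) hs ?_ hz ?_ ht, hT ?_ hx.2⟩
    · rw [basis_self, basis_ne hab.ne.symm, add_zero]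
    · intro u h _; exact basis_ne h
    · simp only [Pi.add_apply, Pi.smul_apply, smul_eq_mul, basis_ne ha.symm, mul_zero, add_zero]
      exact mul_le_of_le_one_left (real_nonneg hx.1 w) (by linarith [ht.1])
  have hv : ∀ x ∈ coordSet Γ w T, ∃ a, a ≠ w ∧ JoinedIn (coordSet Γ w T) x (basisVec a) := by
    intro x hx
    obtain ⟨_, a, b, hab, hs, hz⟩ := mem_real_iff.1 hx.1
    by_cases ha : a = w
    · exact ⟨b, fun h => hab.ne (ha.trans h.symm), hseg x b a hx hab.symm (by linarith)
        (fun u h h' => hz u h' h) fun h => hab.ne (ha.trans h.symm)⟩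
    · exact ⟨a, ha, hseg x a b hx hab hs hz ha⟩
  have hvv : ∀ a b : ({w}ᶜ : Set V), JoinedIn (coordSet Γ w T) (basisVec a.1) (basisVec b.1) := by
    intro a b
    obtain ⟨p⟩ := hw.preconnected a b
    induction p with
    | @nil a => exact JoinedIn.refl (hb _ a.2)
    | @cons a c b hac p ih =>
      have hac' : Γ.Adj a.1 c.1 := hac
      refine JoinedIn.trans (JoinedIn.symm (hseg _ a.1 c.1 (hb c.1 c.2) hac' ?_ ?_ a.2)) ih
      · rw [basis_ne hac'.ne, basis_self, zero_add]
      · intro u _ h; exact basis_ne h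
  obtain ⟨a⟩ := hw.nonempty
  refine ⟨basisVec a.1, hb a.1 a.2, fun {x} hx => ?_⟩
  obtain ⟨b, hb, hj⟩ := hv x hx
  exact (hvv a ⟨b, hb⟩).trans hj.symm

/-- The configuration spaces of at most three points on a connected graph are path-connected. -/
lemma graph_pc [Finite V] [Nontrivial V] (hconn : Γ.Connected) :
    PathConnectedSpace (UConf 1 (realization Γ)) ∧ PathConnectedSpace (UConf 2 (realization Γ)) ∧
      PathConnectedSpace (UConf 3 (realization Γ)) := by
  have hedge : ∀ u, ∃ w, Γ.Adj u w := fun u => hconn.preconnected.exists_adj_of_nontrivial u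
  obtain ⟨w, hw⟩ := hconn.exists_connected_induce_compl_singleton_of_finite_nontrivial
  obtain ⟨u, hu⟩ := hedge w
  have hX : PathConnectedSpace (realization Γ) := by
    have := coordSet_pc hedge hw isLowerSet_univ (mem_univ _)
    rw [show coordSet Γ w univ = realization Γ by ext; simp [coordSet]] at this
    exact isPathConnected_iff_pathConnectedSpace.1 this
  have hwm := basis_mem hu
  let W : realization Γ := ⟨basisVec w, hwm⟩
  -- the realization without the vertex `w`
  let e : coordSet Γ w (Iio 1) ≃ₜ {x : realization Γ // x ≠ W} :=
    { toFun := fun x => ⟨⟨x.1, x.2.1⟩, (xv_lt (hv := hwm)).1 x.2.2⟩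
      invFun := fun x => ⟨x.1.1, x.1.2, (xv_lt (hv := hwm)).2 x.2⟩
      left_inv := fun x => rfl
      right_inv := fun x => rfl
      continuous_toFun := by fun_prop
      continuous_invFun := by fun_prop }
  have hY : PathConnectedSpace (coordSet Γ w (Iio 1)) :=
    isPathConnected_iff_pathConnectedSpace.1 (coordSet_pc hedge hw (isLowerSet_Iio 1) (mem_Iio.2 one_pos))
  have hY1 : PathConnectedSpace {x : realization Γ // x ≠ W} := e.surjective.pathConnectedSpace e.continuous
  refine ⟨pc_one, pc_succ W pc_one, pc_succ W ?_⟩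
  suffices PathConnectedSpace (UConf 2 (coordSet Γ w (Iio 1))) from
    (uhomeo 2 e).surjective.pathConnectedSpace (uhomeo 2 e).continuous
  have key : ∀ z z' : UConf 2 (coordSet Γ w (Iio 1)), Joined z z' := by
    intro z z'
    obtain ⟨f, rfl⟩ := umk_surj z
    obtain ⟨f', rfl⟩ := umk_surj z'
    obtain ⟨r, hr1, hr⟩ : ∃ r < (1 : ℝ), ∀ k, (f.1 k).1 w ≤ r ∧ (f'.1 k).1 w ≤ r ∧ 0 ≤ r := by
      refine ⟨max (max ((f.1 0).1 w) ((f.1 1).1 w)) (max ((f'.1 0).1 w) ((f'.1 1).1 w)), ?_, ?_⟩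
      · simp only [max_lt_iff]
        exact ⟨⟨(f.1 0).2.2, (f.1 1).2.2⟩, (f'.1 0).2.2, (f'.1 1).2.2⟩
      · have : 0 ≤ (f.1 0).1 w := real_nonneg (f.1 0).2.1 w
        intro k; fin_cases k <;> simp [this]
    have hr0 := (hr 0).2.2
    let i : coordSet Γ w (Iic r) → coordSet Γ w (Iio 1) := fun x => ⟨x.1, x.2.1, lt_of_le_of_lt x.2.2 hr1⟩
    have hi : Function.Injective i := fun a b h => Subtype.ext (Subtype.mk.inj h)
    have hic : Continuous i := by fun_prop
    have hc := edgePt_v hu.ne ((r + 1) / 2)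
    let c : coordSet Γ w (Iio 1) := ⟨edgePt w u ((r + 1) / 2),
      edgePt_mem hu ⟨by linarith, by linarith⟩, by rw [hc, mem_Iio]; linarith⟩
    have hci : c ∉ range i := by
      rintro ⟨x, hx⟩
      have h1 : x.1 w = (r + 1) / 2 := by rw [← hc]; exact congrFun (congrArg Subtype.val hx) w
      have h2 : x.1 w ≤ r := x.2.2
      linarith
    have hpc : PathConnectedSpace (UConf 1 (coordSet Γ w (Iic r))) := by
      have : PathConnectedSpace (coordSet Γ w (Iic r)) :=
        isPathConnected_iff_pathConnectedSpace.1 (coordSet_pc hedge hw (isLowerSet_Iic r) hr0)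
      exact pc_one
    obtain ⟨g, hg, -⟩ := slide_add i hi c hci f fun k _ => ⟨⟨_, (f.1 k).2.1, (hr k).1⟩, rfl⟩
    obtain ⟨g', hg', -⟩ := slide_add i hi c hci f' fun k _ => ⟨⟨_, (f'.1 k).2.1, (hr k).2.1⟩, rfl⟩
    obtain ⟨p⟩ := hpc.joined (umk g) (umk g')
    exact hg.trans (Joined.trans ⟨p.map (addPt_continuous i hi hic c hci)⟩ hg'.symm)
  refine ⟨?_, key⟩
  have h1 := edgePt_v hu.ne (1 / 2)
  refine ⟨umk ⟨![⟨edgePt w u (1 / 2), edgePt_mem hu (by norm_num), by rw [h1]; norm_num⟩,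
    ⟨basisVec u, basis_mem hu.symm, by rw [basis_ne hu.ne, mem_Iio]; exact one_pos⟩], ?_⟩⟩
  refine Fin.cons_injective_iff.2 ⟨?_, Function.injective_of_subsingleton _⟩
  rintro ⟨k, hk⟩
  have := congrFun (congrArg Subtype.val hk) w
  rw [Subsingleton.elim k 0] at this
  change basisVec u w = edgePt w u (1 / 2) w at this
  rw [h1, basis_ne hu.ne] at this
  norm_num at this

end GraphPC

/-! ### The graph with a path attached is the graph with an arm -/

section Model

variable {V : Type} {Γ : SimpleGraph V} {v : V} {m : ℕ}

/-- The position along the attached path, rescaled to `[0, 1]` and extended linearly. -/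
def colH (x : V ⊕ Fin m → ℝ) : ℝ := (∑ i : Fin m, ((i : ℝ) + 1) * x (Sum.inr i)) / m

lemma colH_elim (y : V → ℝ) : colH (Sum.elim y 0 : V ⊕ Fin m → ℝ) = 0 := by
  simp [colH]

/-- The `k`-th vertex along the attached path, starting with `v`. -/
def pathVert (v : V) (m k : ℕ) : V ⊕ Fin m :=
  if h : k - 1 < m ∧ 0 < k then Sum.inr ⟨k - 1, h.1⟩ else Sum.inl v

lemma pathVert_zero : pathVert v m 0 = Sum.inl v := by simp [pathVert]

lemma pathVert_succ {k : ℕ} (h : k < m) : pathVert v m (k + 1) = Sum.inr ⟨k, h⟩ := by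
  simp [pathVert, h]

lemma adj_inl {a b : V} (h : Γ.Adj a b) : (attachPath Γ v m).Adj (Sum.inl a) (Sum.inl b) := by
  rw [attachPath, SimpleGraph.fromEdgeSet_adj]
  exact ⟨Or.inl (Or.inl ⟨a, b, h, rfl⟩), by simpa using h.ne⟩

lemma adj_path {k : ℕ} (h : k < m) :
    (attachPath Γ v m).Adj (pathVert v m k) (pathVert v m (k + 1)) := by
  rw [attachPath, SimpleGraph.fromEdgeSet_adj, pathVert_succ h]
  rcases k with _ | k
  · rw [pathVert_zero]
    exact ⟨Or.inl (Or.inr ⟨h, rfl⟩), by simp⟩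
  · rw [pathVert_succ (by omega)]
    exact ⟨Or.inr ⟨_, _, rfl, rfl⟩, by simp⟩

lemma adj_cases {p q : V ⊕ Fin m} (h : (attachPath Γ v m).Adj p q) :
    (∃ a b, Γ.Adj a b ∧ p = Sum.inl a ∧ q = Sum.inl b) ∨
      ∃ k, k < m ∧ ((p = pathVert v m k ∧ q = pathVert v m (k + 1)) ∨
        (q = pathVert v m k ∧ p = pathVert v m (k + 1))) := by
  rw [attachPath, SimpleGraph.fromEdgeSet_adj] at h
  rcases h.1 with (⟨a, b, hab, he⟩ | ⟨h0, he⟩) | ⟨i, j, hij, he⟩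
  · rcases Sym2.eq_iff.1 he with ⟨h1, h2⟩ | ⟨h1, h2⟩
    · exact Or.inl ⟨a, b, hab, h1, h2⟩
    · exact Or.inl ⟨b, a, hab.symm, h1, h2⟩
  · refine Or.inr ⟨0, h0, ?_⟩
    rw [pathVert_zero, pathVert_succ h0]
    rcases Sym2.eq_iff.1 he with ⟨h1, h2⟩ | ⟨h1, h2⟩
    · exact Or.inl ⟨h1, h2⟩
    · exact Or.inr ⟨h2, h1⟩
  · have hi : pathVert v m (i + 1) = Sum.inr i := pathVert_succ i.2
    have hj : pathVert v m (i + 1 + 1) = Sum.inr j := by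
      rw [pathVert_succ (by omega)]; congr 1; exact Fin.ext hij
    refine Or.inr ⟨i + 1, by omega, ?_⟩
    rw [hi, hj]
    rcases Sym2.eq_iff.1 he with ⟨h1, h2⟩ | ⟨h1, h2⟩
    · exact Or.inl ⟨h1, h2⟩
    · exact Or.inr ⟨h2, h1⟩

variable [DecidableEq V]

/-- Collapsing the attached path to `v`, extended linearly. -/
def colR (v : V) (x : V ⊕ Fin m → ℝ) : V → ℝ :=
  fun u => x (Sum.inl u) + if u = v then ∑ i, x (Sum.inr i) else 0

/-- The point of the attached path dividing its edge number `k` in the ratio `s : 1 - s`. -/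
def pathPt (v : V) (m k : ℕ) (s : ℝ) : V ⊕ Fin m → ℝ :=
  (1 - s) • basisVec (pathVert v m k) + s • basisVec (pathVert v m (k + 1))

lemma pathPt_mem {k : ℕ} (h : k < m) {s : ℝ} (hs : s ∈ Icc (0 : ℝ) 1) :
    pathPt v m k s ∈ realization (attachPath Γ v m) := by
  have := edgePt_mem (adj_path (Γ := Γ) (v := v) h) (s := 1 - s)
    ⟨by linarith [hs.2], by linarith [hs.1]⟩
  simpa [edgePt, pathPt] using this

lemma basis_inl (a : V) : (basisVec (Sum.inl a) : V ⊕ Fin m → ℝ) = Sum.elim (basisVec a) 0 := by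
  ext (u | i) <;> simp [basisVec]

lemma elim_mem {y : V → ℝ} (hy : y ∈ realization Γ) :
    (Sum.elim y 0 : V ⊕ Fin m → ℝ) ∈ realization (attachPath Γ v m) := by
  obtain ⟨h0, a, b, hab, hs, hz⟩ := mem_real_iff.1 hy
  refine mem_real_iff.2 ⟨?_, _, _, adj_inl hab, hs, ?_⟩
  · rintro (u | i)
    · exact h0 u
    · exact le_rfl
  · rintro (u | i) h h'
    · exact hz u (fun e => h (by rw [e])) (fun e => h' (by rw [e]))
    · rfl

lemma model_cases {x : V ⊕ Fin m → ℝ} (hx : x ∈ realization (attachPath Γ v m)) :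
    (∃ y ∈ realization Γ, x = Sum.elim y 0) ∨
      ∃ k, k < m ∧ ∃ s ∈ Icc (0 : ℝ) 1, x = pathPt v m k s := by
  simp only [realization, mem_iUnion] at hx
  obtain ⟨p, q, hpq, s, t, hs, ht, hst, rfl⟩ := hx
  rcases adj_cases hpq with ⟨a, b, hab, rfl, rfl⟩ | ⟨k, hk, ⟨rfl, rfl⟩ | ⟨rfl, rfl⟩⟩
  · left
    refine ⟨s • basisVec a + t • basisVec b, ?_, ?_⟩
    · simp only [realization, mem_iUnion]
      exact ⟨a, b, hab, s, t, hs, ht, hst, rfl⟩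
    · rw [basis_inl, basis_inl]
      ext (u | i) <;> simp
  · exact Or.inr ⟨k, hk, t, ⟨ht, by linarith⟩, by rw [pathPt, ← hst, add_sub_cancel_right]⟩
  · exact Or.inr ⟨k, hk, s, ⟨hs, by linarith⟩, by
      rw [pathPt, ← hst, add_sub_cancel_left, add_comm]⟩

lemma colR_elim (y : V → ℝ) : colR v (Sum.elim y 0 : V ⊕ Fin m → ℝ) = y := by
  ext u; simp [colR]

lemma colR_vert {k : ℕ} (h : k ≤ m) : colR v (basisVec (pathVert v m k)) = basisVec v := by
  rcases k with _ | k
  · rw [pathVert_zero, basis_inl, colR_elim]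
  · rw [pathVert_succ h]
    ext u; simp [colR, basisVec]

lemma colH_vert {k : ℕ} (h : k ≤ m) : colH (basisVec (pathVert v m k)) = k / m := by
  rcases k with _ | k
  · rw [pathVert_zero, basis_inl, colH_elim]; simp
  · rw [pathVert_succ h]
    simp only [colH, basisVec, Sum.inr.injEq, mul_ite, mul_one, mul_zero, Finset.sum_ite_eq',
      Finset.mem_univ, if_true]
    push_cast; rfl

lemma colR_path {k : ℕ} (h : k < m) (s : ℝ) : colR v (pathPt v m k s) = basisVec v := by
  have h1 : ∀ (a b : ℝ) (x y : V ⊕ Fin m → ℝ), colR v (a • x + b • y) = a • colR v x + b • colR v y := by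
    intro a b x y
    ext u
    simp only [colR, Pi.add_apply, Pi.smul_apply, smul_eq_mul, Finset.sum_add_distrib,
      ← Finset.mul_sum]
    split_ifs <;> ring
  rw [pathPt, h1, colR_vert h.le, colR_vert h, ← add_smul, sub_add_cancel, one_smul]

lemma colH_path {k : ℕ} (h : k < m) (s : ℝ) : colH (pathPt v m k s) = (k + s) / m := by
  have h1 : ∀ (a b : ℝ) (x y : V ⊕ Fin m → ℝ), colH (a • x + b • y) = a * colH x + b * colH y := by
    intro a b x y
    simp only [colH, Pi.add_apply, Pi.smul_apply, smul_eq_mul, mul_add, Finset.sum_add_distrib,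
      add_div, ← mul_div_assoc, Finset.mul_sum]
    congr 3 <;> exact funext fun i => by ring
  rw [pathPt, h1, colH_vert h.le, colH_vert h]
  push_cast; ring

lemma real_compact {W : Type} [Finite W] [DecidableEq W] (G : SimpleGraph W) :
    IsCompact (realization G) := by
  unfold realization
  refine isCompact_iUnion fun a => isCompact_iUnion fun b => isCompact_iUnion fun _ => ?_
  rw [segment_eq_image]
  exact isCompact_Icc.image (by fun_prop)

/-- The realization of the graph with a path attached at `v` is the realization of the graph
with an arm attached at `v`. -/
lemma model [Finite V] (hv : basisVec v ∈ realization Γ) (hm : 1 ≤ m) :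
    Nonempty (realization (attachPath Γ v m) ≃ₜ AG hv) := by
  have hm0 : (0 : ℝ) < m := by exact_mod_cast hm
  have hR : ∀ x ∈ realization (attachPath Γ v m), colR v x ∈ realization Γ := by
    intro x hx
    rcases model_cases hx with ⟨y, hy, rfl⟩ | ⟨k, hk, s, hs, rfl⟩
    · rwa [colR_elim]
    · rwa [colR_path hk]
  have hA : ∀ x (hx : x ∈ realization (attachPath Γ v m)),
      colH x ∈ Icc (0 : ℝ) 1 ∧ (colH x = 0 ∨ (⟨colR v x, hR x hx⟩ : realization Γ) = vpt hv) := by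
    intro x hx
    rcases model_cases hx with ⟨y, hy, rfl⟩ | ⟨k, hk, s, hs, rfl⟩
    · rw [colH_elim]; simp
    · have h1 : (k : ℝ) + 1 ≤ m := by exact_mod_cast hk
      refine ⟨?_, Or.inr (Subtype.ext (colR_path hk s))⟩
      rw [colH_path hk]
      exact ⟨div_nonneg (add_nonneg k.cast_nonneg hs.1) hm0.le,
        (div_le_one hm0).2 (by linarith [hs.2])⟩
  let f : realization (attachPath Γ v m) → AG hv := fun x => ⟨(⟨colR v x.1, hR x.1 x.2⟩, colH x.1), hA x.1 x.2⟩
  have hf : Continuous f := by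
    refine Continuous.subtype_mk (Continuous.prodMk (Continuous.subtype_mk ?_ _) ?_) _
    · refine continuous_pi fun u => ?_
      unfold colR
      have hc : ∀ p, Continuous fun x : realization (attachPath Γ v m) => x.1 p := fun p =>
        (continuous_apply p).comp continuous_subtype_val
      split_ifs
      · exact (hc _).add (continuous_finsetSum _ fun i _ => hc _)
      · exact (hc _).add continuous_const
    · unfold colH
      have hc : ∀ p, Continuous fun x : realization (attachPath Γ v m) => x.1 p := fun p =>
        (continuous_apply p).comp continuous_subtype_val
      exact (continuous_finsetSum _ fun i _ => continuous_const.mul (hc _)).div_const _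
  -- the part of the path above height zero determines its points
  have hpath : ∀ k k' : ℕ, k < m → k' < m → k ≤ k' → ∀ s ∈ Icc (0 : ℝ) 1, ∀ s' ∈ Icc (0 : ℝ) 1,
      (k : ℝ) + s = k' + s' → pathPt v m k s = pathPt v m k' s' := by
    intro k k' hk hk' hkk s hs s' hs' he
    rcases hkk.eq_or_lt with rfl | hlt
    · rw [add_left_cancel he]
    · have h1 : (k : ℝ) + 1 ≤ k' := by exact_mod_cast hlt
      have h2 : (k' : ℝ) = (k + 1 : ℕ) := by push_cast; linarith [hs.2, hs'.1]
      obtain rfl : k' = k + 1 := by exact_mod_cast h2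
      push_cast at he
      obtain rfl : s = 1 := by linarith [hs.2, hs'.1]
      obtain rfl : s' = 0 := by linarith
      simp [pathPt]
  have hzero : ∀ x ∈ realization (attachPath Γ v m), colH x = 0 → x = Sum.elim (colR v x) 0 := by
    intro x hx h
    rcases model_cases hx with ⟨y, hy, rfl⟩ | ⟨k, hk, s, hs, rfl⟩
    · rw [colR_elim]
    · rw [colR_path hk]
      rw [colH_path hk, div_eq_zero_iff] at h
      have h' := h.resolve_right hm0.ne'
      have hk0 : (0 : ℝ) ≤ k := k.cast_nonneg
      obtain rfl : s = 0 := by linarith [hs.1]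
      obtain rfl : k = 0 := by
        have : (k : ℝ) = 0 := by linarith
        exact_mod_cast this
      simp [pathPt, pathVert_zero, basis_inl]
  have hinj : Function.Injective f := by
    rintro ⟨x, hx⟩ ⟨y, hy⟩ hxy
    have h1 : colR v x = colR v y := congrArg (fun p : AG hv => p.1.1.1) hxy
    have h2 : colH x = colH y := congrArg (fun p : AG hv => p.1.2) hxy
    refine Subtype.ext ?_
    change x = y
    by_cases h : colH x = 0
    · rw [hzero x hx h, hzero y hy (h2.symm.trans h), h1]
    · rcases model_cases hx with ⟨x, _, rfl⟩ | ⟨k, hk, s, hs, rfl⟩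
      · exact absurd (colH_elim x) h
      rcases model_cases hy with ⟨y, _, rfl⟩ | ⟨k', hk', s', hs', rfl⟩
      · exact absurd (h2.trans (colH_elim y)) h
      rw [colH_path hk, colH_path hk', div_left_inj' hm0.ne'] at h2
      rcases le_total k k' with hkk | hkk
      · exact hpath k k' hk hk' hkk s hs s' hs' h2
      · exact (hpath k' k hk' hk hkk s' hs' s hs h2.symm).symm
  have hsurj : Function.Surjective f := by
    rintro ⟨⟨y, t⟩, ⟨ht0, ht1⟩, h⟩
    dsimp only at ht0 ht1 h
    rcases h with rfl | rfl
    · exact ⟨⟨Sum.elim y.1 0, elim_mem y.2⟩,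
        Subtype.ext (Prod.ext (Subtype.ext (colR_elim y.1)) (colH_elim y.1))⟩
    · obtain ⟨k, hk, s, hs, he⟩ : ∃ k, k < m ∧ ∃ s ∈ Icc (0 : ℝ) 1, (k : ℝ) + s = m * t := by
        rcases ht1.eq_or_lt with rfl | ht
        · refine ⟨m - 1, by omega, 1, by simp, ?_⟩
          rw [Nat.cast_sub hm]; simp
        · have hmt : 0 ≤ m * t := mul_nonneg hm0.le ht0
          refine ⟨⌊m * t⌋₊, (Nat.floor_lt hmt).2 (mul_lt_of_lt_one_right hm0 ht), m * t - ⌊m * t⌋₊,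
            ⟨sub_nonneg.2 (Nat.floor_le hmt), by linarith [Nat.lt_floor_add_one (m * t)]⟩, by ring⟩
      refine ⟨⟨_, pathPt_mem hk hs⟩,
        Subtype.ext (Prod.ext (Subtype.ext (colR_path hk s)) ((colH_path hk s).trans ?_))⟩
      rw [he, mul_div_cancel_left₀ _ hm0.ne']
  have : CompactSpace (realization (attachPath Γ v m)) :=
    isCompact_iff_compactSpace.1 (real_compact _)
  exact ⟨hf.homeoOfEquivCompactToT2 (f := Equiv.ofBijective f ⟨hinj, hsurj⟩)⟩

end Model

/-! ### Assembling the free product decomposition -/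

/-- The fundamental group of `Y` is that of `X` up to a free factor of finite rank. -/
def FreeExt (Y X : Type) [TopologicalSpace X] [TopologicalSpace Y] : Prop :=
  ∃ N : ℕ, ∀ (y : Y) (x : X), Nonempty (FundamentalGroup Y y ≃*
    Monoid.Coprod (FundamentalGroup X x) (FreeGroup (Fin N)))

lemma FreeExt.of_equiv {X Y : Type} [TopologicalSpace X] [TopologicalSpace Y] [PathConnectedSpace X]
    (e : ContinuousMap.HomotopyEquiv Y X) : FreeExt Y X := by
  refine ⟨0, fun y x => ?_⟩
  obtain ⟨g⟩ := fgEquiv e y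
  exact ⟨(g.trans (FundamentalGroup.fundamentalGroupMulEquivOfPathConnected _ x)).trans
    ((MulEquiv.coprodPUnit.{0, 0} _).symm.trans (MulEquiv.coprodCongr (MulEquiv.refl _) (MulEquiv.ofUnique)))⟩

lemma freeGroup_add (a b : ℕ) : Nonempty (Monoid.Coprod (FreeGroup (Fin a)) (FreeGroup (Fin b)) ≃*
    FreeGroup (Fin (a + b))) := by
  let e : Monoid.Coprod (FreeGroup (Fin a)) (FreeGroup (Fin b)) ≃* FreeGroup (Fin a ⊕ Fin b) :=
    MonoidHom.toMulEquiv
      (Monoid.Coprod.lift (FreeGroup.map Sum.inl) (FreeGroup.map Sum.inr))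
      (FreeGroup.lift (Sum.elim (fun i => Monoid.Coprod.inl (.of i))
        fun i => Monoid.Coprod.inr (.of i)))
      (by ext <;> simp) (by ext (i | i) <;> simp)
  exact ⟨e.trans (FreeGroup.freeGroupCongr finSumFinEquiv)⟩

lemma FreeExt.trans {X Y Z : Type} [TopologicalSpace X] [TopologicalSpace Y] [TopologicalSpace Z]
    [Nonempty Y] (h : FreeExt Z Y) (h' : FreeExt Y X) : FreeExt Z X := by
  obtain ⟨a, ha⟩ := h
  obtain ⟨b, hb⟩ := h'
  refine ⟨b + a, fun z x => ?_⟩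
  obtain ⟨y⟩ := ‹Nonempty Y›
  obtain ⟨f⟩ := ha z y
  obtain ⟨g⟩ := hb y x
  obtain ⟨k⟩ := freeGroup_add b a
  exact ⟨((f.trans (MulEquiv.coprodCongr g (MulEquiv.refl _))).trans (MulEquiv.coprodAssoc _ _ _)).trans
    (MulEquiv.coprodCongr (MulEquiv.refl _) k)⟩

lemma Step.freeExt {X : Type} [TopologicalSpace X] {A U : Set X} (h : Step A U) (hAU : A ⊆ U)
    [PathConnectedSpace A] : FreeExt U A := by
  obtain ⟨hU, N, h⟩ := h
  refine ⟨N, fun y x => ?_⟩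
  obtain ⟨f⟩ := h x ⟨x, hAU x.2⟩ rfl
  exact ⟨(FundamentalGroup.fundamentalGroupMulEquivOfPathConnected _ _).trans f⟩

/-- Let `Γ'` be obtained from the finite connected simple graph `Γ` by
attaching a path of length `m ≥ 1` at a vertex `v` of degree at least 2, and let
`n ∈ {1,2,3}`.  If the graph obtained from `Γ` by deleting `v` (and all incident edges) has
no cycle subgraph (equivalently, every connected component of it contains no cycle), then
there is `N ≥ 0` with `B_n(Γ') ≅ B_n(Γ) ∗ F_N`. -/
theorem braidSmallN_attachPath_free_product
    (V : Type) [Fintype V] [DecidableEq V] (Γ : SimpleGraph V)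
    (hconn : Γ.Connected) (v : V) (hdeg : 2 ≤ (Γ.neighborSet v).ncard)
    (m : ℕ) (hm : 1 ≤ m)
    (n : ℕ) (hn : n = 1 ∨ n = 2 ∨ n = 3)
    (hforest : ∀ H : (Γ.induce {w : V | w ≠ v}).Subgraph, ¬ IsCycleSubgraph H) :
    ∃ N : ℕ,
      ∀ (x' : UConf n ↥(realization (attachPath Γ v m)))
        (x : UConf n ↥(realization Γ)),
        Nonempty
          (FundamentalGroup (UConf n ↥(realization (attachPath Γ v m))) x' ≃*
            Monoid.Coprod (FundamentalGroup (UConf n ↥(realization Γ)) x)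
              (FreeGroup (Fin N))) := by
  have hfin := Set.toFinite (Γ.neighborSet v)
  have hnb : (Γ.neighborSet v).Nonempty := by
    rw [← Set.ncard_pos hfin]; omega
  obtain ⟨u, hu⟩ := hnb
  have : Nontrivial V := ⟨v, u, Γ.ne_of_adj hu⟩
  have hedge : ∀ u, ∃ w, Γ.Adj u w := fun u => hconn.preconnected.exists_adj_of_nontrivial u
  have hv : basisVec v ∈ realization Γ := basis_mem hu
  have hnb : (Γ.neighborSet v).Nonempty := ⟨u, hu⟩
  obtain ⟨hp1, hp2, hp3⟩ := graph_pc hconn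
  obtain ⟨h⟩ := model hv hm
  suffices hmain : PathConnectedSpace (UConf n (realization Γ)) ∧
      (PathConnectedSpace (A1 n (vpt hv)) → PathConnectedSpace (univ : Set (UConf n (AG hv))) ∧
        FreeExt (univ : Set (UConf n (AG hv))) (A1 n (vpt hv))) by
    obtain ⟨hX, hmain⟩ := hmain
    have hA := pathConnected_of_equiv (A1equiv n (vpt hv)) hX
    obtain ⟨hU, hUA⟩ := hmain hA
    have hUne := hU.nonempty
    have hAne := hA.nonempty
    exact (FreeExt.of_equiv ((uhomeo n h).trans (Homeomorph.Set.univ _).symm).toHomotopyEquiv).trans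
      (hUA.trans (FreeExt.of_equiv (A1equiv n (vpt hv))))
  rcases hn with rfl | rfl | rfl
  · refine ⟨hp1, fun hA => ?_⟩
    have hA1 : A1 1 (vpt hv) = univ := by
      refine eq_univ_of_forall fun z => ?_
      obtain ⟨f, rfl⟩ := umk_surj z
      exact mem_A1.2 (Function.injective_of_subsingleton _)
    rw [hA1] at hA ⊢
    exact ⟨hA, FreeExt.of_equiv (ContinuousMap.HomotopyEquiv.refl _)⟩
  · refine ⟨hp2, fun hA => ?_⟩
    have hs := step2 hnb hA
    exact ⟨hs.1, hs.freeExt (subset_univ _)⟩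
  · refine ⟨hp3, fun hA => ?_⟩
    obtain ⟨F, _, _, _, ⟨eM⟩⟩ := minus_equiv hedge (acyclic_of hforest)
    have hs := step3a hnb hA eM
    have hA2 := hs.1
    have hs' := step3b hnb hA2
    have hsub : A1 3 (vpt hv) ⊆ A2 hv := by
      intro z hz
      obtain ⟨f, rfl⟩ := umk_surj z
      have hi := mem_A1.1 hz
      refine mem_A2.2 ?_
      by_contra! hc
      have := hi ((hc 0).trans (hc 1).symm)
      exact absurd this (by decide)
    have hne := hA2.nonempty
    exact ⟨hs'.1, (hs'.freeExt (subset_univ _)).trans (hs.freeExt hsub)⟩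

end GraphBraid
end
end

section
/- Let Γ = (T, ℓ) be a normal bunch of grapes (with ℓ(v) ≥ 1 at every degree-2 vertex of T). Two vertex-disjoint edges e₁, e₂ of Γ are NOT separable if and only if there is a vertex x of T such that either (a) e₁ and e₂ lie in two distinct grapes attached at x, or (b) after possibly swapping e₁ and e₂, e₁ is an edge of the stem T incident to x and e₂ lies in a grape attached at x. -/
/-!
A free vertex of a grape has degree two in `Γ`, so a leafless subgraph containing an edge of a
grape at `x` contains both edges of `Γ` at each free vertex of that edge, and hence contains `x`
(`mem_verts_of_grapeEdge`). In each configuration listed in the theorem both leafless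
subgraphs would contain `x`, so they cannot be disjoint.

Conversely, for a set `C` of stem vertices let `Γ_C` be the part of `Γ` lying over `C`. It is
leafless as soon as every vertex of `C` either carries a grape or has at most one stem neighbour
outside `C` (`isLeafless_partOver`): a vertex without grapes has stem degree `0` or at least `3`, so
losing one neighbour leaves it with degree different from one. Two disjoint edges in none
of the listed configurations are therefore separated by `Γ_C` and `Γ_D` for the following disjoint `C`, `D`:
* a grape edge at `x` and an edge not over `x` (a stem edge not incident to `x`, or a grape edge
  at another vertex): `{x}` and its complement
  (outside `{x}ᶜ` there is only `x`, and `x` itself carries a grape);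
* two stem edges: the two sides of a bridge of `T` between them (`exists_cut`); only one edge
  crosses such a cut, so every vertex has at most one neighbour on the other side.
-/

open scoped Classical

noncomputable section

namespace GraphBraid

/-- The vertex type of a bunch of grapes over a stem with vertex type `VT`:
the stem vertices together with, for each vertex `v` and each of the `ℓ v` grapes at `v`,
two new vertices completing a triangle at `v`. -/
def GrapeVert (VT : Type) (ℓ : VT → ℕ) : Type :=
  VT ⊕ (Σ v : VT, Fin (ℓ v) × Fin 2)

instance (VT : Type) [Fintype VT] [DecidableEq VT] (ℓ : VT → ℕ) : Fintype (GrapeVert VT ℓ) := by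
  unfold GrapeVert; infer_instance

instance (VT : Type) [DecidableEq VT] (ℓ : VT → ℕ) : DecidableEq (GrapeVert VT ℓ) := by
  unfold GrapeVert; infer_instance

/-- The stem vertex underlying a vertex of the bunch of grapes. -/
def stemOf {VT : Type} {ℓ : VT → ℕ} : GrapeVert VT ℓ → VT :=
  Sum.elim id (fun p => p.1)

/-- The bunch of grapes `Γ = (T, ℓ)`: the graph obtained from the stem `T` by attaching
`ℓ v` triangles (grapes) at each vertex `v` of `T`. -/
def bunchOfGrapes {VT : Type} (T : SimpleGraph VT) (ℓ : VT → ℕ) :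
    SimpleGraph (GrapeVert VT ℓ) :=
  SimpleGraph.fromEdgeSet
    ({e | ∃ u v : VT, T.Adj u v ∧ e = s(Sum.inl u, Sum.inl v)} ∪
     {e | ∃ (v : VT) (i : Fin (ℓ v)) (j : Fin 2), e = s(Sum.inl v, Sum.inr ⟨v, (i, j)⟩)} ∪
     {e | ∃ (v : VT) (i : Fin (ℓ v)), e = s(Sum.inr ⟨v, (i, 0)⟩, Sum.inr ⟨v, (i, 1)⟩)})

/-- A bunch of grapes is normal when at least two distinct stem vertices carry a grape and
every leaf of the stem carries a grape; following the standing assumption, every degree-2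
stem vertex also carries a grape.  The stem is required to be a finite tree. -/
def IsNormalGrapes {VT : Type} (T : SimpleGraph VT) (ℓ : VT → ℕ) : Prop :=
  T.IsTree ∧
  (∃ v w : VT, v ≠ w ∧ 1 ≤ ℓ v ∧ 1 ≤ ℓ w) ∧
  (∀ v : VT, (T.neighborSet v).ncard = 1 → 1 ≤ ℓ v) ∧
  (∀ v : VT, (T.neighborSet v).ncard = 2 → 1 ≤ ℓ v)

/-- Membership in the side of the edge `{a,b}` of the stem containing `a`: a vertex of the
bunch of grapes lies in the `t`-component `Γ_{t,1}` (for `t = {a,b}`) when its stem vertex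
is reachable from `a` after deleting the edge `{a,b}` from `T`. -/
def inSide {VT : Type} (T : SimpleGraph VT) (ℓ : VT → ℕ) (a b : VT)
    (x : GrapeVert VT ℓ) : Prop :=
  (T.deleteEdges {s(a, b)}).Reachable a (stemOf x)



/-- A subgraph is leafless when no vertex has degree one inside the subgraph. -/
def IsLeafless {W : Type*} {G : SimpleGraph W} (H : G.Subgraph) : Prop :=
  ∀ v ∈ H.verts, (H.neighborSet v).ncard ≠ 1

/-- Two vertex-disjoint subgraphs are separable if they are contained in a pair of
vertex-disjoint leafless subgraphs. -/
def Separable {W : Type*} {G : SimpleGraph W} (Λ₁ Λ₂ : G.Subgraph) : Prop :=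
  ∃ G₁ G₂ : G.Subgraph, IsLeafless G₁ ∧ IsLeafless G₂ ∧ Disjoint G₁.verts G₂.verts ∧
    Λ₁ ≤ G₁ ∧ Λ₂ ≤ G₂

/-- The three edges of the grape indexed by `g = (v, i)`. -/
def grapeEdges {VT : Type} {ℓ : VT → ℕ} (g : Σ v : VT, Fin (ℓ v)) :
    Set (Sym2 (GrapeVert VT ℓ)) :=
  {s(Sum.inl g.1, Sum.inr ⟨g.1, (g.2, 0)⟩),
   s(Sum.inl g.1, Sum.inr ⟨g.1, (g.2, 1)⟩),
   s(Sum.inr ⟨g.1, (g.2, 0)⟩, Sum.inr ⟨g.1, (g.2, 1)⟩)}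

/-- The edge `e` of the bunch of grapes is a stem edge incident to the stem vertex `x`. -/
def stemIncident {VT : Type} (T : SimpleGraph VT) (ℓ : VT → ℕ) (x : VT)
    (e : Sym2 (GrapeVert VT ℓ)) : Prop :=
  ∃ y : VT, T.Adj x y ∧ e = s(Sum.inl x, Sum.inl y)

/-- The edges of a bunch of grapes are the stem edges and the edges of the grapes. -/
lemma adj_cases_s18 {VT : Type} {T : SimpleGraph VT} {ℓ : VT → ℕ} {a b : GrapeVert VT ℓ}
    (h : (bunchOfGrapes T ℓ).Adj a b) :
    (∃ u v : VT, T.Adj u v ∧ a = Sum.inl u ∧ b = Sum.inl v) ∨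
      ∃ (x : VT) (i : Fin (ℓ x)), s(a, b) ∈ grapeEdges ⟨x, i⟩ := by
  obtain ⟨(⟨u, v, huv, he⟩ | ⟨v, i, j, he⟩) | ⟨v, i, he⟩, -⟩ := (SimpleGraph.fromEdgeSet_adj _).1 h
  · left
    rcases Sym2.eq_iff.1 he with ⟨h1, h2⟩ | ⟨h1, h2⟩
    · exact ⟨u, v, huv, h1, h2⟩
    · exact ⟨v, u, huv.symm, h1, h2⟩
  · right
    refine ⟨v, i, ?_⟩
    rw [he]
    fin_cases j
    · exact Or.inl rfl
    · exact Or.inr (Or.inl rfl)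
  · right
    refine ⟨v, i, ?_⟩
    rw [he]
    exact Or.inr (Or.inr rfl)

lemma adj_stem {VT : Type} {T : SimpleGraph VT} {ℓ : VT → ℕ} {u v : VT} (h : T.Adj u v) :
    (bunchOfGrapes T ℓ).Adj (Sum.inl u) (Sum.inl v) := by
  exact (SimpleGraph.fromEdgeSet_adj _).2 ⟨Or.inl (Or.inl ⟨u, v, h, rfl⟩), fun h' => h.ne (Sum.inl_injective h')⟩

lemma adj_grape {VT : Type} {T : SimpleGraph VT} {ℓ : VT → ℕ} (v : VT) (i : Fin (ℓ v))
    (j : Fin 2) : (bunchOfGrapes T ℓ).Adj (Sum.inl v) (Sum.inr ⟨v, (i, j)⟩) := by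
  exact (SimpleGraph.fromEdgeSet_adj _).2 ⟨Or.inl (Or.inr ⟨v, i, j, rfl⟩), fun h => Sum.inl_ne_inr h⟩

lemma adj_grape_free {VT : Type} {T : SimpleGraph VT} {ℓ : VT → ℕ} (v : VT) (i : Fin (ℓ v)) :
    (bunchOfGrapes T ℓ).Adj (Sum.inr ⟨v, (i, 0)⟩) (Sum.inr ⟨v, (i, 1)⟩) := by
  refine (SimpleGraph.fromEdgeSet_adj _).2 ⟨Or.inr ⟨v, i, rfl⟩, fun h => ?_⟩
  have := Sum.inr_injective h
  simp at this

/-- A free vertex of a grape has only two neighbours: the attaching vertex and the other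
free vertex. -/
lemma adj_free {VT : Type} {T : SimpleGraph VT} {ℓ : VT → ℕ} {v : VT} {i : Fin (ℓ v)}
    {j : Fin 2} {b : GrapeVert VT ℓ} (h : (bunchOfGrapes T ℓ).Adj (Sum.inr ⟨v, (i, j)⟩) b) :
    b = Sum.inl v ∨ b = Sum.inr ⟨v, (i, 1 - j)⟩ := by
  obtain ⟨(⟨u, w, huv, he⟩ | ⟨w, k, l, he⟩) | ⟨w, k, he⟩, -⟩ := (SimpleGraph.fromEdgeSet_adj _).1 h
  · rcases Sym2.eq_iff.1 he with ⟨h1, h2⟩ | ⟨h1, h2⟩ <;> exact absurd h1.symm Sum.inl_ne_inr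
  · rcases Sym2.eq_iff.1 he with ⟨h1, h2⟩ | ⟨h1, h2⟩
    · exact absurd h1.symm Sum.inl_ne_inr
    · have := Sum.inr_injective h1
      cases this
      exact Or.inl h2
  · rcases Sym2.eq_iff.1 he with ⟨h1, h2⟩ | ⟨h1, h2⟩
    · have := Sum.inr_injective h1
      cases this
      exact Or.inr h2
    · have := Sum.inr_injective h1
      cases this
      exact Or.inr h2

lemma stemOf_of_mem_grapeEdges {VT : Type} {ℓ : VT → ℕ} {a b : GrapeVert VT ℓ} {x : VT}
    {i : Fin (ℓ x)} (h : s(a, b) ∈ grapeEdges ⟨x, i⟩) : stemOf a = x ∧ stemOf b = x := by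
  rcases h with he | he | he <;>
  rcases Sym2.eq_iff.1 he with ⟨rfl, rfl⟩ | ⟨rfl, rfl⟩ <;> exact ⟨rfl, rfl⟩

/-- Any two edges of a triangle share a vertex. -/
lemma not_disjoint_of_same_grape {VT : Type} {ℓ : VT → ℕ} {a b c d : GrapeVert VT ℓ} {x : VT}
    {i : Fin (ℓ x)} (h : s(a, b) ∈ grapeEdges ⟨x, i⟩) (h' : s(c, d) ∈ grapeEdges ⟨x, i⟩) :
    ¬ Disjoint ({a, b} : Set (GrapeVert VT ℓ)) ({c, d} : Set (GrapeVert VT ℓ)) := by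
  rw [Set.not_disjoint_iff]
  rcases h with he | he | he <;>
  rcases Sym2.eq_iff.1 he with ⟨rfl, rfl⟩ | ⟨rfl, rfl⟩ <;>
  rcases h' with he | he | he <;>
  rcases Sym2.eq_iff.1 he with ⟨rfl, rfl⟩ | ⟨rfl, rfl⟩ <;>
  first
  | exact ⟨_, Or.inl rfl, Or.inl rfl⟩
  | exact ⟨_, Or.inl rfl, Or.inr rfl⟩
  | exact ⟨_, Or.inr rfl, Or.inl rfl⟩
  | exact ⟨_, Or.inr rfl, Or.inr rfl⟩

/-- A leafless subgraph containing an edge at a free vertex of a grape contains the attaching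
vertex: otherwise the free vertex would have degree one in it. -/
lemma mem_verts_of_free {VT : Type} {T : SimpleGraph VT} {ℓ : VT → ℕ}
    {G : (bunchOfGrapes T ℓ).Subgraph} (hG : IsLeafless G) {v : VT} {i : Fin (ℓ v)} {j : Fin 2}
    {b : GrapeVert VT ℓ} (h : G.Adj (Sum.inr ⟨v, (i, j)⟩) b) :
    (Sum.inl v : GrapeVert VT ℓ) ∈ G.verts := by
  by_contra hv
  refine hG _ (G.edge_vert h) (Set.ncard_eq_one.2 ⟨Sum.inr ⟨v, (i, 1 - j)⟩, ?_⟩)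
  have key : ∀ c, G.Adj (Sum.inr ⟨v, (i, j)⟩) c → c = Sum.inr ⟨v, (i, 1 - j)⟩ := by
    intro c hc
    rcases adj_free hc.adj_sub with rfl | h'
    · exact absurd (G.edge_vert hc.symm) hv
    · exact h'
  ext c
  constructor
  · exact key c
  · intro hc
    have hc' : c = b := hc.trans (key b h).symm
    subst hc'
    exact h

/-- A leafless subgraph containing an edge of a grape at `x` contains `x`. -/
lemma mem_verts_of_grapeEdge {VT : Type} {T : SimpleGraph VT} {ℓ : VT → ℕ}
    {G : (bunchOfGrapes T ℓ).Subgraph} (hG : IsLeafless G) {a b : GrapeVert VT ℓ} {x : VT}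
    {i : Fin (ℓ x)} (h : G.Adj a b) (he : s(a, b) ∈ grapeEdges ⟨x, i⟩) :
    (Sum.inl x : GrapeVert VT ℓ) ∈ G.verts := by
  rcases he with he | he | he <;> rcases Sym2.eq_iff.1 he with ⟨rfl, rfl⟩ | ⟨rfl, rfl⟩
  · exact G.edge_vert h
  · exact G.edge_vert h.symm
  · exact G.edge_vert h
  · exact G.edge_vert h.symm
  · exact mem_verts_of_free hG h
  · exact mem_verts_of_free hG h

/-- The subgraph `Γ_C` of a bunch of grapes induced on all vertices lying over a set `C` of stem
vertices. -/
def partOver {VT : Type} (T : SimpleGraph VT) (ℓ : VT → ℕ) (C : Set VT) :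
    (bunchOfGrapes T ℓ).Subgraph :=
  (⊤ : (bunchOfGrapes T ℓ).Subgraph).induce {x | stemOf x ∈ C}

lemma partOver_adj {VT : Type} {T : SimpleGraph VT} {ℓ : VT → ℕ} {C : Set VT}
    {a b : GrapeVert VT ℓ} :
    (partOver T ℓ C).Adj a b ↔ stemOf a ∈ C ∧ stemOf b ∈ C ∧ (bunchOfGrapes T ℓ).Adj a b := by
  simp [partOver]

/-- `Γ_C` is leafless when each vertex of `C` carries a grape or has at most one stem neighbour
outside `C`. A vertex of the second kind without grapes has stem degree `0` or at least `3`. -/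
lemma isLeafless_partOver {VT : Type} {T : SimpleGraph VT} {ℓ : VT → ℕ}
    (hnorm : IsNormalGrapes T ℓ) {C : Set VT}
    (hC : ∀ v ∈ C, 1 ≤ ℓ v ∨ {w | T.Adj v w ∧ w ∉ C}.Subsingleton) :
    IsLeafless (partOver T ℓ C) := by
  rintro x hx h1
  obtain ⟨y, hy⟩ := Set.ncard_eq_one.1 h1
  have hxC : stemOf x ∈ C := hx
  have huniq : ∀ z, stemOf z ∈ C → (bunchOfGrapes T ℓ).Adj x z → z = y := fun z hzC hz => by
    have : z ∈ (partOver T ℓ C).neighborSet x := partOver_adj.2 ⟨hxC, hzC, hz⟩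
    rw [hy] at this
    exact this
  rcases x with v | ⟨v, i, j⟩
  · have hvC : v ∈ C := hxC
    by_cases hl : 1 ≤ ℓ v
    · have e0 := huniq (Sum.inr ⟨v, (⟨0, hl⟩, 0)⟩) hvC (adj_grape v ⟨0, hl⟩ 0)
      have e1 := huniq (Sum.inr ⟨v, (⟨0, hl⟩, 1)⟩) hvC (adj_grape v ⟨0, hl⟩ 1)
      have := Sum.inr_injective (e0.trans e1.symm)
      simp at this
    · have hsub := (hC v hvC).resolve_left hl
      have hyadj : (partOver T ℓ C).Adj (Sum.inl v) y := by
        have : y ∈ (partOver T ℓ C).neighborSet (Sum.inl v) := by rw [hy]; rfl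
        exact this
      obtain ⟨w, hw, rfl⟩ : ∃ w, T.Adj v w ∧ y = Sum.inl w := by
        rcases adj_cases_s18 hyadj.adj_sub with ⟨u, w, huw, hu, hw⟩ | ⟨x, i, hmem⟩
        · cases Sum.inl_injective hu
          exact ⟨w, huw, hw⟩
        · have : v = x := (stemOf_of_mem_grapeEdges hmem).1
          subst this
          exact absurd (Nat.lt_of_le_of_lt (Nat.zero_le _) i.2) hl
      have hcover : T.neighborSet v ⊆ {w} ∪ {z | T.Adj v z ∧ z ∉ C} := by
        intro z hz
        by_cases hzC : z ∈ C
        · exact Or.inl (Sum.inl_injective (huniq (Sum.inl z) hzC (adj_stem hz)))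
        · exact Or.inr ⟨hz, hzC⟩
      have hfin := hsub.finite
      have hfinN : (T.neighborSet v).Finite := ((Set.finite_singleton w).union hfin).subset hcover
      have hle : (T.neighborSet v).ncard ≤ 2 := by
        calc (T.neighborSet v).ncard ≤ ({w} ∪ {z | T.Adj v z ∧ z ∉ C}).ncard :=
              Set.ncard_le_ncard hcover ((Set.finite_singleton w).union hfin)
          _ ≤ Set.ncard {w} + Set.ncard {z | T.Adj v z ∧ z ∉ C} := Set.ncard_union_le _ _
          _ ≤ 1 + 1 := by
              have := (Set.ncard_le_one hfin).2 fun a ha b hb => hsub ha hb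
              rw [Set.ncard_singleton]
              omega
      have hpos : 0 < (T.neighborSet v).ncard := (Set.ncard_pos hfinN).2 ⟨w, hw⟩
      obtain ⟨-, -, hd1, hd2⟩ := hnorm
      have : (T.neighborSet v).ncard = 1 ∨ (T.neighborSet v).ncard = 2 := by omega
      rcases this with h | h
      · exact hl (hd1 v h)
      · exact hl (hd2 v h)
  · have hvC : v ∈ C := hxC
    have e0 := huniq (Sum.inl v) hvC (adj_grape v i j).symm
    have e1 : Sum.inr ⟨v, (i, 1 - j)⟩ = y := by
      refine huniq (Sum.inr ⟨v, (i, 1 - j)⟩) hvC ?_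
      fin_cases j
      · exact adj_grape_free v i
      · exact (adj_grape_free v i).symm
    exact Sum.inl_ne_inr (e0.trans e1.symm)

/-- Edges lying over two disjoint sets of stem vertices, both satisfying the criterion of
`isLeafless_partOver`, are separable. -/
lemma separable_of_sets {VT : Type} {T : SimpleGraph VT} {ℓ : VT → ℕ}
    (hnorm : IsNormalGrapes T ℓ) {C D : Set VT} (hCD : Disjoint C D)
    (hC : ∀ v ∈ C, 1 ≤ ℓ v ∨ {w | T.Adj v w ∧ w ∉ C}.Subsingleton)
    (hD : ∀ v ∈ D, 1 ≤ ℓ v ∨ {w | T.Adj v w ∧ w ∉ D}.Subsingleton)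
    {a b c d : GrapeVert VT ℓ}
    (h₁ : (bunchOfGrapes T ℓ).Adj a b) (h₂ : (bunchOfGrapes T ℓ).Adj c d)
    (ha : stemOf a ∈ C) (hb : stemOf b ∈ C) (hc : stemOf c ∈ D) (hd : stemOf d ∈ D) :
    Separable ((bunchOfGrapes T ℓ).subgraphOfAdj h₁)
      ((bunchOfGrapes T ℓ).subgraphOfAdj h₂) := by
  refine ⟨partOver T ℓ C, partOver T ℓ D, isLeafless_partOver hnorm hC, isLeafless_partOver hnorm hD, ?_,
    SimpleGraph.subgraphOfAdj_le_of_adj _ (partOver_adj.2 ⟨ha, hb, h₁⟩),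
    SimpleGraph.subgraphOfAdj_le_of_adj _ (partOver_adj.2 ⟨hc, hd, h₂⟩)⟩
  rw [Set.disjoint_left]
  intro x hx hx'
  exact Set.disjoint_left.1 hCD hx hx'

lemma Separable.symm {W : Type*} {G : SimpleGraph W} {Λ₁ Λ₂ : G.Subgraph}
    (h : Separable Λ₁ Λ₂) : Separable Λ₂ Λ₁ := by
  obtain ⟨G₁, G₂, l₁, l₂, hd, s₁, s₂⟩ := h
  exact ⟨G₂, G₁, l₂, l₁, hd.symm, s₂, s₁⟩

/-- Two disjoint edges `uv`, `u'v'` of a tree lie on different sides of a bridge: if `u` is the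
endpoint of `uv` closer to `u'`, the first edge `up` of a geodesic from `u` to `u'` is such a bridge,
and `C` is the side of `u`. -/
lemma exists_cut_of_dist_le {VT : Type} {T : SimpleGraph VT} (hT : T.IsTree) {u v u' v' : VT}
    (huv : T.Adj u v) (huv' : T.Adj u' v') (h1 : u ≠ u') (h2 : u ≠ v')
    (hle : T.dist u u' ≤ T.dist v u') :
    ∃ C : Set VT, u ∈ C ∧ v ∈ C ∧ u' ∉ C ∧ v' ∉ C ∧ ∃ p q : VT,
      ∀ x ∈ C, ∀ y ∉ C, T.Adj x y → x = p ∧ y = q := by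
  obtain ⟨w, hw⟩ := hT.connected.exists_walk_length_eq_dist u u'
  have hpath := w.isPath_of_length_eq_dist hw
  cases w with
  | nil => exact absurd rfl h1
  | @cons _ p _ hup w =>
    rw [SimpleGraph.Walk.cons_isPath_iff] at hpath
    rw [SimpleGraph.Walk.length_cons] at hw
    have hpv : p ≠ v := by
      rintro rfl
      have := SimpleGraph.dist_le w
      omega
    have hbr : ¬ (T.deleteEdges {s(u, p)}).Reachable u p :=
      SimpleGraph.isBridge_iff.1 (SimpleGraph.isAcyclic_iff_forall_isBridge.1 hT.isAcyclic
        (SimpleGraph.mem_edgeSet _ |>.2 hup))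
    have hpu' : (T.deleteEdges {s(u, p)}).Reachable p u' :=
      ⟨w.toDeleteEdge _ fun he => hpath.2 (w.fst_mem_support_of_mem_edges he)⟩
    have hu'v' : (T.deleteEdges {s(u, p)}).Reachable u' v' := by
      refine SimpleGraph.Adj.reachable ?_
      rw [SimpleGraph.deleteEdges_adj]
      refine ⟨huv', fun he => ?_⟩
      rcases Sym2.eq_iff.1 he with ⟨h, -⟩ | ⟨-, h⟩
      · exact h1 h.symm
      · exact h2 h.symm
    refine ⟨{x | (T.deleteEdges {s(u, p)}).Reachable u x}, SimpleGraph.Reachable.refl _, ?_,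
      fun h => hbr (h.trans hpu'.symm), fun h => hbr (h.trans (hpu'.trans hu'v').symm), u, p, ?_⟩
    · refine SimpleGraph.Adj.reachable ?_
      rw [SimpleGraph.deleteEdges_adj]
      refine ⟨huv, fun he => ?_⟩
      rcases Sym2.eq_iff.1 he with ⟨-, h⟩ | ⟨h, -⟩
      · exact hpv h.symm
      · exact hup.ne h
    · intro x hx y hy hxy
      by_cases he : s(x, y) = s(u, p)
      · rcases Sym2.eq_iff.1 he with h | ⟨rfl, rfl⟩
        · exact h
        · exact absurd hx hbr
      · refine absurd (hx.trans (SimpleGraph.Adj.reachable ?_)) hy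
        rw [SimpleGraph.deleteEdges_adj]
        exact ⟨hxy, he⟩

/-- Two disjoint edges of a tree are separated by a vertex cut crossed by at most one edge. -/
lemma exists_cut {VT : Type} {T : SimpleGraph VT} (hT : T.IsTree) {u v u' v' : VT}
    (huv : T.Adj u v) (huv' : T.Adj u' v') (h1 : u ≠ u') (h2 : u ≠ v') (h3 : v ≠ u')
    (h4 : v ≠ v') :
    ∃ C : Set VT, u ∈ C ∧ v ∈ C ∧ u' ∉ C ∧ v' ∉ C ∧ ∃ p q : VT,
      ∀ x ∈ C, ∀ y ∉ C, T.Adj x y → x = p ∧ y = q := by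
  rcases le_total (T.dist u u') (T.dist v u') with hle | hle
  · exact exists_cut_of_dist_le hT huv huv' h1 h2 hle
  · obtain ⟨C, hv, hu, h⟩ := exists_cut_of_dist_le hT huv.symm huv' h3 h4 hle
    exact ⟨C, hu, hv, h⟩

/-- A grape edge at `x` is separable from every edge lying over stem vertices other than `x`: a
stem edge not incident to `x`, or an edge of a grape attached elsewhere. -/
lemma separable_stem_grape {VT : Type} {T : SimpleGraph VT} {ℓ : VT → ℕ}
    (hnorm : IsNormalGrapes T ℓ) {a b c d : GrapeVert VT ℓ}
    (h₁ : (bunchOfGrapes T ℓ).Adj a b) (h₂ : (bunchOfGrapes T ℓ).Adj c d) {x : VT}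
    {i : Fin (ℓ x)} (hcd : s(c, d) ∈ grapeEdges ⟨x, i⟩) (ha : stemOf a ≠ x)
    (hb : stemOf b ≠ x) :
    Separable ((bunchOfGrapes T ℓ).subgraphOfAdj h₁)
      ((bunchOfGrapes T ℓ).subgraphOfAdj h₂) := by
  obtain ⟨hc, hd⟩ := stemOf_of_mem_grapeEdges hcd
  refine separable_of_sets hnorm (C := {x}ᶜ) (D := {x}) disjoint_compl_left ?_ ?_ h₁ h₂ ha hb hc hd
  · intro v _
    right
    rintro y ⟨-, hy⟩ z ⟨-, hz⟩
    exact (not_not.1 hy).trans (not_not.1 hz).symm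
  · rintro v rfl
    exact Or.inl (Nat.succ_le_of_lt (Nat.lt_of_le_of_lt (Nat.zero_le _) i.2))

/-- In a normal bunch of grapes, two vertex-disjoint edges fail to be
separable exactly when, for some stem vertex `x`, either both lie in two distinct grapes
attached at `x`, or (after possibly swapping them) one is a stem edge incident to `x` and
the other lies in a grape attached at `x`. -/
theorem grapes_nonseparable_edges_characterization
    (VT : Type) [Fintype VT] [DecidableEq VT] (T : SimpleGraph VT) (ℓ : VT → ℕ)
    (hnorm : IsNormalGrapes T ℓ)
    (a b c d : GrapeVert VT ℓ)
    (h₁ : (bunchOfGrapes T ℓ).Adj a b) (h₂ : (bunchOfGrapes T ℓ).Adj c d)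
    (hdisj : Disjoint ({a, b} : Set (GrapeVert VT ℓ)) ({c, d} : Set (GrapeVert VT ℓ))) :
    ¬ Separable ((bunchOfGrapes T ℓ).subgraphOfAdj h₁)
        ((bunchOfGrapes T ℓ).subgraphOfAdj h₂) ↔
      ∃ x : VT,
        (∃ i j : Fin (ℓ x), i ≠ j ∧
          s(a, b) ∈ grapeEdges ⟨x, i⟩ ∧ s(c, d) ∈ grapeEdges ⟨x, j⟩) ∨
        (stemIncident T ℓ x s(a, b) ∧ ∃ i : Fin (ℓ x), s(c, d) ∈ grapeEdges ⟨x, i⟩) ∨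
        (stemIncident T ℓ x s(c, d) ∧ ∃ i : Fin (ℓ x), s(a, b) ∈ grapeEdges ⟨x, i⟩) := by
  constructor
  · intro hns
    by_contra hno
    apply hns
    rcases adj_cases_s18 h₁ with ⟨u, v, huv, rfl, rfl⟩ | ⟨x, i, hi⟩ <;>
    rcases adj_cases_s18 h₂ with ⟨u', v', huv', rfl, rfl⟩ | ⟨y, j, hj⟩
    · have hne : ∀ p ∈ ({Sum.inl u, Sum.inl v} : Set (GrapeVert VT ℓ)),
          ∀ q ∈ ({Sum.inl u', Sum.inl v'} : Set (GrapeVert VT ℓ)), p ≠ q := by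
        rintro p hp _ hq rfl
        exact Set.disjoint_left.1 hdisj hp hq
      obtain ⟨C, hu, hv, hu', hv', p, q, hpq⟩ := exists_cut hnorm.1 huv huv'
        (fun h => hne _ (Or.inl rfl) _ (Or.inl rfl) (congrArg Sum.inl h))
        (fun h => hne _ (Or.inl rfl) _ (Or.inr rfl) (congrArg Sum.inl h))
        (fun h => hne _ (Or.inr rfl) _ (Or.inl rfl) (congrArg Sum.inl h))
        (fun h => hne _ (Or.inr rfl) _ (Or.inr rfl) (congrArg Sum.inl h))
      refine separable_of_sets hnorm (C := C) (D := Cᶜ) disjoint_compl_right ?_ ?_ h₁ h₂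
        hu hv hu' hv'
      · rintro x hx
        right
        rintro y ⟨hxy, hy⟩ z ⟨hxz, hz⟩
        exact (hpq x hx y hy hxy).2.trans (hpq x hx z hz hxz).2.symm
      · rintro x hx
        right
        rintro y ⟨hxy, hy⟩ z ⟨hxz, hz⟩
        exact (hpq y (not_not.1 hy) x hx hxy.symm).1.trans
          (hpq z (not_not.1 hz) x hx hxz.symm).1.symm
    · refine separable_stem_grape hnorm h₁ h₂ hj ?_ ?_
      · rintro rfl
        exact hno ⟨_, Or.inr (Or.inl ⟨⟨v, huv, rfl⟩, j, hj⟩)⟩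
      · rintro rfl
        exact hno ⟨_, Or.inr (Or.inl ⟨⟨u, huv.symm, Sym2.eq_swap⟩, j, hj⟩)⟩
    · refine (separable_stem_grape hnorm h₂ h₁ hi ?_ ?_).symm
      · rintro rfl
        exact hno ⟨_, Or.inr (Or.inr ⟨⟨v', huv', rfl⟩, i, hi⟩)⟩
      · rintro rfl
        exact hno ⟨_, Or.inr (Or.inr ⟨⟨u', huv'.symm, Sym2.eq_swap⟩, i, hi⟩)⟩
    · have hxy : x ≠ y := by
        rintro rfl
        by_cases hij : i = j
        · subst hij
          exact not_disjoint_of_same_grape hi hj hdisj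
        · exact hno ⟨x, Or.inl ⟨i, j, hij, hi, hj⟩⟩
      obtain ⟨ha, hb⟩ := stemOf_of_mem_grapeEdges hi
      exact separable_stem_grape hnorm h₁ h₂ hj (ha ▸ hxy) (hb ▸ hxy)
  · rintro ⟨x, hx⟩ ⟨G₁, G₂, l₁, l₂, hd, s₁, s₂⟩
    have a₁ : G₁.Adj a b := s₁.2 (by simp)
    have a₂ : G₂.Adj c d := s₂.2 (by simp)
    have stem : ∀ {G : (bunchOfGrapes T ℓ).Subgraph} {p q : GrapeVert VT ℓ}, G.Adj p q →
        stemIncident T ℓ x s(p, q) → (Sum.inl x : GrapeVert VT ℓ) ∈ G.verts := by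
      rintro G p q h ⟨y, -, he⟩
      rcases Sym2.eq_iff.1 he with ⟨rfl, -⟩ | ⟨-, rfl⟩
      · exact G.edge_vert h
      · exact G.edge_vert h.symm
    rcases hx with ⟨i, j, -, hi, hj⟩ | ⟨hs, i, hi⟩ | ⟨hs, i, hi⟩
    · exact Set.disjoint_left.1 hd (mem_verts_of_grapeEdge l₁ a₁ hi)
        (mem_verts_of_grapeEdge l₂ a₂ hj)
    · exact Set.disjoint_left.1 hd (stem a₁ hs) (mem_verts_of_grapeEdge l₂ a₂ hi)
    · exact Set.disjoint_left.1 hd (mem_verts_of_grapeEdge l₁ a₁ hi) (stem a₂ hs)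

end GraphBraid
end
end
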